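/- arXiv:2307.09790 — 2 statements merged into one kernel-verified Lean document; each statement's English description precedes it below -/
import Mathlib

section
/- For any countable acylindrically hyperbolic group G, there exists a generating set S of G such that the Cayley graph Γ(G,S) is hyperbolic, the Gromov boundary ∂Γ(G,S) has more than 2 points, the natural action of G on Γ(G,S) is acylindrical, and the natural action of G on ∂Γ(G,S) is topologically amenable. -/
open scoped ENNReal

noncomputable section

namespace ArXiv

/-! ### Gromov products, hyperbolicity and the Gromov boundary,
for a general distance function -/

variable {α : Type*}

/-- The Gromov product of `x` and `y` at `o` with respect to the distance function `d`. -/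
def gprod (d : α → α → ℝ) (x y o : α) : ℝ := (d x o + d y o - d x y) / 2

/-- The four-point δ-hyperbolicity condition. -/
def HyperbolicWith (d : α → α → ℝ) (δ : ℝ) : Prop :=
  ∀ w x y z : α, min (gprod d x y w) (gprod d y z w) - δ ≤ gprod d x z w

/-- Gromov hyperbolicity of the distance function `d`. -/
def IsHyperbolic (d : α → α → ℝ) : Prop := ∃ δ : ℝ, 0 ≤ δ ∧ HyperbolicWith d δ

/-- A sequence converges to infinity: the Gromov products at some (equivalently, any)
basepoint tend to infinity. -/
def ConvInf (d : α → α → ℝ) (x : ℕ → α) : Prop :=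
  ∀ o : α, ∀ R : ℝ, ∃ N : ℕ, ∀ i, N ≤ i → ∀ j, N ≤ j → R ≤ gprod d (x i) (x j) o

/-- Sequences converging to infinity. -/
abbrev BSeq (d : α → α → ℝ) := {x : ℕ → α // ConvInf d x}

/-- The equivalence of sequences converging to infinity defining the Gromov boundary. -/
def BRel (d : α → α → ℝ) (x y : BSeq d) : Prop :=
  ∀ o : α, ∀ R : ℝ, ∃ N : ℕ, ∀ i, N ≤ i → ∀ j, N ≤ j → R ≤ gprod d (x.1 i) (y.1 j) o

/-- The (sequential) Gromov boundary of `(α, d)`. -/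
abbrev Bdry (d : α → α → ℝ) := Quot (BRel d)

/-- The extension of the Gromov product at `o` to boundary points. -/
def bgp (d : α → α → ℝ) (o : α) (ξ η : Bdry d) : EReal :=
  sSup {r : EReal | ∃ x y : BSeq d, Quot.mk (BRel d) x = ξ ∧ Quot.mk (BRel d) y = η ∧
    r = Filter.liminf
      (fun pq : ℕ × ℕ => ((gprod d (x.1 pq.1) (y.1 pq.2) o : ℝ) : EReal)) Filter.atTop}

/-- The canonical topology on the Gromov boundary, generated by the sets
`{η | (ξ,η)_o > n}`. -/
def bdryTop (d : α → α → ℝ) : TopologicalSpace (Bdry d) :=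
  TopologicalSpace.generateFrom
    {U : Set (Bdry d) | ∃ (ξ : Bdry d) (o : α) (n : ℝ), U = {η | (n : EReal) < bgp d o ξ η}}

/-! ### Cayley graphs, acylindrical actions, and topological amenability -/

variable {G : Type*} [Group G]

/-- The graph metric of the Cayley graph `Γ(G,S)`: the word metric with respect to
`S ∪ S⁻¹`. -/
def wdist (S : Set G) (g h : G) : ℝ :=
  sInf {r : ℝ | ∃ L : List G, (∀ x ∈ L, x ∈ S ∨ x⁻¹ ∈ S) ∧ g * L.prod = h ∧
    r = (L.length : ℝ)}

/-- The natural (left multiplication) action of `G` on `(G, d)` is acylindrical. -/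
def AcylDist (d : G → G → ℝ) : Prop :=
  ∀ ε : ℝ, 0 < ε → ∃ R : ℝ, 0 < R ∧ ∃ N : ℕ, 0 < N ∧ ∀ x y : G, R ≤ d x y →
    {g : G | d x (g * x) ≤ ε ∧ d y (g * y) ≤ ε}.Finite ∧
    {g : G | d x (g * x) ≤ ε ∧ d y (g * y) ≤ ε}.ncard ≤ N

/-- `η` is the image of `ξ` under the natural action of `g ∈ G` on the Gromov boundary
of `(G, d)` (the action extending left multiplication). -/
def bAct (d : G → G → ℝ) (g : G) (ξ η : Bdry d) : Prop :=
  ∃ (x : BSeq d) (h : ConvInf d fun n => g * x.1 n),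
    Quot.mk (BRel d) x = ξ ∧ Quot.mk (BRel d) (⟨fun n => g * x.1 n, h⟩ : BSeq d) = η

/-- The `ℓ¹`-distance between two functions `G → ℝ`. -/
def l1dist {G : Type*} (f h : G → ℝ) : ℝ := ∑' g : G, |f g - h g|

/-- The natural action of `G` on the Gromov boundary of `(G, d)` is topologically
amenable: for every finite `F ⊆ G`, compact `K`, and `ε > 0`, there is a
(`ℓ¹`-)continuous map `p` into probability measures on `G` with
`‖p(gξ) - g·p(ξ)‖₁ < ε` for all `g ∈ F` and `ξ ∈ K`. -/
def TopAmenable (d : G → G → ℝ) : Prop :=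
  ∀ (F : Finset G) (K : Set (Bdry d)), @IsCompact _ (bdryTop d) K →
    ∀ ε : ℝ, 0 < ε → ∃ p : Bdry d → G → ℝ,
      (∀ ξ, (∀ g : G, 0 ≤ p ξ g) ∧ (∑' g : G, p ξ g) = 1) ∧
      (∀ ξ : Bdry d, ∀ ε' : ℝ, 0 < ε' → ∃ U : Set (Bdry d),
        @IsOpen _ (bdryTop d) U ∧ ξ ∈ U ∧ ∀ η ∈ U, l1dist (p ξ) (p η) < ε') ∧
      ∀ g ∈ F, ∀ ξ ∈ K, ∀ η : Bdry d, bAct d g ξ η →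
        l1dist (p η) (fun h => p ξ (g⁻¹ * h)) < ε

/-!
By acylindricity some `f` in `G` is loxodromic. Its elementary closure `E` is quasiconvex, and
distinct cosets of `E` are close to each other only along bounded sets, so the nearest point
projections between the cosets satisfy the projection axioms of Bestvina, Bromberg and Fujiwara. A
bounded equivariant change of the projection distances makes the set of cosets between two given
ones finite and linearly ordered by their positions (Bestvina, Bromberg, Fujiwara and Sisto).

Let `S` consist of the elements that move `E` to itself or to a coset with no coset between it and
`E`; the Cayley graph is a blow-up of the projection complex. A geodesic of this graph passes near
every coset between its endpoints, and conversely these cosets trace out a path which is close to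
the geodesic. This gives hyperbolicity, and acylindricity follows because a bounded
number of elements fix two cosets that are separated by a third one.

For a point `ξ` of the boundary and a basepoint `o`, the cosets between `o` and `ξ` form a ray
`V₀, V₁, …`. Since `Vᵢ₊₁` lies between them, `Vᵢ` and `Vᵢ₊₂` have only finitely many common
stabilizing elements, so the pairs `(Vᵢ, Vᵢ₊₂)` carry equivariant finitely supported
probability measures on `G`. Each `Vᵢ` is a locally constant function of `ξ`, and a change of the
basepoint only alters and shifts the ray by boundedly many terms. Hence the Cesàro means of these
measures along the ray are continuous and asymptotically invariant.
-/

/-! ### Word metrics -/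

/-- A pseudometric, given by its distance function. -/
structure IsPseudoDist (d : α → α → ℝ) : Prop where
  self : ∀ x, d x x = 0
  comm : ∀ x y, d x y = d y x
  triangle : ∀ x y z, d x z ≤ d x y + d y z

/-- The path metric of a connected graph, restricted to its vertices: it takes values in `ℕ`, and
any two points are joined by a discrete geodesic. -/
structure IsGraphDist (d : α → α → ℝ) : Prop extends IsPseudoDist d where
  exists_nat_eq : ∀ x y, ∃ n : ℕ, d x y = n
  eq_of_eq_zero : ∀ {x y}, d x y = 0 → x = y
  exists_on_geodesic : ∀ {x y} {k : ℕ}, (k : ℝ) ≤ d x y → ∃ z, d x z = k ∧ d z y = d x y - k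

/-- A left-invariant graph metric on a group. -/
structure IsWordMetric (d : G → G → ℝ) : Prop extends IsGraphDist d where
  mul_left : ∀ k g h, d (k * g) (k * h) = d g h

lemma IsPseudoDist.nonneg {d : α → α → ℝ} (hd : IsPseudoDist d) (x y : α) : 0 ≤ d x y := by
  linarith [hd.triangle x y x, hd.self x, hd.comm x y]

namespace IsGraphDist
variable {d : α → α → ℝ}

lemma le_iff_lt_add_one (hd : IsGraphDist d) {x y : α} {n : ℕ} : d x y ≤ n ↔ d x y < n + 1 := by
  obtain ⟨m, hm⟩ := hd.exists_nat_eq x y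
  rw [hm]
  exact_mod_cast Nat.lt_succ_iff.symm

lemma one_le_of_ne (hd : IsGraphDist d) {x y : α} (hxy : x ≠ y) : 1 ≤ d x y := by
  by_contra! hlt
  have hle := (hd.le_iff_lt_add_one (n := 0)).2 (by simpa using hlt)
  exact hxy (hd.eq_of_eq_zero (le_antisymm (by simpa using hle) (hd.nonneg x y)))

lemma exists_next (hd : IsGraphDist d) {x y : α} (hxy : x ≠ y) :
    ∃ x', d x x' = 1 ∧ d x' y = d x y - 1 := by
  simpa using hd.exists_on_geodesic (k := 1) (by simpa using hd.one_le_of_ne hxy)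

lemma induction_toward (hd : IsGraphDist d) {p : α → Prop} {z : α} (base : p z)
    (step : ∀ x x', d x x' = 1 → d x' z = d x z - 1 → p x' → p x) (x : α) : p x := by
  obtain ⟨n, hn⟩ := hd.exists_nat_eq x z
  induction n generalizing x with
  | zero => exact hd.eq_of_eq_zero (hn.trans Nat.cast_zero) ▸ base
  | succ n ih =>
    obtain ⟨x', h', hx'z⟩ := hd.exists_next (x := x) (y := z) fun hxz => by
      rw [hxz, hd.self] at hn
      norm_cast at hn
    exact step x x' h' hx'z (ih x' (by rw [hx'z, hn]; simp))

end IsGraphDist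

section Words
variable {S : Set G}

lemma wdist_le_length {g h : G} {L : List G} (hL : ∀ x ∈ L, x ∈ S ∨ x⁻¹ ∈ S)
    (hprod : g * L.prod = h) : wdist S g h ≤ L.length := by
  refine csInf_le ⟨0, ?_⟩ ⟨L, hL, hprod, rfl⟩
  rintro r ⟨L, -, -, rfl⟩
  positivity

lemma exists_word (hS : Subgroup.closure S = ⊤) (g : G) :
    ∃ L : List G, (∀ x ∈ L, x ∈ S ∨ x⁻¹ ∈ S) ∧ L.prod = g := by
  have hg : g ∈ Subgroup.closure S := hS ▸ Subgroup.mem_top g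
  rw [← Subgroup.mem_toSubmonoid, Subgroup.closure_toSubmonoid] at hg
  obtain ⟨L, hL, hprod⟩ := Submonoid.exists_list_of_mem_closure hg
  exact ⟨L, fun x hx => by simpa using hL x hx, hprod⟩

lemma exists_shortest_word (hS : Subgroup.closure S = ⊤) (g h : G) :
    ∃ L : List G, (∀ x ∈ L, x ∈ S ∨ x⁻¹ ∈ S) ∧ g * L.prod = h ∧ wdist S g h = L.length := by
  classical
  have hex : ∃ n : ℕ, ∃ L : List G, (∀ x ∈ L, x ∈ S ∨ x⁻¹ ∈ S) ∧ g * L.prod = h ∧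
      L.length = n := by
    obtain ⟨L, hL, hprod⟩ := exists_word hS (g⁻¹ * h)
    exact ⟨_, L, hL, by rw [hprod, mul_inv_cancel_left], rfl⟩
  obtain ⟨L, hL, hprod, hlen⟩ := Nat.find_spec hex
  refine ⟨L, hL, hprod, le_antisymm (wdist_le_length hL hprod) ?_⟩
  refine le_csInf ⟨_, L, hL, hprod, rfl⟩ ?_
  rintro r ⟨L', hL', hprod', rfl⟩
  rw [hlen]
  exact_mod_cast Nat.find_min' hex ⟨L', hL', hprod', rfl⟩

lemma wdist_triangle (hS : Subgroup.closure S = ⊤) (g h k : G) :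
    wdist S g k ≤ wdist S g h + wdist S h k := by
  obtain ⟨L, hL, rfl, hlen⟩ := exists_shortest_word hS g h
  obtain ⟨L', hL', rfl, hlen'⟩ := exists_shortest_word hS (g * L.prod) k
  have hLL' : ∀ x ∈ L ++ L', x ∈ S ∨ x⁻¹ ∈ S := fun x hx =>
    (List.mem_append.1 hx).elim (hL x) (hL' x)
  have := wdist_le_length hLL' (g := g) rfl
  rw [List.prod_append, ← mul_assoc, List.length_append] at this
  rw [hlen, hlen']
  exact_mod_cast this

lemma wdist_comm_le (hS : Subgroup.closure S = ⊤) (g h : G) : wdist S h g ≤ wdist S g h := by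
  obtain ⟨L, hL, rfl, hlen⟩ := exists_shortest_word hS g h
  have hL' : ∀ x ∈ (L.map (·⁻¹)).reverse, x ∈ S ∨ x⁻¹ ∈ S := by
    intro x hx
    obtain ⟨y, hy, rfl⟩ := List.mem_map.1 (List.mem_reverse.1 hx)
    simpa using (hL y hy).symm
  have := wdist_le_length hL' (g := g * L.prod) (h := g)
    (by rw [← List.prod_inv_reverse, mul_inv_cancel_right])
  simpa [hlen] using this

lemma isWordMetric_wdist (hS : Subgroup.closure S = ⊤) : IsWordMetric (wdist S) where
  self g := by
    obtain ⟨L, -, -, hlen⟩ := exists_shortest_word hS g g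
    refine le_antisymm ?_ (hlen ▸ Nat.cast_nonneg _)
    simpa using wdist_le_length (S := S) (g := g) (h := g) (L := []) (by simp) (by simp)
  comm g h := le_antisymm (wdist_comm_le hS h g) (wdist_comm_le hS g h)
  triangle := wdist_triangle hS
  exists_nat_eq g h := by
    obtain ⟨L, -, -, hlen⟩ := exists_shortest_word hS g h
    exact ⟨_, hlen⟩
  eq_of_eq_zero {g h} h0 := by
    obtain ⟨L, -, hprod, hlen⟩ := exists_shortest_word hS g h
    obtain rfl : L = [] := by
      rw [← List.length_eq_zero_iff]
      exact_mod_cast hlen.symm.trans h0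
    simpa using hprod
  exists_on_geodesic {g h k} hk := by
    obtain ⟨L, hL, hprod, hlen⟩ := exists_shortest_word hS g h
    have hkL : k ≤ L.length := by exact_mod_cast hlen ▸ hk
    set z := g * (L.take k).prod with hz
    have hgz : wdist S g z ≤ (L.take k).length :=
      wdist_le_length (fun x hx => hL x (List.mem_of_mem_take hx)) rfl
    have hzh : wdist S z h ≤ (L.drop k).length :=
      wdist_le_length (fun x hx => hL x (List.mem_of_mem_drop hx))
        (by rw [hz, mul_assoc, ← List.prod_append, List.take_append_drop, hprod])
    rw [List.length_take, min_eq_left hkL] at hgz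
    rw [List.length_drop, Nat.cast_sub hkL, ← hlen] at hzh
    have := wdist_triangle hS g z h
    exact ⟨z, by linarith, by linarith⟩
  mul_left k g h := by simp only [wdist, mul_assoc, mul_right_inj]

lemma wdist_le_one_iff (hS : Subgroup.closure S = ⊤) {g h : G} :
    wdist S g h ≤ 1 ↔ g = h ∨ g⁻¹ * h ∈ S ∨ (g⁻¹ * h)⁻¹ ∈ S := by
  constructor
  · intro hle
    obtain ⟨L, hL, rfl, hlen⟩ := exists_shortest_word hS g h
    have hL1 : L.length ≤ 1 := by exact_mod_cast hlen ▸ hle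
    match L, hL1 with
    | [], _ => simp
    | [s], _ => simpa using Or.inr (hL s (by simp))
  · rintro (rfl | hs)
    · simp [(isWordMetric_wdist hS).self]
    · simpa using wdist_le_length (S := S) (L := [g⁻¹ * h]) (by simpa using hs)
        (by simp : g * _ = h)

end Words

lemma HyperbolicWith.four_point {d : α → α → ℝ} {δ : ℝ} (h : HyperbolicWith d δ) (x y z w : α) :
    d x z + d y w ≤ d x y + d z w + 2 * δ ∨ d x z + d y w ≤ d y z + d x w + 2 * δ := by
  have := h w x y z
  simp only [gprod] at this
  grind

/-! ### Gromov products and the Gromov boundary -/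

section Boundary
variable {d : α → α → ℝ}

namespace IsPseudoDist

lemma gprod_comm (hd : IsPseudoDist d) (x y o : α) : gprod d x y o = gprod d y x o := by
  rw [gprod, gprod, hd.comm x y, add_comm (d x o)]

lemma gprod_le_left (hd : IsPseudoDist d) (x y o : α) : gprod d x y o ≤ d x o := by
  simp only [gprod]
  linarith [hd.triangle y x o, hd.comm y x]

lemma gprod_nonneg (hd : IsPseudoDist d) (x y o : α) : 0 ≤ gprod d x y o := by
  simp only [gprod]
  linarith [hd.triangle x o y, hd.comm o y]

lemma gprod_sub_dist_le (hd : IsPseudoDist d) (x y o o' : α) :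
    gprod d x y o - d o o' ≤ gprod d x y o' := by
  simp only [gprod]
  linarith [hd.triangle x o' o, hd.triangle y o' o, hd.comm o' o]

lemma convInf_of_basepoint (hd : IsPseudoDist d) {x : ℕ → α} (o : α)
    (hx : ∀ R : ℝ, ∃ N : ℕ, ∀ i, N ≤ i → ∀ j, N ≤ j → R ≤ gprod d (x i) (x j) o) :
    ConvInf d x := by
  intro o' R
  obtain ⟨N, hN⟩ := hx (R + d o o')
  exact ⟨N, fun i hi j hj => by
    linarith [hN i hi j hj, hd.gprod_sub_dist_le (x i) (x j) o o']⟩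

lemma equivalence_bRel (hd : IsPseudoDist d) {δ : ℝ} (hδ : HyperbolicWith d δ) :
    Equivalence (BRel d) where
  refl x := x.2
  symm {x y} hxy o R := by
    obtain ⟨N, hN⟩ := hxy o R
    exact ⟨N, fun i hi j hj => hd.gprod_comm (x.1 j) _ _ ▸ hN j hj i hi⟩
  trans {x y z} hxy hyz o R := by
    obtain ⟨N, hN⟩ := hxy o (R + δ)
    obtain ⟨M, hM⟩ := hyz o (R + δ)
    refine ⟨max N M, fun i hi j hj => ?_⟩
    have hxy := hN i (le_of_max_le_left hi) (max N M) (le_max_left N M)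
    have hyz := hM (max N M) (le_max_right N M) j (le_of_max_le_right hj)
    linarith [hδ o (x.1 i) (y.1 (max N M)) (z.1 j), le_min hxy hyz]

lemma bRel_of_mk_eq (hd : IsPseudoDist d) {δ : ℝ} (hδ : HyperbolicWith d δ) {x y : BSeq d}
    (hxy : Quot.mk (BRel d) x = Quot.mk (BRel d) y) : BRel d x y :=
  (hd.equivalence_bRel hδ).eqvGen_iff.1 (Quot.eqvGen_exact hxy)

end IsPseudoDist

namespace IsWordMetric
variable {d : G → G → ℝ}

lemma gprod_mul_left (hd : IsWordMetric d) (g x y o : G) :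
    gprod d (g * x) (g * y) o = gprod d x y (g⁻¹ * o) := by
  have hx := hd.mul_left g x (g⁻¹ * o)
  have hy := hd.mul_left g y (g⁻¹ * o)
  rw [mul_inv_cancel_left] at hx hy
  rw [gprod, gprod, hx, hy, hd.mul_left]

lemma convInf_mul_left (hd : IsWordMetric d) {x : ℕ → G} (hx : ConvInf d x) (g : G) :
    ConvInf d (fun n => g * x n) := by
  intro o R
  simpa only [hd.gprod_mul_left] using hx (g⁻¹ * o) R

end IsWordMetric

lemma lt_bgp_self (o : α) (ξ : Bdry d) (R : ℝ) : (R : EReal) < bgp d o ξ ξ := by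
  obtain ⟨x, rfl⟩ := Quot.exists_rep ξ
  obtain ⟨N, hN⟩ := x.2 o (R + 1)
  refine lt_of_lt_of_le (b := ((R + 1 : ℝ) : EReal)) (by exact_mod_cast lt_add_one R) ?_
  refine le_trans (Filter.le_liminf_of_le (by isBoundedDefault) ?_)
    (le_sSup ⟨x, x, rfl, rfl, rfl⟩)
  filter_upwards [Filter.eventually_ge_atTop (N, N)] with pq hpq
  exact_mod_cast hN _ hpq.1 _ hpq.2

lemma exists_gprod_of_lt_bgp {o : α} {ξ η : Bdry d} {R : ℝ} (hR : (R : EReal) < bgp d o ξ η) :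
    ∃ x y : BSeq d, Quot.mk (BRel d) x = ξ ∧ Quot.mk (BRel d) y = η ∧
      ∃ N, ∀ i, N ≤ i → ∀ j, N ≤ j → R < gprod d (x.1 i) (y.1 j) o := by
  obtain ⟨_, ⟨x, y, hx, hy, rfl⟩, hlt⟩ := lt_sSup_iff.1 hR
  obtain ⟨⟨N, M⟩, hNM⟩ := Filter.eventually_atTop.1 (Filter.eventually_lt_of_lt_liminf hlt)
  refine ⟨x, y, hx, hy, max N M, fun i hi j hj => ?_⟩
  exact_mod_cast hNM (i, j) ⟨le_of_max_le_left hi, le_of_max_le_right hj⟩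

end Boundary

/-! ### From weak to strong projection distances -/

section Projections
variable {𝒴 : Type*} {D : 𝒴 → 𝒴 → 𝒴 → ℝ} {θ : ℝ}

/-- The set `𝒴_t(X, Z)` of elements `Y` on which the projections of `X` and `Z` are more than
`t` apart; here and below `D Y X Z` stands for the projection distance `d_Y(X, Z)`, which is
meaningful only when `X ≠ Y` and `Z ≠ Y`. -/
def between (D : 𝒴 → 𝒴 → 𝒴 → ℝ) (t : ℝ) (X Z : 𝒴) : Set 𝒴 := {Y | Y ≠ X ∧ Y ≠ Z ∧ t < D Y X Z}

/-- The conditions common to the weak and the strong projection axioms of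
Bestvina, Bromberg and Fujiwara. -/
structure ProjectionDistance (D : 𝒴 → 𝒴 → 𝒴 → ℝ) (θ : ℝ) : Prop where
  pos : 0 < θ
  comm : ∀ Y X Z, D Y X Z = D Y Z X
  triangle : ∀ {Y X W Z}, X ≠ Y → W ≠ Y → Z ≠ Y → D Y X Z ≤ D Y X W + D Y W Z
  self_le : ∀ {Y X}, X ≠ Y → D Y X X ≤ θ
  finite_between : ∀ X Z, (between D θ X Z).Finite

/-- The weak projection axioms. -/
structure WeakProjection (D : 𝒴 → 𝒴 → 𝒴 → ℝ) (θ : ℝ) : Prop extends ProjectionDistance D θ where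
  behrstock : ∀ {X Y Z}, Y ∈ between D θ X Z → D Z X Y ≤ θ

/-- The strong projection axioms: if `Y` lies between `X` and `Z`, then `X` and `Y` have the same
projection to `Z`. -/
structure StrongProjection (D : 𝒴 → 𝒴 → 𝒴 → ℝ) (θ : ℝ) : Prop
    extends ProjectionDistance D θ where
  eq_of_mem_between : ∀ {X Y Z W}, Y ∈ between D θ X Z → W ≠ Z → D Z X W = D Z Y W

lemma between_anti {s t : ℝ} (hst : s ≤ t) (X Z : 𝒴) : between D t X Z ⊆ between D s X Z :=
  fun _ hY => ⟨hY.1, hY.2.1, hst.trans_lt hY.2.2⟩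

namespace ProjectionDistance

lemma between_comm (h : ProjectionDistance D θ) (t : ℝ) (X Z : 𝒴) :
    between D t X Z = between D t Z X := by
  ext Y
  simp only [between, Set.mem_ofPred_eq, h.comm Y X Z]
  tauto

lemma between_self (h : ProjectionDistance D θ) {t : ℝ} (ht : θ ≤ t) (X : 𝒴) :
    between D t X X = ∅ :=
  Set.eq_empty_of_forall_notMem fun _ hY => by linarith [h.self_le hY.1.symm, hY.2.2]

lemma ne_of_mem_between (h : ProjectionDistance D θ) {t : ℝ} (ht : θ ≤ t) {X Y Z : 𝒴}
    (hY : Y ∈ between D t X Z) : X ≠ Z := by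
  rintro rfl
  simp [h.between_self ht] at hY

end ProjectionDistance

/-- `X` and `Y` are linked at `Z` if one of them clearly separates the other one from `Z`. -/
def Linked (D : 𝒴 → 𝒴 → 𝒴 → ℝ) (θ : ℝ) (Z X Y : 𝒴) : Prop :=
  Y ∈ between D (4 * θ) X Z ∨ X ∈ between D (4 * θ) Y Z

/-- The equivalence relation generated by being linked at `Z`. The projection distance at `Z`
is changed so that it does not distinguish equivalent elements. -/
def LinkEquiv (D : 𝒴 → 𝒴 → 𝒴 → ℝ) (θ : ℝ) (Z : 𝒴) : 𝒴 → 𝒴 → Prop :=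
  Relation.ReflTransGen (Linked D θ Z)

/-- `M` is equal to `X` or separates `X` from `Z`. -/
def Dominates (D : 𝒴 → 𝒴 → 𝒴 → ℝ) (θ : ℝ) (Z M X : 𝒴) : Prop :=
  X = M ∨ M ∈ between D (2 * θ) X Z

namespace WeakProjection

lemma behrstock' (h : WeakProjection D θ) {X Y Z : 𝒴} (hY : Y ∈ between D θ X Z) :
    D X Y Z ≤ θ := by
  rw [h.comm]
  exact h.behrstock (h.between_comm θ X Z ▸ hY)

lemma notMem_between (h : WeakProjection D θ) {X Y Z : 𝒴} {s t : ℝ} (hs : θ ≤ s) (ht : θ ≤ t)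
    (hY : Y ∈ between D s X Z) : X ∉ between D t Y Z := fun hX => by
  linarith [h.behrstock' (between_anti hs _ _ hY), hX.2.2]

lemma le_of_dominates (h : WeakProjection D θ) {Z M J C : 𝒴} (hJM : J ≠ M)
    (hM : M ∈ between D θ J Z) (hC : Dominates D θ Z J C) : D M C J ≤ θ := by
  rcases hC with rfl | hJ
  · exact h.self_le hJM
  · have hJMZ := h.behrstock' hM
    have htri := h.triangle hJ.1.symm hM.1 hJ.2.1.symm
    exact h.behrstock ⟨hJ.1, hJM, by linarith [hJ.2.2]⟩

lemma dominates_of_common (h : WeakProjection D θ) {Z M J P C : 𝒴}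
    (hM : J = M ∨ M ∈ between D θ J Z) (hP : Dominates D θ Z J P) (hC : Dominates D θ Z J C)
    (hPM : M ∈ between D (4 * θ) P Z) : Dominates D θ Z M C := by
  by_cases hJM : J = M
  · exact hJM ▸ hC
  by_cases hCM : C = M
  · exact Or.inl hCM
  replace hM := hM.resolve_left hJM
  have hPJ := h.le_of_dominates hJM hM hP
  have hCJ := h.le_of_dominates hJM hM hC
  have htri₁ := h.triangle hPM.1.symm hJM hPM.2.1.symm
  have htri₂ := h.triangle hJM hCM hPM.2.1.symm
  rw [h.comm M J C] at htri₂
  exact Or.inr ⟨Ne.symm hCM, hPM.2.1, by linarith [hPM.2.2]⟩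

lemma dominates_or_mem_between (h : WeakProjection D θ) {Z M P X : 𝒴}
    (hP : Dominates D θ Z X P) (hPM : M ∈ between D (4 * θ) P Z) :
    Dominates D θ Z M X ∨ X ∈ between D θ M Z := by
  have hθ := h.pos
  rcases hP with rfl | hX
  · exact Or.inl (Or.inr (between_anti (by linarith) _ _ hPM))
  by_cases hXM : X = M
  · exact Or.inl (Or.inl hXM)
  rcases lt_or_ge θ (D X P M) with hlt | hle
  · have hMPX := h.behrstock (Z := M) ⟨hX.1, hXM, hlt⟩
    have htri := h.triangle hPM.1.symm hXM hPM.2.1.symm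
    exact Or.inl (Or.inr ⟨Ne.symm hXM, hPM.2.1, by linarith [hPM.2.2]⟩)
  · have htri := h.triangle hX.1.symm (Ne.symm hXM) hX.2.1.symm
    exact Or.inr ⟨hXM, hX.2.1, by linarith [hX.2.2]⟩

lemma mem_between_of_dominates (h : WeakProjection D θ) {Z X Y : 𝒴} (hXY : Linked D θ Z X Y)
    (hdom : Dominates D θ Z X Y) : X ∈ between D (4 * θ) Y Z := by
  have hθ := h.pos
  refine hXY.resolve_left fun hY => ?_
  rcases hdom with rfl | hX
  · exact hY.1 rfl
  · exact h.notMem_between (by linarith) (by linarith) hX hY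

lemma exists_dominates (h : WeakProjection D θ) (Z : 𝒴) (n : ℕ) (f : ℕ → 𝒴)
    (hf : ∀ i < n, Linked D θ Z (f i) (f (i + 1))) :
    ∃ m ≤ n, ∀ j ≤ n, Dominates D θ Z (f m) (f j) := by
  have hθ := h.pos
  induction n using Nat.strong_induction_on generalizing f with
  | _ n ih =>
  rcases n with _ | n
  · exact ⟨0, le_rfl, fun j hj => Or.inl (by rw [Nat.le_zero.1 hj])⟩
  obtain ⟨q, hq, htail⟩ := ih n n.lt_succ_self (fun i => f (i + 1)) fun i hi => hf _ (by omega)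
  obtain ⟨j₀, hj₀, hinit⟩ := ih q (by omega) f fun i hi => hf i (by omega)
  -- `f (q + 1)` dominates `f 1, …, f (n + 1)`, and `f j₀` dominates `f 0, …, f q`.
  suffices Dominates D θ Z (f (q + 1)) (f 0) ∨
      f 0 ∈ between D θ (f (q + 1)) Z ∧ f 0 ∈ between D (4 * θ) (f 1) Z by
    rcases this with hdom | ⟨h0, h01⟩
    · refine ⟨q + 1, by omega, fun j hj => ?_⟩
      rcases j with _ | j
      exacts [hdom, htail j (by omega)]
    · refine ⟨0, by omega, fun j hj => ?_⟩
      rcases j with _ | j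
      exacts [Or.inl rfl, h.dominates_of_common (Or.inr h0) (htail 0 n.zero_le)
        (htail j (by omega)) h01]
  rcases Nat.eq_zero_or_pos q with rfl | hq0
  · rcases hf 0 (by omega) with h1 | h0
    · exact Or.inl (Or.inr (between_anti (by linarith) _ _ h1))
    · exact Or.inr ⟨between_anti (by linarith) _ _ h0, h0⟩
  have hlast : f (q + 1) ∈ between D (4 * θ) (f q) Z := by
    have hdom := htail (q - 1) (by omega)
    simp only [Nat.sub_add_cancel hq0] at hdom
    exact h.mem_between_of_dominates (Or.symm (hf q (by omega))) hdom
  rcases j₀ with _ | j₀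
  · refine (h.dominates_or_mem_between (hinit q le_rfl) hlast).imp_right fun h0 => ⟨h0, ?_⟩
    exact h.mem_between_of_dominates (hf 0 (by omega)) (hinit 1 hq0)
  · exact Or.inl (h.dominates_of_common
      ((htail j₀ (by omega)).imp_right fun hM => between_anti (by linarith) _ _ hM)
      (hinit q le_rfl) (hinit 0 q.zero_le) hlast)

end WeakProjection

lemma Linked.right_ne {Z X Y : 𝒴} (h : WeakProjection D θ) (hXY : Linked D θ Z X Y) : Y ≠ Z := by
  have hθ := h.pos
  rcases hXY with hY | hX
  exacts [hY.2.1, h.ne_of_mem_between (by linarith) hX]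

namespace LinkEquiv

lemma symm {Z X W : 𝒴} (hXW : LinkEquiv D θ Z X W) : LinkEquiv D θ Z W X := by
  induction hXW with
  | refl => exact .refl
  | tail _ hlink ih => exact .head (Or.symm hlink) ih

lemma right_ne {Z X W : 𝒴} (h : WeakProjection D θ) (hXW : LinkEquiv D θ Z X W) (hX : X ≠ Z) :
    W ≠ Z := by
  cases hXW with
  | refl => exact hX
  | tail _ hlink => exact hlink.right_ne h

lemma exists_path {Z X W : 𝒴} (hXW : LinkEquiv D θ Z X W) :
    ∃ (n : ℕ) (f : ℕ → 𝒴), f 0 = X ∧ f n = W ∧ ∀ i < n, Linked D θ Z (f i) (f (i + 1)) := by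
  induction hXW using Relation.ReflTransGen.head_induction_on with
  | refl => exact ⟨0, fun _ => W, rfl, rfl, by simp⟩
  | @head X Y hXY _ ih =>
    obtain ⟨n, f, rfl, rfl, hf⟩ := ih
    refine ⟨n + 1, fun i => i.casesOn X f, rfl, rfl, fun i hi => ?_⟩
    rcases i with _ | i
    exacts [hXY, hf i (by omega)]

lemma dist_le {Z X W : 𝒴} (h : WeakProjection D θ) (hX : X ≠ Z) (hXW : LinkEquiv D θ Z X W) :
    D Z X W ≤ 2 * θ := by
  have hθ := h.pos
  have hW := hXW.right_ne h hX
  obtain ⟨n, f, rfl, rfl, hf⟩ := hXW.exists_path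
  obtain ⟨m, -, hdom⟩ := h.exists_dominates Z n f hf
  have hmZ : f m ≠ Z := (hdom 0 n.zero_le).elim (fun he => he ▸ hX) fun hM => hM.2.1
  have hclose : ∀ j ≤ n, f j ≠ Z → D Z (f j) (f m) ≤ θ := by
    intro j hj hjZ
    rcases hdom j hj with he | hM
    · exact he ▸ h.self_le hjZ
    · exact h.behrstock (between_anti (by linarith) _ _ hM)
  have htri := h.triangle hX hmZ hW
  rw [h.comm Z (f m)] at htri
  linarith [hclose 0 n.zero_le hX, hclose n le_rfl hW]

end LinkEquiv

/-- The modified projection distance of Bestvina, Bromberg, Fujiwara and Sisto. -/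
def modifiedDist (D : 𝒴 → 𝒴 → 𝒴 → ℝ) (θ : ℝ) (Z X W : 𝒴) : ℝ :=
  sSup (Set.image2 (D Z) {X' | LinkEquiv D θ Z X X'} {W' | LinkEquiv D θ Z W W'})

lemma modifiedDist_congr {Z X Y : 𝒴} (hXY : LinkEquiv D θ Z X Y) (W : 𝒴) :
    modifiedDist D θ Z X W = modifiedDist D θ Z Y W := by
  have : {X' | LinkEquiv D θ Z X X'} = {X' | LinkEquiv D θ Z Y X'} :=
    Set.ext fun _ => ⟨hXY.symm.trans, hXY.trans⟩
  rw [modifiedDist, this, modifiedDist]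

lemma modifiedDist_le {Z X W : 𝒴} {c : ℝ}
    (hc : ∀ X' W', LinkEquiv D θ Z X X' → LinkEquiv D θ Z W W' → D Z X' W' ≤ c) :
    modifiedDist D θ Z X W ≤ c :=
  csSup_le (Set.Nonempty.image2 ⟨X, .refl⟩ ⟨W, .refl⟩)
    (Set.forall_mem_image2.2 fun _ h₁ _ h₂ => hc _ _ h₁ h₂)

namespace WeakProjection

lemma le_add_of_linkEquiv (h : WeakProjection D θ) {Z X W X' W' : 𝒴} (hX : X ≠ Z) (hW : W ≠ Z)
    (hXX' : LinkEquiv D θ Z X X') (hWW' : LinkEquiv D θ Z W W') :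
    D Z X' W' ≤ D Z X W + 4 * θ := by
  have hX' := hXX'.right_ne h hX
  have hW' := hWW'.right_ne h hW
  have htri := h.triangle hX' hX hW'
  have htri' := h.triangle hX hW hW'
  rw [h.comm Z X' X] at htri
  linarith [hXX'.dist_le h hX, hWW'.dist_le h hW]

lemma le_modifiedDist (h : WeakProjection D θ) {Z X W X' W' : 𝒴} (hX : X ≠ Z) (hW : W ≠ Z)
    (hXX' : LinkEquiv D θ Z X X') (hWW' : LinkEquiv D θ Z W W') :
    D Z X' W' ≤ modifiedDist D θ Z X W :=
  le_csSup ⟨D Z X W + 4 * θ, Set.forall_mem_image2.2 fun _ h₁ _ h₂ =>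
    h.le_add_of_linkEquiv hX hW h₁ h₂⟩ ⟨X', hXX', W', hWW', rfl⟩

lemma modifiedDist_le_add (h : WeakProjection D θ) {Z X W : 𝒴} (hX : X ≠ Z) (hW : W ≠ Z) :
    modifiedDist D θ Z X W ≤ D Z X W + 4 * θ :=
  modifiedDist_le fun _ _ h₁ h₂ => h.le_add_of_linkEquiv hX hW h₁ h₂

lemma between_subset_modifiedDist (h : WeakProjection D θ) (K : ℝ) (X Z : 𝒴) :
    between D K X Z ⊆ between (modifiedDist D θ) K X Z :=
  fun _ ⟨hX, hZ, hlt⟩ =>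
    ⟨hX, hZ, hlt.trans_le (h.le_modifiedDist (Ne.symm hX) (Ne.symm hZ) .refl .refl)⟩

lemma between_modifiedDist_subset (h : WeakProjection D θ) {K K' : ℝ} (hK : K + 4 * θ ≤ K')
    (X Z : 𝒴) : between (modifiedDist D θ) K' X Z ⊆ between D K X Z :=
  fun _ ⟨hX, hZ, hlt⟩ =>
    ⟨hX, hZ, by linarith [h.modifiedDist_le_add (Ne.symm hX) (Ne.symm hZ)]⟩

theorem strongProjection_modifiedDist (h : WeakProjection D θ) :
    StrongProjection (modifiedDist D θ) (8 * θ) where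
  pos := by linarith [h.pos]
  comm Y X Z := by
    rw [modifiedDist, Set.image2_swap, modifiedDist]
    simp only [h.comm Y]
  triangle {Y X W Z} hX hW hZ := modifiedDist_le fun X' Z' hXX' hZZ' => by
    have htri := h.triangle (hXX'.right_ne h hX) hW (hZZ'.right_ne h hZ)
    linarith [h.le_modifiedDist hX hW hXX' .refl, h.le_modifiedDist hW hZ .refl hZZ']
  self_le hX := by linarith [h.modifiedDist_le_add hX hX, h.self_le hX, h.pos]
  finite_between X Z := (h.finite_between X Z).subset <|
    h.between_modifiedDist_subset (by linarith [h.pos]) X Z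
  eq_of_mem_between {X Y Z W} hY _ :=
    modifiedDist_congr (.single (Or.inl (h.between_modifiedDist_subset (by linarith) X Z hY))) W

end WeakProjection

section Equivariance
variable [MulAction G 𝒴]

lemma LinkEquiv.smul (hD : ∀ (g : G) (Y X Z : 𝒴), D (g • Y) (g • X) (g • Z) = D Y X Z) (g : G)
    {Z X W : 𝒴} (hXW : LinkEquiv D θ Z X W) : LinkEquiv D θ (g • Z) (g • X) (g • W) := by
  induction hXW with
  | refl => exact .refl
  | tail _ hlink ih => exact ih.tail (by simpa [Linked, between, hD] using hlink)

lemma modifiedDist_smul (hD : ∀ (g : G) (Y X Z : 𝒴), D (g • Y) (g • X) (g • Z) = D Y X Z)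
    (g : G) (Z X W : 𝒴) :
    modifiedDist D θ (g • Z) (g • X) (g • W) = modifiedDist D θ Z X W := by
  have hclass : ∀ X, {X' | LinkEquiv D θ (g • Z) (g • X) X'} =
      (g • ·) '' {X' | LinkEquiv D θ Z X X'} := fun X => by
    refine Set.ext fun X' => ⟨fun hX' => ⟨g⁻¹ • X', ?_, smul_inv_smul g X'⟩, ?_⟩
    · simpa using hX'.smul hD g⁻¹
    · rintro ⟨X', hX', rfl⟩
      exact hX'.smul hD g
  simp only [modifiedDist, hclass, Set.image2_image_left, Set.image2_image_right, hD]

end Equivariance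

end Projections

/-! ### The linear order on the elements between two given ones -/

section Order
variable {𝒴 : Type*} {D : 𝒴 → 𝒴 → 𝒴 → ℝ} {θ K : ℝ}

/-- The strong projection axioms, together with a threshold `K` which is large enough for the
sets `𝒴_K(X, Z)` to be linearly ordered. -/
structure ThresholdProjection (D : 𝒴 → 𝒴 → 𝒴 → ℝ) (θ K : ℝ) : Prop
    extends StrongProjection D θ where
  two_mul_le : 2 * θ ≤ K

namespace ThresholdProjection

lemma lt (h : ThresholdProjection D θ K) : θ < K := by linarith [h.two_mul_le, h.pos]

lemma finite_between_threshold (h : ThresholdProjection D θ K) (X Z : 𝒴) :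
    (between D K X Z).Finite :=
  (h.finite_between X Z).subset (between_anti h.lt.le X Z)

lemma eq_of_mem_between_threshold (h : ThresholdProjection D θ K) {X Y Z W : 𝒴}
    (hY : Y ∈ between D K X Z) (hW : W ≠ Z) : D Z X W = D Z Y W :=
  h.eq_of_mem_between (between_anti h.lt.le X Z hY) hW

lemma mem_between_right (h : ThresholdProjection D θ K) {X Z U V : 𝒴}
    (hV : V ∈ between D K X Z) (hU : U ∈ between D K X V) : V ∈ between D K U Z :=
  ⟨hU.2.1.symm, hV.2.1, h.eq_of_mem_between_threshold hU hV.2.1.symm ▸ hV.2.2⟩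

lemma mem_between_left (h : ThresholdProjection D θ K) {X Z U V : 𝒴}
    (hV : V ∈ between D K X Z) (hU : U ∈ between D K V Z) : V ∈ between D K X U := by
  rw [h.between_comm] at hV hU ⊢
  exact h.mem_between_right hV hU

lemma between_subset_left (h : ThresholdProjection D θ K) {X Z V : 𝒴}
    (hV : V ∈ between D K X Z) : between D K X V ⊆ between D K X Z := fun U hU => by
  have hVU := h.mem_between_right hV hU
  have heq := h.eq_of_mem_between_threshold (h.between_comm K U Z ▸ hVU) hU.1.symm
  refine ⟨hU.1, h.ne_of_mem_between h.lt.le hVU, ?_⟩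
  rw [h.comm, heq, h.comm]
  exact hU.2.2

lemma between_subset_right (h : ThresholdProjection D θ K) {X Z V : 𝒴}
    (hV : V ∈ between D K X Z) : between D K V Z ⊆ between D K X Z := by
  rw [h.between_comm] at hV
  rw [h.between_comm K V, h.between_comm K X]
  exact h.between_subset_left hV

lemma mem_between_or_mem_between (h : ThresholdProjection D θ K) {X Z U V : 𝒴}
    (hU : U ∈ between D K X Z) (hV : V ∈ between D K X Z) (hne : U ≠ V) :
    U ∈ between D K X V ∨ V ∈ between D K X U := by
  obtain ⟨hUX, hUZ, hU⟩ := hU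
  obtain ⟨hVX, hVZ, hV⟩ := hV
  have hK := h.two_mul_le
  have hθK := h.lt
  rcases lt_or_ge θ (D V X U) with hlt | hle
  · have hUV : D U X Z = D U V Z := h.eq_of_mem_between ⟨hVX, hne.symm, hlt⟩ hUZ.symm
    rw [h.comm U V] at hUV
    have hVU : D V Z X = D V U X := h.eq_of_mem_between ⟨hUZ, hne, by linarith⟩ hVX.symm
    rw [h.comm V Z, h.comm V U] at hVU
    exact Or.inr ⟨hVX, hne.symm, hVU ▸ hV⟩
  · have htri := h.triangle hVX.symm hne hVZ.symm
    rw [h.comm V U] at htri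
    have hUV : D U Z X = D U V X := h.eq_of_mem_between ⟨hVZ, hne.symm, by linarith⟩ hUX.symm
    rw [h.comm U Z, h.comm U V] at hUV
    exact Or.inl ⟨hUX, hne, hUV ▸ hU⟩

lemma ncard_between_lt_left (h : ThresholdProjection D θ K) {X Z V : 𝒴}
    (hV : V ∈ between D K X Z) : (between D K X V).ncard < (between D K X Z).ncard :=
  Set.ncard_lt_ncard ⟨h.between_subset_left hV, fun hsub => (hsub hV).2.1 rfl⟩
    (h.finite_between_threshold X Z)

lemma ncard_between_lt_right (h : ThresholdProjection D θ K) {X Z V : 𝒴}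
    (hV : V ∈ between D K X Z) : (between D K V Z).ncard < (between D K X Z).ncard := by
  rw [h.between_comm] at hV
  rw [h.between_comm K V, h.between_comm K X]
  exact h.ncard_between_lt_left hV

/-- The position of `U` in `𝒴_K(X, Z)` is the cardinality of `𝒴_K(X, U)`. -/
lemma injOn_ncard_between (h : ThresholdProjection D θ K) (X Z : 𝒴) :
    Set.InjOn (fun U => (between D K X U).ncard) (between D K X Z) := by
  intro U hU V hV heq
  by_contra hne
  rcases h.mem_between_or_mem_between hU hV hne with hUV | hVU
  exacts [(h.ncard_between_lt_left hUV).ne heq, (h.ncard_between_lt_left hVU).ne' heq]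

lemma exists_ncard_between_eq (h : ThresholdProjection D θ K) {X Z : 𝒴} {i : ℕ}
    (hi : i < (between D K X Z).ncard) :
    ∃ V ∈ between D K X Z, (between D K X V).ncard = i := by
  have himage : (fun U => (between D K X U).ncard) '' between D K X Z =
      Set.Iio (between D K X Z).ncard := by
    refine Set.eq_of_subset_of_ncard_le ?_ ?_ (Set.finite_Iio _)
    · rintro _ ⟨V, hV, rfl⟩
      exact h.ncard_between_lt_left hV
    · rw [(h.injOn_ncard_between X Z).ncard_image, Set.ncard_eq_toFinset_card']
      simp
  exact himage.ge hi

lemma mem_between_of_ncard_lt (h : ThresholdProjection D θ K) {X Z U V : 𝒴}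
    (hU : U ∈ between D K X Z) (hV : V ∈ between D K X Z)
    (hlt : (between D K X U).ncard < (between D K X V).ncard) : U ∈ between D K X V := by
  refine (h.mem_between_or_mem_between hU hV ?_).resolve_right fun hVU =>
    (h.ncard_between_lt_left hVU).not_gt hlt
  rintro rfl
  exact hlt.false

lemma dist_le_of_between_eq_empty (h : ThresholdProjection D θ K) {X X' U W : 𝒴}
    (hXX' : between D K X X' = ∅) (hU : U ∈ between D K X W) : D W X X' ≤ θ := by
  have hWX' : W ≠ X' := by
    rintro rfl
    simp [hXX'] at hU
  by_contra! hlt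
  have hW : θ < D W X' U := by
    rwa [h.comm, ← h.eq_of_mem_between_threshold hU hWX'.symm]
  have hUX' : U ≠ X' := by
    rintro rfl
    linarith [h.self_le hU.2.1]
  have hUX : D U X' X = D U W X := h.eq_of_mem_between ⟨hWX', hU.2.1.symm, hW⟩ hU.1.symm
  have hmem : U ∈ between D K X X' := ⟨hU.1, hUX', by
    rw [h.comm, hUX, h.comm]
    exact hU.2.2⟩
  simp [hXX'] at hmem

lemma dist_eq_of_between_eq_empty (h : ThresholdProjection D θ K) {X X' U W V T : 𝒴}
    (hXX' : between D K X X' = ∅) (hU : U ∈ between D K X W) (hW : W ∈ between D K X V)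
    (hT : T ≠ V) : D V X' T = D V X T := by
  have hWX' : W ≠ X' := by
    rintro rfl
    simp [hXX'] at hU
  have hdist := h.dist_le_of_between_eq_empty hXX' hU
  have htri := h.triangle hW.1.symm hWX'.symm hW.2.1.symm
  rw [h.eq_of_mem_between_threshold hW hT]
  exact h.eq_of_mem_between ⟨hWX', hW.2.1, by linarith [hW.2.2, h.two_mul_le]⟩ hT

lemma between_eq_empty_of_ncard_eq (h : ThresholdProjection D θ K) {X Z V : 𝒴}
    (hV : V ∈ between D K X Z)
    (hcard : (between D K X Z).ncard = (between D K X V).ncard + 1) : between D K V Z = ∅ := by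
  refine Set.eq_empty_of_forall_notMem fun U hU => ?_
  have hVU := h.ncard_between_lt_left (h.mem_between_left hV hU)
  have hUZ := h.ncard_between_lt_left (h.between_subset_right hV hU)
  omega

lemma ncard_between_le_add (h : ThresholdProjection D θ K) {X Z U : 𝒴}
    (hU : U ∈ between D K X Z) :
    (between D K X Z).ncard ≤ (between D K X U).ncard + 1 + (between D K U Z).ncard := by
  have hsub : between D K X Z ⊆ insert U (between D K X U) ∪ between D K U Z := fun T hT => by
    by_cases hTU : T = U
    · exact Or.inl (Or.inl hTU)
    · exact (h.mem_between_or_mem_between hT hU hTU).imp Or.inr (h.mem_between_right hT)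
  have hfin := (h.finite_between_threshold X U).insert U
  have := Set.ncard_le_ncard hsub (hfin.union (h.finite_between_threshold U Z))
  have := Set.ncard_union_le (insert U (between D K X U)) (between D K U Z)
  have := Set.ncard_insert_le U (between D K X U)
  omega

lemma exists_mem_between_mem_between (h : ThresholdProjection D θ K) {X Z : 𝒴}
    (hcard : 2 ≤ (between D K X Z).ncard) :
    ∃ U W, U ∈ between D K X W ∧ W ∈ between D K X Z := by
  obtain ⟨W, hW, hcardW⟩ := h.exists_ncard_between_eq (i := 1) hcard
  obtain ⟨U, hU⟩ := Set.nonempty_of_ncard_ne_zero (hcardW ▸ one_ne_zero)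
  exact ⟨U, W, hU, hW⟩

lemma mem_between_of_between_eq_empty (h : ThresholdProjection D θ K) {X X' T V : 𝒴}
    (hXX' : between D K X X' = ∅) (hT : T ∈ between D K X V)
    (hcard : 2 ≤ (between D K X T).ncard) : T ∈ between D K X' V := by
  obtain ⟨U, W, hU, hW⟩ := h.exists_mem_between_mem_between hcard
  refine ⟨?_, hT.2.1, ?_⟩
  · rintro rfl
    simp [hXX'] at hW
  · rw [h.dist_eq_of_between_eq_empty hXX' hU hW hT.2.1.symm]
    exact hT.2.2

lemma ncard_between_le_add_two (h : ThresholdProjection D θ K) {X X' : 𝒴} (V : 𝒴)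
    (hXX' : between D K X X' = ∅) :
    (between D K X V).ncard ≤ (between D K X' V).ncard + 2 := by
  set early := {T ∈ between D K X V | (between D K X T).ncard < 2}
  have hfin : early.Finite := (h.finite_between_threshold X V).subset (Set.sep_subset _ _)
  have hearly_card : early.ncard ≤ 2 := by
    have := Set.ncard_le_ncard_of_injOn (t := Set.Iio 2) (fun T => (between D K X T).ncard)
      (fun T hT => hT.2) ((h.injOn_ncard_between X V).mono (Set.sep_subset _ _))
    rwa [show (Set.Iio 2).ncard = 2 by simp [Set.ncard_eq_toFinset_card']] at this
  have hsub : between D K X V ⊆ between D K X' V ∪ early := fun T hT =>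
    (le_or_gt 2 (between D K X T).ncard).imp (h.mem_between_of_between_eq_empty hXX' hT)
      (fun hlt => ⟨hT, hlt⟩)
  have := Set.ncard_le_ncard hsub ((h.finite_between_threshold X' V).union hfin)
  have := Set.ncard_union_le (between D K X' V) early
  omega

lemma mem_between_of_mem_between (h : ThresholdProjection D θ K) {X Z Z' T T' : 𝒴}
    (hT : T ∈ between D K X Z) (hT' : T' ∈ between D K X Z') (hX : X ∈ between D K T T') :
    X ∈ between D K Z Z' := by
  have hXZ := h.ne_of_mem_between h.lt.le hT
  have hXZ' := h.ne_of_mem_between h.lt.le hT'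
  rw [h.between_comm] at hT hT'
  refine ⟨hXZ, hXZ', ?_⟩
  rw [h.eq_of_mem_between_threshold hT hXZ'.symm, h.comm,
    h.eq_of_mem_between_threshold hT' hX.1.symm, h.comm]
  exact hX.2.2

lemma mem_between_trans (h : ThresholdProjection D θ K) {X Z U V : 𝒴}
    (hU : U ∈ between D K X V) (hV : V ∈ between D K U Z) : V ∈ between D K X Z :=
  ⟨(h.ne_of_mem_between h.lt.le hU).symm, hV.2.1,
    h.eq_of_mem_between_threshold hU hV.2.1.symm ▸ hV.2.2⟩

lemma mem_between_of_forall_succ (h : ThresholdProjection D θ K) {Z : ℕ → 𝒴}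
    (hZ : ∀ n, Z (n + 1) ∈ between D K (Z n) (Z (n + 2))) {i j k : ℕ} (hij : i < j) (hjk : j < k) :
    Z j ∈ between D K (Z i) (Z k) := by
  have hsucc : ∀ j, i + 1 ≤ j → Z j ∈ between D K (Z i) (Z (j + 1)) := fun j hj => by
    induction j, hj using Nat.le_induction with
    | base => exact hZ i
    | succ j _ ih => exact h.mem_between_trans ih (hZ j)
  induction k, hjk using Nat.le_induction with
  | base => exact hsucc j hij
  | succ k hjk ih => exact h.between_subset_left (hsucc k (by omega)) ih

end ThresholdProjection

end Order

/-! ### The geometry of the projection graph -/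

section Graph
variable {A 𝒴 : Type*} {π : A → 𝒴} {d : A → A → ℝ} {D : 𝒴 → 𝒴 → 𝒴 → ℝ} {θ K : ℝ}

/-- `d` is the path metric of (a blow-up of) the projection complex: the graph on `A` in which `a`
and `b` are adjacent when no element lies between `π a` and `π b`. For the Cayley graph of a group
acting transitively on `𝒴`, the map `π` is an orbit map. -/
structure ProjectionGraph (π : A → 𝒴) (d : A → A → ℝ) (D : 𝒴 → 𝒴 → 𝒴 → ℝ) (θ K : ℝ) : Prop where
  projection : ThresholdProjection D θ K
  graph : IsGraphDist d
  surjective : Function.Surjective π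
  dist_le_one_iff : ∀ {a b}, d a b ≤ 1 ↔ between D K (π a) (π b) = ∅

namespace ProjectionGraph

lemma dist_le_ncard_add_one (h : ProjectionGraph π d D θ K) (x z : A) :
    d x z ≤ (between D K (π x) (π z)).ncard + 1 := by
  induction hn : (between D K (π x) (π z)).ncard generalizing z with
  | zero =>
    rw [Set.ncard_eq_zero (h.projection.finite_between_threshold _ _)] at hn
    simpa using h.dist_le_one_iff.2 hn
  | succ n ih =>
    obtain ⟨V, hV, hcard⟩ := h.projection.exists_ncard_between_eq (by rw [hn]; exact n.lt_succ_self)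
    obtain ⟨v, rfl⟩ := h.surjective V
    have hadj := h.dist_le_one_iff.2
      (h.projection.between_eq_empty_of_ncard_eq hV (by rw [hn, hcard]))
    push_cast
    linarith [ih v hcard, h.graph.triangle x v z]

lemma dist_le_one_of_eq (h : ProjectionGraph π d D θ K) {x z : A} (hxz : π x = π z) :
    d x z ≤ 1 :=
  h.dist_le_one_iff.2 (hxz ▸ h.projection.between_self h.projection.lt.le _)

lemma ncard_between_le_add_two_mul_dist (h : ProjectionGraph π d D θ K) (V : 𝒴) (x z : A) :
    ((between D K (π x) V).ncard : ℝ) ≤ (between D K (π z) V).ncard + 2 * d x z := by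
  induction x using h.graph.induction_toward (z := z) with
  | base => simp [h.graph.self]
  | step x x' hxx' hx'z ih =>
    have hstep := h.projection.ncard_between_le_add_two V (h.dist_le_one_iff.1 hxx'.le)
    have : ((between D K (π x) V).ncard : ℝ) ≤ (between D K (π x') V).ncard + 2 := by
      exact_mod_cast hstep
    linarith

lemma ncard_between_le_two_mul_dist (h : ProjectionGraph π d D θ K) (x z : A) :
    ((between D K (π x) (π z)).ncard : ℝ) ≤ 2 * d x z := by
  simpa [h.projection.between_self h.projection.lt.le] using
    h.ncard_between_le_add_two_mul_dist (π z) x z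

lemma mem_between_of_two_mul_dist_le (h : ProjectionGraph π d D θ K) {T V : 𝒴} {x z : A}
    (hxz : 2 * d x z ≤ (between D K (π x) T).ncard) (hT : T ∈ between D K (π x) V) :
    T ∈ between D K (π z) V := by
  induction x using h.graph.induction_toward (z := z) with
  | base => exact hT
  | step x x' hxx' hx'z ih =>
    have hempty := h.dist_le_one_iff.1 hxx'.le
    have hstep := h.projection.ncard_between_le_add_two T hempty
    have : ((between D K (π x) T).ncard : ℝ) ≤ (between D K (π x') T).ncard + 2 := by
      exact_mod_cast hstep
    have htwo : (2 : ℝ) ≤ (between D K (π x) T).ncard := by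
      linarith [h.graph.nonneg x' z]
    exact ih (by linarith)
      (h.projection.mem_between_of_between_eq_empty hempty hT (by exact_mod_cast htwo))

lemma projection_eq_of_adj (h : ProjectionGraph π d D θ K) {x x' v : A} {T : 𝒴}
    (hxx' : d x x' ≤ 1) (hxv : 2 < d x v) (hT : T ≠ π v) :
    D (π v) (π x') T = D (π v) (π x) T := by
  have hcard : (1 : ℝ) < (between D K (π x) (π v)).ncard := by
    linarith [h.dist_le_ncard_add_one x v]
  obtain ⟨U, W, hU, hW⟩ :=
    h.projection.exists_mem_between_mem_between (Nat.succ_le_of_lt (by exact_mod_cast hcard))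
  exact h.projection.dist_eq_of_between_eq_empty (h.dist_le_one_iff.1 hxx') hU hW hT

lemma projection_eq_of_lt (h : ProjectionGraph π d D θ K) {x z v : A} {T : 𝒴}
    (hv : d x z + 4 < d x v + d v z) (hT : T ≠ π v) :
    D (π v) (π x) T = D (π v) (π z) T := by
  have hd := h.graph
  induction x using hd.induction_toward (z := z) with
  | base => rfl
  | step x x' hxx' hx'z ih =>
    have hxv : 2 < d x v := by linarith [hd.triangle v x z, hd.comm v x]
    rw [← h.projection_eq_of_adj hxx'.le hxv hT]
    exact ih (by linarith [hd.triangle x x' v])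

lemma dist_add_dist_le (h : ProjectionGraph π d D θ K) {x z v : A} (hz : π z ≠ π v)
    (hv : θ < D (π v) (π x) (π z)) : d x v + d v z ≤ d x z + 4 := by
  by_contra! hlt
  rw [h.projection_eq_of_lt hlt hz] at hv
  linarith [h.projection.self_le hz]

lemma dist_add_dist_le_of_mem_between (h : ProjectionGraph π d D θ K) {x z v : A}
    (hv : π v ∈ between D K (π x) (π z)) : d x v + d v z ≤ d x z + 4 :=
  h.dist_add_dist_le hv.2.1.symm (h.projection.lt.trans hv.2.2)

lemma mem_between_of_gprod (h : ProjectionGraph π d D θ K) {O : 𝒴} {v a b : A}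
    (hab : 3 ≤ gprod d a b v) (hv : π v ∈ between D K O (π a)) : π v ∈ between D K O (π b) := by
  have hd := h.graph
  have hb : π v ≠ π b := fun heq => by
    linarith [h.dist_le_one_of_eq heq, hd.gprod_comm a b v, hd.gprod_le_left b a v, hd.comm v b]
  refine ⟨hv.1, hb, ?_⟩
  have hlt : d a b + 4 < d a v + d v b := by
    simp only [gprod] at hab
    linarith [hd.comm v b]
  rw [h.projection.comm, ← h.projection_eq_of_lt hlt hv.1.symm, h.projection.comm]
  exact hv.2.2

lemma exists_mem_between_dist (h : ProjectionGraph π d D θ K) {w y : A} {r : ℝ} (hr : 4 < r)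
    (hy : r ≤ d w y) :
    ∃ v, π v ∈ between D K (π w) (π y) ∧ r - 3 ≤ d w v ∧ d w v < r - 2 := by
  have hd := h.graph
  have hP := h.projection
  have exists_first : ∀ a, between D K (π a) (π y) ≠ ∅ →
      ∃ b, π b ∈ between D K (π a) (π y) ∧ d a b ≤ 1 := fun a ha => by
    have hpos := (Set.ncard_pos (hP.finite_between_threshold _ _)).2
      (Set.nonempty_iff_ne_empty.2 ha)
    obtain ⟨B, hB, hcard⟩ := hP.exists_ncard_between_eq hpos
    obtain ⟨b, rfl⟩ := h.surjective B
    exact ⟨b, hB, h.dist_le_one_iff.2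
      ((Set.ncard_eq_zero (hP.finite_between_threshold _ _)).1 hcard)⟩
  have hwy : between D K (π w) (π y) ≠ ∅ := fun hempty => by
    linarith [h.dist_le_one_iff.2 hempty]
  -- Take the last element between `w` and `y` that is represented within `r - 2` of `w`.
  obtain ⟨V, ⟨hV, v, rfl, hv⟩, hmax⟩ := Set.exists_max_image
    {V | V ∈ between D K (π w) (π y) ∧ ∃ v, π v = V ∧ d w v < r - 2}
    (fun V => (between D K (π w) V).ncard)
    ((hP.finite_between_threshold (π w) (π y)).subset fun V hV => hV.1)
    (by
      obtain ⟨v, hv, hwv⟩ := exists_first w hwy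
      exact ⟨π v, hv, v, rfl, by linarith⟩)
  refine ⟨v, hV, ?_, hv⟩
  by_contra! hlt
  have hvy : between D K (π v) (π y) ≠ ∅ := fun hempty => by
    linarith [h.dist_le_one_iff.2 hempty, hd.triangle w v y]
  obtain ⟨u, hu, hvu⟩ := exists_first v hvy
  have hle := hmax (π u)
    ⟨hP.between_subset_right hV hu, u, rfl, by linarith [hd.triangle w v u]⟩
  exact (hP.ncard_between_lt_left (hP.mem_between_left hV hu)).not_ge hle

lemma dist_add_dist_le_of_gprod (h : ProjectionGraph π d D θ K) {w y t v : A} {r : ℝ}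
    (hv : π v ∈ between D K (π w) (π y)) (hvr : d w v < r - 2) (hr : r ≤ gprod d t y w) :
    d w v + d v t ≤ d w t + 4 := by
  have hd := h.graph
  have htw : r ≤ d w t := hr.trans (hd.comm t w ▸ hd.gprod_le_left t y w)
  have htv : π t ≠ π v := fun heq => by
    linarith [h.dist_le_one_of_eq heq, hd.triangle w v t, hd.comm v t]
  have hty : D (π v) (π t) (π y) ≤ θ := by
    by_contra! hlt
    have hle := h.dist_add_dist_le hv.2.1.symm hlt
    simp only [gprod] at hr
    linarith [hd.triangle w v t, hd.triangle w v y, hd.comm t w, hd.comm y w, hd.comm t v]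
  have htri := h.projection.triangle hv.1.symm htv hv.2.1.symm
  exact h.dist_add_dist_le htv (by linarith [hv.2.2, h.projection.two_mul_le])

theorem hyperbolicWith (h : ProjectionGraph π d D θ K) : HyperbolicWith d 8 := by
  have hd := h.graph
  intro w x y z
  set r := min (gprod d x y w) (gprod d y z w)
  have hrx : r ≤ gprod d x y w := min_le_left _ _
  have hrz : r ≤ gprod d z y w := hd.gprod_comm z y w ▸ min_le_right _ _
  rcases le_or_gt r 4 with hr | hr
  · linarith [hd.gprod_nonneg x z w]
  have hry : r ≤ d w y := by
    linarith [hd.gprod_comm x y w, hd.gprod_le_left y x w, hd.comm y w]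
  obtain ⟨v, hv, hrv, hvr⟩ := h.exists_mem_between_dist hr hry
  have hx := h.dist_add_dist_le_of_gprod hv hvr hrx
  have hz := h.dist_add_dist_le_of_gprod hv hvr hrz
  simp only [gprod]
  linarith [hd.triangle x v z, hd.comm x v, hd.comm x w, hd.comm z w]

end ProjectionGraph

end Graph

/-! ### Rays from vertices to boundary points -/

section Rays
variable {A 𝒴 : Type*} {π : A → 𝒴} {d : A → A → ℝ} {D : 𝒴 → 𝒴 → 𝒴 → ℝ} {θ K : ℝ}

/-- The set of elements between `O` and the boundary point `ξ`: those which are eventually between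
`O` and the terms of some sequence converging to `ξ`. -/
def betweenBdry (π : A → 𝒴) (D : 𝒴 → 𝒴 → 𝒴 → ℝ) (K : ℝ) (O : 𝒴) (ξ : Bdry d) : Set 𝒴 :=
  {V | ∃ x : BSeq d, Quot.mk (BRel d) x = ξ ∧ ∃ N, ∀ n, N ≤ n → V ∈ between D K O (π (x.1 n))}

namespace ProjectionGraph

lemma eventually_mem_between (h : ProjectionGraph π d D θ K) {O V : 𝒴} {x : BSeq d}
    (hV : V ∈ betweenBdry π D K O (Quot.mk (BRel d) x)) :
    ∃ N, ∀ n, N ≤ n → V ∈ between D K O (π (x.1 n)) := by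
  obtain ⟨x', hxx', N, hN⟩ := hV
  obtain ⟨v, rfl⟩ := h.surjective V
  obtain ⟨M, hM⟩ := h.graph.bRel_of_mk_eq h.hyperbolicWith hxx' v 3
  exact ⟨max N M, fun n hn => h.mem_between_of_gprod
    (hM (max N M) (le_max_right N M) n (le_of_max_le_right hn)) (hN _ (le_max_left N M))⟩

lemma exists_mem_between_of_mem_betweenBdry (h : ProjectionGraph π d D θ K) {O U V : 𝒴}
    {ξ : Bdry d} (hU : U ∈ betweenBdry π D K O ξ) (hV : V ∈ betweenBdry π D K O ξ) :
    ∃ Z, U ∈ between D K O Z ∧ V ∈ between D K O Z := by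
  obtain ⟨x, rfl⟩ := Quot.exists_rep ξ
  obtain ⟨N, hN⟩ := h.eventually_mem_between hU
  obtain ⟨M, hM⟩ := h.eventually_mem_between hV
  exact ⟨_, hN (max N M) (le_max_left N M), hM (max N M) (le_max_right N M)⟩

lemma exists_mem_betweenBdry (h : ProjectionGraph π d D θ K) (o : A) (ξ : Bdry d) (i : ℕ) :
    ∃ V ∈ betweenBdry π D K (π o) ξ, (between D K (π o) V).ncard = i := by
  have hd := h.graph
  obtain ⟨x, rfl⟩ := Quot.exists_rep ξ
  obtain ⟨N, hN⟩ := x.2 o (i + 5)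
  have hi : (i : ℝ) < (between D K (π o) (π (x.1 N))).ncard := by
    linarith [hN N le_rfl N le_rfl, hd.gprod_le_left (x.1 N) (x.1 N) o, hd.comm o (x.1 N),
      h.dist_le_ncard_add_one o (x.1 N)]
  obtain ⟨V, hV, hcard⟩ := h.projection.exists_ncard_between_eq (by exact_mod_cast hi)
  obtain ⟨v, rfl⟩ := h.surjective V
  have hov := h.dist_le_ncard_add_one o v
  rw [hcard] at hov
  exact ⟨π v, ⟨x, rfl, N, fun n hn => h.mem_between_of_gprod
    (by linarith [hN N le_rfl n hn, hd.gprod_sub_dist_le (x.1 N) (x.1 n) o v]) hV⟩, hcard⟩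

lemma convInf_of_mem_between (h : ProjectionGraph π d D θ K) {x : ℕ → A}
    (hx : ∀ i j k, i < j → j < k → π (x j) ∈ between D K (π (x i)) (π (x k))) : ConvInf d x := by
  have hncard : ∀ n, n ≤ (between D K (π (x 0)) (π (x (n + 1)))).ncard := fun n => by
    induction n with
    | zero => exact Nat.zero_le _
    | succ n ih =>
      have hmem := hx 0 (n + 1) (n + 2) n.succ_pos (Nat.lt_succ_self _)
      exact ih.trans_lt (h.projection.ncard_between_lt_left hmem)
  have hdist : ∀ n : ℕ, (n : ℝ) ≤ 2 * d (x 0) (x (n + 1)) := fun n =>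
    (Nat.cast_le.2 (hncard n)).trans (h.ncard_between_le_two_mul_dist _ _)
  have hgprod : ∀ i j : ℕ, i ≤ j → (i : ℝ) / 2 - 2 ≤ gprod d (x (i + 1)) (x (j + 1)) (x 0) := by
    intro i j hij
    have hle : d (x 0) (x (i + 1)) + d (x (i + 1)) (x (j + 1)) ≤ d (x 0) (x (j + 1)) + 4 := by
      rcases hij.eq_or_lt with rfl | hlt
      · linarith [h.graph.self (x (i + 1))]
      · exact h.dist_add_dist_le_of_mem_between (hx _ _ _ i.succ_pos (by omega))
    rw [gprod, h.graph.comm _ (x 0), h.graph.comm _ (x 0)]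
    linarith [hdist i]
  refine h.graph.convInf_of_basepoint (x 0) fun R => ?_
  obtain ⟨N, hN⟩ := exists_nat_ge (2 * (R + 2))
  refine ⟨N + 1, fun i hi j hj => ?_⟩
  obtain ⟨i, rfl⟩ := Nat.exists_eq_add_of_le' (Nat.le_of_add_left_le hi)
  obtain ⟨j, rfl⟩ := Nat.exists_eq_add_of_le' (Nat.le_of_add_left_le hj)
  have hNi : (N : ℝ) ≤ i := by exact_mod_cast Nat.le_of_succ_le_succ hi
  have hNj : (N : ℝ) ≤ j := by exact_mod_cast Nat.le_of_succ_le_succ hj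
  rcases le_total i j with hij | hij
  · linarith [hgprod i j hij]
  · rw [h.graph.gprod_comm]
    linarith [hgprod j i hij]

lemma mk_ne_mk (h : ProjectionGraph π d D θ K) {x y : BSeq d} {v : A} {N : ℕ}
    (hxy : ∀ n ≥ N, π v ∈ between D K (π (x.1 n)) (π (y.1 n))) :
    Quot.mk (BRel d) x ≠ Quot.mk (BRel d) y := fun heq => by
  obtain ⟨M, hM⟩ := h.graph.bRel_of_mk_eq h.hyperbolicWith heq v 3
  have hle := h.dist_add_dist_le_of_mem_between (hxy (max N M) (le_max_left _ _))
  have hge := hM _ (le_max_right N M) _ (le_max_right N M)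
  rw [gprod, h.graph.comm (y.1 _) v] at hge
  linarith

end ProjectionGraph

/-- The `i`-th element, in the linear order, of the ray from `o` to `ξ`. -/
def rayVertex (h : ProjectionGraph π d D θ K) (o : A) (ξ : Bdry d) (i : ℕ) : 𝒴 :=
  (h.exists_mem_betweenBdry o ξ i).choose

lemma rayVertex_mem (h : ProjectionGraph π d D θ K) (o : A) (ξ : Bdry d) (i : ℕ) :
    rayVertex h o ξ i ∈ betweenBdry π D K (π o) ξ :=
  (h.exists_mem_betweenBdry o ξ i).choose_spec.1

lemma ncard_between_rayVertex (h : ProjectionGraph π d D θ K) (o : A) (ξ : Bdry d) (i : ℕ) :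
    (between D K (π o) (rayVertex h o ξ i)).ncard = i :=
  (h.exists_mem_betweenBdry o ξ i).choose_spec.2

lemma eq_rayVertex (h : ProjectionGraph π d D θ K) {o : A} {ξ : Bdry d} {V : 𝒴}
    (hV : V ∈ betweenBdry π D K (π o) ξ) :
    V = rayVertex h o ξ (between D K (π o) V).ncard := by
  obtain ⟨Z, hVZ, hZ⟩ := h.exists_mem_between_of_mem_betweenBdry hV
    (rayVertex_mem h o ξ (between D K (π o) V).ncard)
  exact h.projection.injOn_ncard_between (π o) Z hVZ hZ (ncard_between_rayVertex h o ξ _).symm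

lemma rayVertex_mem_between (h : ProjectionGraph π d D θ K) (o : A) (ξ : Bdry d) {i j : ℕ}
    (hij : i < j) : rayVertex h o ξ i ∈ between D K (π o) (rayVertex h o ξ j) := by
  obtain ⟨Z, hi, hj⟩ := h.exists_mem_between_of_mem_betweenBdry (rayVertex_mem h o ξ i)
    (rayVertex_mem h o ξ j)
  exact h.projection.mem_between_of_ncard_lt hi hj (by simpa [ncard_between_rayVertex] using hij)

lemma rayVertex_succ_mem_between (h : ProjectionGraph π d D θ K) (o : A) (ξ : Bdry d) (i : ℕ) :
    rayVertex h o ξ (i + 1) ∈ between D K (rayVertex h o ξ i) (rayVertex h o ξ (i + 2)) :=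
  h.projection.mem_between_right (rayVertex_mem_between h o ξ (by omega))
    (rayVertex_mem_between h o ξ (by omega))

lemma exists_rayVertex_add_eq (h : ProjectionGraph π d D θ K) {o o' : A} {n : ℕ}
    (hn : d o o' ≤ n) (ξ : Bdry d) :
    ∃ j₀ ≤ 4 * n, ∀ k, rayVertex h o ξ (2 * n + k) = rayVertex h o' ξ (j₀ + k) := by
  set V : ℕ → 𝒴 := fun k => rayVertex h o ξ (2 * n + k) with hV
  have hfar : ∀ k, 2 * d o o' ≤ (between D K (π o) (V k)).ncard := fun k => by
    rw [hV, ncard_between_rayVertex]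
    push_cast
    linarith [k.cast_nonneg (α := ℝ)]
  have hmem : ∀ k, V k ∈ betweenBdry π D K (π o') ξ := fun k => by
    obtain ⟨x, hx, N, hN⟩ := rayVertex_mem h o ξ (2 * n + k)
    exact ⟨x, hx, N, fun m hm => h.mem_between_of_two_mul_dist_le (hfar k) (hN m hm)⟩
  set rank : ℕ → ℕ := fun k => (between D K (π o') (V k)).ncard
  have hrank_succ : ∀ k, rank (k + 1) = rank k + 1 := fun k => by
    have hbetween : V k ∈ between D K (π o) (V (k + 1)) :=
      rayVertex_mem_between h o ξ (by omega)
    have hempty : between D K (V k) (V (k + 1)) = ∅ :=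
      h.projection.between_eq_empty_of_ncard_eq hbetween (by
        simp only [hV, ncard_between_rayVertex, add_assoc])
    have hbetween' := h.mem_between_of_two_mul_dist_le (hfar k) hbetween
    have hle := h.projection.ncard_between_le_add hbetween'
    have hlt := h.projection.ncard_between_lt_left hbetween'
    rw [hempty, Set.ncard_empty] at hle
    exact le_antisymm hle hlt
  have hrank_eq : ∀ k, rank k = rank 0 + k := fun k => by
    induction k with
    | zero => rfl
    | succ k ih => rw [hrank_succ, ih, add_assoc]
  have hrank_zero : (rank 0 : ℝ) ≤ (4 * n : ℕ) := by
    have := h.ncard_between_le_add_two_mul_dist (V 0) o' o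
    rw [hV, ncard_between_rayVertex, h.graph.comm o' o] at this
    push_cast at this ⊢
    linarith
  exact ⟨rank 0, by exact_mod_cast hrank_zero, fun k => hrank_eq k ▸ eq_rayVertex h (hmem k)⟩

lemma rayVertex_eq_of_lt_bgp (h : ProjectionGraph π d D θ K) {o : A} {ξ η : Bdry d} {n : ℕ}
    (hξη : ((n + 5 : ℝ) : EReal) < bgp d o ξ η) {i : ℕ} (hi : i ≤ n) :
    rayVertex h o η i = rayVertex h o ξ i := by
  obtain ⟨x, y, rfl, rfl, N, hN⟩ := exists_gprod_of_lt_bgp hξη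
  obtain ⟨M, hM⟩ := h.eventually_mem_between (rayVertex_mem h o _ i)
  set V := rayVertex h o (Quot.mk (BRel d) x) i
  have hcard : (between D K (π o) V).ncard = i := ncard_between_rayVertex h o _ i
  have hmem : V ∈ betweenBdry π D K (π o) (Quot.mk (BRel d) y) := by
    refine ⟨y, rfl, N, fun m hm => ?_⟩
    have hVx := hM (max N M) (le_max_right N M)
    obtain ⟨v, hv⟩ := h.surjective V
    rw [← hv] at hVx hcard ⊢
    refine h.mem_between_of_gprod ?_ hVx
    have hov := h.dist_le_ncard_add_one o v
    rw [hcard] at hov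
    have hin : (i : ℝ) ≤ n := by exact_mod_cast hi
    linarith [hN (max N M) (le_max_left N M) m hm,
      h.graph.gprod_sub_dist_le (x.1 (max N M)) (y.1 m) o v]
  rw [eq_rayVertex h hmem, hcard]

end Rays

/-! ### The Cayley graph as a projection graph -/

section Cayley
variable {𝒴 : Type*} [MulAction G 𝒴] {D : 𝒴 → 𝒴 → 𝒴 → ℝ} {θ K : ℝ}

lemma smul_mem_between_iff (hD : ∀ (g : G) Y X Z, D (g • Y) (g • X) (g • Z) = D Y X Z) (g : G)
    {X Y Z : 𝒴} : g • Y ∈ between D K (g • X) (g • Z) ↔ Y ∈ between D K X Z := by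
  simp [between, hD]

lemma between_smul (hD : ∀ (g : G) Y X Z, D (g • Y) (g • X) (g • Z) = D Y X Z) (g : G)
    (X Z : 𝒴) : between D K (g • X) (g • Z) = (g • ·) '' between D K X Z := by
  ext Y
  rw [Set.image_smul, Set.mem_smul_set_iff_inv_smul_mem,
    ← smul_mem_between_iff hD g (Y := g⁻¹ • Y), smul_inv_smul]

lemma ncard_between_smul (hD : ∀ (g : G) Y X Z, D (g • Y) (g • X) (g • Z) = D Y X Z) (g : G)
    (X Z : 𝒴) : (between D K (g • X) (g • Z)).ncard = (between D K X Z).ncard := by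
  rw [between_smul hD, Set.ncard_image_of_injective _ (MulAction.injective g)]

/-- The generating set of `G` whose Cayley graph is a blow-up of the projection complex: the
elements moving `y₀` to itself or to a neighbour. -/
def neighborGenerators (G : Type*) [Group G] {𝒴 : Type*} [MulAction G 𝒴] (D : 𝒴 → 𝒴 → 𝒴 → ℝ)
    (K : ℝ) (y₀ : 𝒴) : Set G :=
  {g | between D K y₀ (g • y₀) = ∅}

lemma inv_mul_mem_neighborGenerators
    (hD : ∀ (g : G) Y X Z, D (g • Y) (g • X) (g • Z) = D Y X Z) {y₀ : 𝒴} {g k : G} :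
    g⁻¹ * k ∈ neighborGenerators G D K y₀ ↔ between D K (g • y₀) (k • y₀) = ∅ := by
  have himage := between_smul (K := K) hD g y₀ ((g⁻¹ * k) • y₀)
  rw [smul_smul, mul_inv_cancel_left] at himage
  rw [himage, Set.image_eq_empty]
  rfl

lemma closure_neighborGenerators [MulAction.IsPretransitive G 𝒴] (h : ThresholdProjection D θ K)
    (hD : ∀ (g : G) Y X Z, D (g • Y) (g • X) (g • Z) = D Y X Z) (y₀ : 𝒴) :
    Subgroup.closure (neighborGenerators G D K y₀) = ⊤ := by
  have hmem : ∀ x z : G, x⁻¹ * z ∈ Subgroup.closure (neighborGenerators G D K y₀) := by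
    intro x z
    induction hn : (between D K (x • y₀) (z • y₀)).ncard using Nat.strong_induction_on
      generalizing x z with
    | _ n ih =>
    rcases (between D K (x • y₀) (z • y₀)).eq_empty_or_nonempty with hempty | ⟨V, hV⟩
    · exact Subgroup.subset_closure ((inv_mul_mem_neighborGenerators hD).2 hempty)
    · obtain ⟨v, rfl⟩ := MulAction.exists_smul_eq G y₀ V
      have hxv := ih _ (hn ▸ h.ncard_between_lt_left hV) x v rfl
      have hvz := ih _ (hn ▸ h.ncard_between_lt_right hV) v z rfl
      simpa [mul_assoc] using mul_mem hxv hvz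
  exact (Subgroup.eq_top_iff' _).2 fun g => by simpa using hmem 1 g

/-- `d` is a left-invariant metric on `G` which makes the orbit map of `y₀` a projection graph
for an invariant projection distance. -/
structure ProjectionCayleyGraph (d : G → G → ℝ) (D : 𝒴 → 𝒴 → 𝒴 → ℝ) (θ K : ℝ) (y₀ : 𝒴) : Prop
    extends ProjectionGraph (fun g : G => g • y₀) d D θ K where
  mul_left : ∀ k g h, d (k * g) (k * h) = d g h
  dist_smul : ∀ (g : G) Y X Z, D (g • Y) (g • X) (g • Z) = D Y X Z

lemma ProjectionCayleyGraph.isWordMetric {d : G → G → ℝ} {y₀ : 𝒴}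
    (h : ProjectionCayleyGraph d D θ K y₀) : IsWordMetric d :=
  { h.graph with mul_left := h.mul_left }

theorem projectionCayleyGraph_wdist [MulAction.IsPretransitive G 𝒴]
    (h : ThresholdProjection D θ K)
    (hD : ∀ (g : G) Y X Z, D (g • Y) (g • X) (g • Z) = D Y X Z) (y₀ : 𝒴) :
    ProjectionCayleyGraph (wdist (neighborGenerators G D K y₀)) D θ K y₀ where
  projection := h
  graph := (isWordMetric_wdist (closure_neighborGenerators h hD y₀)).toIsGraphDist
  surjective := MulAction.exists_smul_eq G y₀
  dist_le_one_iff {a b} := by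
    rw [wdist_le_one_iff (closure_neighborGenerators h hD y₀), mul_inv_rev, inv_inv,
      inv_mul_mem_neighborGenerators hD, inv_mul_mem_neighborGenerators hD,
      h.between_comm K (b • y₀), or_self, or_iff_right_iff_imp]
    rintro rfl
    exact h.between_self h.lt.le _
  mul_left := (isWordMetric_wdist (closure_neighborGenerators h hD y₀)).mul_left
  dist_smul := hD

end Cayley

/-! ### Boundary points of the Cayley graph -/

section BoundaryPoints
variable {𝒴 : Type*} [MulAction G 𝒴] {d : G → G → ℝ} {D : 𝒴 → 𝒴 → 𝒴 → ℝ} {θ K : ℝ} {y₀ Y₁ : 𝒴}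

/-- The sequence `y₀, Y₁, c • y₀, c • Y₁, c ^ 2 • y₀, …` in `𝒴`, which is a ray towards the
attracting point of `c`. -/
def zigzag (c : G) (y₀ Y₁ : 𝒴) : ℕ → 𝒴
  | 0 => y₀
  | 1 => Y₁
  | n + 2 => c • zigzag c y₀ Y₁ n

lemma zigzag_two_mul (c : G) (y₀ Y₁ : 𝒴) (n : ℕ) : zigzag c y₀ Y₁ (2 * n) = c ^ n • y₀ := by
  induction n with
  | zero => simp [zigzag]
  | succ n ih => rw [mul_add_one, zigzag, ih, smul_smul, pow_succ']

namespace ProjectionCayleyGraph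

lemma zigzag_mem_between (h : ProjectionCayleyGraph d D θ K y₀) {a b : G} (ha : a • y₀ = y₀)
    (hb : b • Y₁ = Y₁) (hy : y₀ ∈ between D K Y₁ (a • Y₁)) (hY : Y₁ ∈ between D K y₀ (b • y₀))
    (n : ℕ) : zigzag (b * a) y₀ Y₁ (n + 1) ∈
      between D K (zigzag (b * a) y₀ Y₁ n) (zigzag (b * a) y₀ Y₁ (n + 2)) := by
  induction n using Nat.twoStepInduction with
  | zero => simpa only [zigzag, mul_smul, ha] using hY
  | one => simpa only [zigzag, mul_smul, ha, hb] using (smul_mem_between_iff h.dist_smul b).2 hy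
  | more n ih _ => exact (smul_mem_between_iff h.dist_smul (b * a)).2 ih

lemma three_bdry_points (h : ProjectionCayleyGraph d D θ K y₀) {a b : G} (ha : a • y₀ = y₀)
    (hb : b • Y₁ = Y₁) (hy : y₀ ∈ between D K Y₁ (a • Y₁))
    (hy' : y₀ ∈ between D K Y₁ (a • a • Y₁)) (hY : Y₁ ∈ between D K y₀ (b • y₀)) :
    ∃ p q r : Bdry d, p ≠ q ∧ p ≠ r ∧ q ≠ r := by
  set c := b * a
  have hzigzag : ∀ {i j k}, i < j → j < k →
      zigzag c y₀ Y₁ j ∈ between D K (zigzag c y₀ Y₁ i) (zigzag c y₀ Y₁ k) :=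
    h.projection.mem_between_of_forall_succ (h.zigzag_mem_between ha hb hy hY)
  have hconv : ConvInf d (fun n => c ^ n) := h.convInf_of_mem_between fun i j k hij hjk => by
    simpa only [zigzag_two_mul] using hzigzag (by omega : 2 * i < 2 * j) (by omega : 2 * j < 2 * k)
  have hfirst : ∀ n ≥ 1, Y₁ ∈ between D K y₀ (c ^ n • y₀) := fun n hn => by
    simpa only [zigzag_two_mul, zigzag] using hzigzag zero_lt_one (by omega : 1 < 2 * n)
  set ξ : G → Bdry d := fun s => Quot.mk _ ⟨_, h.isWordMetric.convInf_mul_left hconv s⟩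
  have hne : ∀ s t : G, s • y₀ = y₀ → t • y₀ = y₀ → y₀ ∈ between D K (s • Y₁) (t • Y₁) →
      ξ s ≠ ξ t := fun s t hs ht hst => by
    have hray : ∀ u : G, u • y₀ = y₀ → ∀ n ≥ 1, u • Y₁ ∈ between D K y₀ ((u * c ^ n) • y₀) :=
      fun u hu n hn => by
        simpa only [mul_smul, hu] using (smul_mem_between_iff h.dist_smul u).2 (hfirst n hn)
    refine h.mk_ne_mk (v := 1) (N := 1) fun n hn => ?_
    rw [one_smul]
    exact h.projection.mem_between_of_mem_between (hray s hs n hn) (hray t ht n hn) hst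
  refine ⟨ξ 1, ξ a, ξ (a * a), hne _ _ (one_smul _ _) ha (by rwa [one_smul]),
    hne _ _ (one_smul _ _) (by rw [mul_smul, ha, ha]) (by rwa [one_smul, mul_smul]),
    hne _ _ ha (by rw [mul_smul, ha, ha]) ?_⟩
  simpa only [mul_smul, ha] using (smul_mem_between_iff h.dist_smul a).2 hy

end ProjectionCayleyGraph

end BoundaryPoints

/-! ### Acylindricity -/

section Acylindricity
variable {𝒴 : Type*} [MulAction G 𝒴] {d : G → G → ℝ} {D : 𝒴 → 𝒴 → 𝒴 → ℝ} {θ K : ℝ} {y₀ : 𝒴}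

lemma encard_le_card_mul_of_fiber {A B : Type*} {T : Set A} {f : A → B} {s : Finset B} {N : ℕ}
    (hf : ∀ a ∈ T, f a ∈ s) (hfiber : ∀ b, {a ∈ T | f a = b}.encard ≤ N) :
    T.encard ≤ (s.card * N : ℕ) := by
  have hT : T ⊆ ⋃ b ∈ s, {a ∈ T | f a = b} := fun a ha => by simpa [ha] using hf a ha
  calc T.encard ≤ (⋃ b ∈ s, {a ∈ T | f a = b}).encard := Set.encard_le_encard hT
    _ ≤ ∑ b ∈ s, {a ∈ T | f a = b}.encard := s.set_encard_biUnion_le _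
    _ ≤ ∑ _b ∈ s, (N : ℕ∞) := Finset.sum_le_sum fun b _ => hfiber b
    _ = (s.card * N : ℕ) := by simp

namespace ProjectionCayleyGraph

lemma inv_smul_mem_between (h : ProjectionCayleyGraph d D θ K y₀) {x z g : G} {W : 𝒴}
    (hW : W ∈ between D K (x • y₀) (z • y₀))
    (hx : 2 * d x (g * x) ≤ (between D K (x • y₀) W).ncard)
    (hz : 2 * d z (g * z) ≤ (between D K W (z • y₀)).ncard) :
    g⁻¹ • W ∈ between D K (x • y₀) (z • y₀) := by
  have hgx : W ∈ between D K ((g * x) • y₀) (z • y₀) := h.mem_between_of_two_mul_dist_le hx hW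
  rw [h.projection.between_comm] at hz hgx
  have hgz : W ∈ between D K ((g * z) • y₀) ((g * x) • y₀) :=
    h.mem_between_of_two_mul_dist_le hz hgx
  rwa [← smul_mem_between_iff h.dist_smul g, smul_inv_smul, ← mul_smul, ← mul_smul,
    h.projection.between_comm]

lemma ncard_between_inv_smul_le (h : ProjectionCayleyGraph d D θ K y₀) {x g : G} (W : 𝒴) :
    ((between D K (x • y₀) (g⁻¹ • W)).ncard : ℝ) ≤
      (between D K (x • y₀) W).ncard + 2 * d x (g * x) := by
  rw [← ncard_between_smul h.dist_smul g, smul_inv_smul, ← mul_smul, h.graph.comm x]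
  exact h.ncard_between_le_add_two_mul_dist W (g * x) x

lemma exists_mem_between_ncard_eq (h : ProjectionCayleyGraph d D θ K y₀) {x z : G} {i : ℕ}
    (hi : (i : ℝ) + 1 < d x z) :
    ∃ U ∈ between D K (x • y₀) (z • y₀), (between D K (x • y₀) U).ncard = i := by
  refine h.projection.exists_ncard_between_eq ?_
  have := h.dist_le_ncard_add_one x z
  exact_mod_cast (by linarith : (i : ℝ) < (between D K (x • y₀) (z • y₀)).ncard)

lemma encard_le_of_inv_smul_mem_between (h : ProjectionCayleyGraph d D θ K y₀) {N n : ℕ}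
    (htransporter : ∀ (P P' : 𝒴 × 𝒴) (V : 𝒴), V ∈ between D K P.1 P.2 →
      {g : G | g • P = P'}.encard ≤ N) {X Z U M U' : 𝒴} (hM : M ∈ between D K U U') {T : Set G}
    (hU : ∀ g ∈ T, g⁻¹ • U ∈ between D K X Z ∧ (between D K X (g⁻¹ • U)).ncard < n)
    (hU' : ∀ g ∈ T, g⁻¹ • U' ∈ between D K X Z ∧ (between D K X (g⁻¹ • U')).ncard < n) :
    T.encard ≤ (n ^ 2 * N : ℕ) := by
  set rank : 𝒴 → ℕ := fun W => (between D K X W).ncard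
  have hfiber : ∀ b, {g ∈ T | (rank (g⁻¹ • U), rank (g⁻¹ • U')) = b}.encard ≤ N := fun b => by
    rcases {g ∈ T | (rank (g⁻¹ • U), rank (g⁻¹ • U')) = b}.eq_empty_or_nonempty with
      hempty | ⟨g₀, hg₀, rfl⟩
    · simp [hempty]
    refine (Set.encard_le_encard fun g hg => ?_).trans <| htransporter (g₀⁻¹ • U, g₀⁻¹ • U') (U, U')
      (g₀⁻¹ • M) ((smul_mem_between_iff h.dist_smul g₀⁻¹).2 hM)
    have hinj := h.projection.injOn_ncard_between X Z
    simp only [Prod.smul_mk, Set.mem_ofPred_eq, Prod.mk.injEq]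
    rw [← hinj (hU g hg.1).1 (hU g₀ hg₀).1 (congrArg Prod.fst hg.2),
      ← hinj (hU' g hg.1).1 (hU' g₀ hg₀).1 (congrArg Prod.snd hg.2), smul_inv_smul, smul_inv_smul]
    exact ⟨rfl, rfl⟩
  have hrange : ∀ g ∈ T, (rank (g⁻¹ • U), rank (g⁻¹ • U')) ∈ Finset.range n ×ˢ Finset.range n :=
    fun g hg => by simpa using ⟨(hU g hg).2, (hU' g hg).2⟩
  simpa [sq] using encard_le_card_mul_of_fiber hrange hfiber

theorem acylDist (h : ProjectionCayleyGraph d D θ K y₀) {N : ℕ}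
    (htransporter : ∀ (P P' : 𝒴 × 𝒴) (V : 𝒴), V ∈ between D K P.1 P.2 →
      {g : G | g • P = P'}.encard ≤ N) : AcylDist d := by
  intro ε hε
  obtain ⟨r, hr⟩ := exists_nat_ge ε
  refine ⟨4 * r + 10, by positivity, (4 * r + 3) ^ 2 * (N + 1), by positivity, fun x z hxz => ?_⟩
  rw [← Set.encard_le_coe_iff_finite_ncard_le]
  obtain ⟨U, hU, hUr⟩ := h.exists_mem_between_ncard_eq (i := 2 * r) (x := x) (z := z)
    (by push_cast; linarith)
  obtain ⟨M, hM, hMr⟩ := h.exists_mem_between_ncard_eq (i := 2 * r + 1) (x := x) (z := z)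
    (by push_cast; linarith)
  obtain ⟨U', hU', hUr'⟩ := h.exists_mem_between_ncard_eq (i := 2 * r + 2) (x := x) (z := z)
    (by push_cast; linarith)
  have hMU : M ∈ between D K U U' := h.projection.mem_between_right
    (h.projection.mem_between_of_ncard_lt hM hU' (by omega))
    (h.projection.mem_between_of_ncard_lt hU hM (by omega))
  have hmiddle : ∀ W ∈ between D K (x • y₀) (z • y₀), 2 * r ≤ (between D K (x • y₀) W).ncard →
      (between D K (x • y₀) W).ncard ≤ 2 * r + 2 → ∀ g, d x (g * x) ≤ ε ∧ d z (g * z) ≤ ε →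
      g⁻¹ • W ∈ between D K (x • y₀) (z • y₀) ∧
        (between D K (x • y₀) (g⁻¹ • W)).ncard < 4 * r + 3 := by
    rintro W hW hle hge g ⟨hgx, hgz⟩
    have hsplit : ((between D K (x • y₀) (z • y₀)).ncard : ℝ) ≤
        (between D K (x • y₀) W).ncard + 1 + (between D K W (z • y₀)).ncard := by
      exact_mod_cast h.projection.ncard_between_le_add hW
    rify at hle hge ⊢
    exact ⟨h.inv_smul_mem_between hW (by linarith) (by linarith [h.dist_le_ncard_add_one x z]),
      by linarith [h.ncard_between_inv_smul_le (x := x) (g := g) W]⟩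
  exact h.encard_le_of_inv_smul_mem_between
    (fun P P' V hV => (htransporter P P' V hV).trans (by exact_mod_cast N.le_succ)) hMU
    (fun g => hmiddle U hU (by omega) (by omega) g)
    (fun g => hmiddle U' hU' (by omega) (by omega) g)

end ProjectionCayleyGraph

end Acylindricity

/-! ### Topological amenability -/

section OrbitMeasure
variable {X : Type*} [MulAction G X]

/-- A chosen representative of the orbit of `P`. -/
def orbitRep (G : Type*) [Group G] {X : Type*} [MulAction G X] (P : X) : X :=
  (Quotient.mk (MulAction.orbitRel G X) P).out

/-- The set of group elements moving the chosen representative of the orbit of `P` to `P`. -/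
def repTransporter (G : Type*) [Group G] {X : Type*} [MulAction G X] (P : X) : Set G :=
  {g | g • orbitRep G P = P}

/-- The uniform probability measure on `repTransporter G P` (when this set is finite), as a
function on `G`. The assignment `P ↦ orbitMeasure G P` is equivariant. -/
def orbitMeasure (G : Type*) [Group G] {X : Type*} [MulAction G X] (P : X) : G → ℝ :=
  (repTransporter G P).indicator fun _ => ((repTransporter G P).ncard : ℝ)⁻¹

lemma orbitRep_smul (g : G) (P : X) : orbitRep G (g • P) = orbitRep G P :=
  congrArg Quotient.out (Quotient.sound (MulAction.orbitRel_apply.2 ⟨g, rfl⟩))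

lemma repTransporter_nonempty (P : X) : (repTransporter G P).Nonempty :=
  MulAction.orbitRel_apply.1 ((MulAction.orbitRel G X).symm (Quotient.mk_out P))

lemma repTransporter_smul (g : G) (P : X) :
    repTransporter G (g • P) = (g⁻¹ * ·) ⁻¹' repTransporter G P := by
  ext k
  simp only [repTransporter, orbitRep_smul, Set.mem_preimage, Set.mem_ofPred_eq, mul_smul,
    inv_smul_eq_iff]

lemma orbitMeasure_smul (g k : G) (P : X) :
    orbitMeasure G (g • P) k = orbitMeasure G P (g⁻¹ * k) := by
  have hncard : (repTransporter G (g • P)).ncard = (repTransporter G P).ncard := by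
    rw [repTransporter_smul]
    exact Set.ncard_preimage_of_injective_subset_range (mul_right_injective g⁻¹)
      fun x _ => ⟨g * x, inv_mul_cancel_left g x⟩
  rw [orbitMeasure, hncard, repTransporter_smul]
  rfl

lemma orbitMeasure_nonneg (P : X) (g : G) : 0 ≤ orbitMeasure G P g :=
  Set.indicator_nonneg (fun _ _ => by positivity) g

lemma hasSum_orbitMeasure {P : X} (hP : (repTransporter G P).Finite) :
    HasSum (orbitMeasure G P) 1 := by
  have hpos := (Set.ncard_pos hP).2 (repTransporter_nonempty P)
  have hsum : HasSum (orbitMeasure G P) (∑ g ∈ hP.toFinset, orbitMeasure G P g) :=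
    hasSum_sum_of_ne_finset_zero fun g hg => Set.indicator_of_notMem (by simpa using hg) _
  have hconst : ∀ g ∈ hP.toFinset, orbitMeasure G P g = ((repTransporter G P).ncard : ℝ)⁻¹ :=
    fun g hg => Set.indicator_of_mem (hP.mem_toFinset.1 hg) _
  rwa [Finset.sum_congr rfl hconst, Finset.sum_const, ← Set.ncard_eq_toFinset_card _ hP,
    nsmul_eq_mul, mul_inv_cancel₀ (by positivity)] at hsum

end OrbitMeasure

section Cesaro
variable {ι : Type*}

lemma l1dist_le_of_le {f g c : ι → ℝ} {a b : ℝ} (hf : HasSum f a) (hg : HasSum g a)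
    (hc : HasSum c b) (hcf : c ≤ f) (hcg : c ≤ g) : l1dist f g ≤ 2 * (a - b) := by
  have hsum := (hf.sub hc).add (hg.sub hc)
  have hle : ∀ x, |f x - g x| ≤ (f x - c x) + (g x - c x) := fun x =>
    abs_le.2 ⟨by linarith [hcf x, hcg x], by linarith [hcf x, hcg x]⟩
  calc l1dist f g ≤ ∑' x, ((f x - c x) + (g x - c x)) :=
        (Summable.of_nonneg_of_le (fun _ => abs_nonneg _) hle hsum.summable).tsum_le_tsum hle
          hsum.summable
    _ = 2 * (a - b) := by rw [hsum.tsum_eq]; ring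

/-- The average of the first `n` functions of a sequence. -/
def cesaroMean (n : ℕ) (u : ℕ → ι → ℝ) (x : ι) : ℝ := (n : ℝ)⁻¹ * ∑ i ∈ Finset.range n, u i x

lemma cesaroMean_congr {n : ℕ} {u v : ℕ → ι → ℝ} (huv : ∀ i < n, u i = v i) :
    cesaroMean n u = cesaroMean n v := funext fun x => by
  have hsum := Finset.sum_congr rfl fun i hi => congrFun (huv i (Finset.mem_range.1 hi)) x
  rw [cesaroMean, cesaroMean, hsum]

lemma hasSum_cesaroMean {n : ℕ} (hn : n ≠ 0) {u : ℕ → ι → ℝ} (hu : ∀ i, HasSum (u i) 1) :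
    HasSum (cesaroMean n u) 1 := by
  have hsum := (hasSum_sum (s := Finset.range n) fun i _ => hu i).mul_left (n : ℝ)⁻¹
  rwa [Finset.sum_const, Finset.card_range, nsmul_eq_mul, mul_one,
    inv_mul_cancel₀ (Nat.cast_ne_zero.2 hn)] at hsum

lemma sum_range_add_le {u : ℕ → ℝ} (hu : 0 ≤ u) {i₀ m n : ℕ} (hn : i₀ + m ≤ n) :
    ∑ k ∈ Finset.range m, u (i₀ + k) ≤ ∑ i ∈ Finset.range n, u i := by
  obtain ⟨l, rfl⟩ := Nat.exists_eq_add_of_le hn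
  rw [Finset.sum_range_add, Finset.sum_range_add]
  linarith [Finset.sum_nonneg fun i (_ : i ∈ Finset.range i₀) => hu i,
    Finset.sum_nonneg fun i (_ : i ∈ Finset.range l) => hu (i₀ + m + i)]

lemma l1dist_cesaroMean_le {n m i₀ j₀ : ℕ} (hmn : m ≤ n) (hi₀ : i₀ ≤ m) (hj₀ : j₀ ≤ m)
    {u v : ℕ → ι → ℝ} (hu : ∀ i, 0 ≤ u i) (hv : ∀ i, 0 ≤ v i) (husum : ∀ i, HasSum (u i) 1)
    (hvsum : ∀ i, HasSum (v i) 1) (huv : ∀ k, u (i₀ + k) = v (j₀ + k)) :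
    l1dist (cesaroMean n u) (cesaroMean n v) ≤ 2 * m / n := by
  rcases eq_or_ne n 0 with rfl | hn
  · simp [cesaroMean, l1dist]
  have hcommon := (hasSum_sum (s := Finset.range (n - m)) fun k _ => husum (i₀ + k)).mul_left
    (n : ℝ)⁻¹
  refine (l1dist_le_of_le (hasSum_cesaroMean hn husum) (hasSum_cesaroMean hn hvsum) hcommon
    (fun x => ?_) (fun x => ?_)).trans_eq ?_
  · exact mul_le_mul_of_nonneg_left (sum_range_add_le (u := fun i => u i x) (fun i => hu i x)
      (by omega)) (by positivity)
  · simp only [huv]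
    exact mul_le_mul_of_nonneg_left (sum_range_add_le (u := fun i => v i x) (fun i => hv i x)
      (by omega)) (by positivity)
  · simp only [Finset.sum_const, Finset.card_range, nsmul_eq_mul, mul_one, Nat.cast_sub hmn]
    field_simp
    ring

end Cesaro

section Amenability
variable {𝒴 : Type*} [MulAction G 𝒴] {d : G → G → ℝ} {D : 𝒴 → 𝒴 → 𝒴 → ℝ} {θ K : ℝ} {y₀ : 𝒴}

/-- The probability measure on `G` attached equivariantly to the `i`-th and the `(i + 2)`-nd
element of the ray from `o` to `ξ`; the pair has finite stabilizer as there is an element between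
them. -/
def rayMeasure (h : ProjectionCayleyGraph d D θ K y₀) (o : G) (ξ : Bdry d) (i : ℕ) : G → ℝ :=
  orbitMeasure G (rayVertex h.toProjectionGraph o ξ i, rayVertex h.toProjectionGraph o ξ (i + 2))

lemma rayMeasure_nonneg (h : ProjectionCayleyGraph d D θ K y₀) (o : G) (ξ : Bdry d) (i : ℕ) :
    0 ≤ rayMeasure h o ξ i :=
  fun g => orbitMeasure_nonneg _ g

namespace ProjectionCayleyGraph

lemma rayVertex_of_bAct (h : ProjectionCayleyGraph d D θ K y₀) {g : G} {ξ η : Bdry d}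
    (hg : bAct d g ξ η) (o : G) (i : ℕ) :
    rayVertex h.toProjectionGraph o η i = g • rayVertex h.toProjectionGraph (g⁻¹ * o) ξ i := by
  obtain ⟨x, hx, rfl, rfl⟩ := hg
  set V := rayVertex h.toProjectionGraph (g⁻¹ * o) (Quot.mk (BRel d) x) i
  obtain ⟨N, hN⟩ := h.eventually_mem_between (rayVertex_mem h.toProjectionGraph (g⁻¹ * o) _ i)
  have hbase : o • y₀ = g • (g⁻¹ * o) • y₀ := by rw [smul_smul, mul_inv_cancel_left]
  have hmem : g • V ∈ betweenBdry (· • y₀) D K (o • y₀)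
      (Quot.mk (BRel d) ⟨fun n => g * x.1 n, hx⟩) :=
    ⟨_, rfl, N, fun n hn => by
      simpa only [hbase, mul_smul g] using (smul_mem_between_iff h.dist_smul g).2 (hN n hn)⟩
  rw [eq_rayVertex h.toProjectionGraph hmem, hbase, ncard_between_smul h.dist_smul,
    ncard_between_rayVertex h.toProjectionGraph (g⁻¹ * o)]

lemma rayMeasure_of_bAct (h : ProjectionCayleyGraph d D θ K y₀) {g : G} {ξ η : Bdry d}
    (hg : bAct d g ξ η) (o k : G) (i : ℕ) :
    rayMeasure h o η i k = rayMeasure h (g⁻¹ * o) ξ i (g⁻¹ * k) := by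
  rw [rayMeasure, h.rayVertex_of_bAct hg, h.rayVertex_of_bAct hg, ← Prod.smul_mk,
    orbitMeasure_smul, rayMeasure]

lemma hasSum_rayMeasure (h : ProjectionCayleyGraph d D θ K y₀)
    (htransporter : ∀ (P P' : 𝒴 × 𝒴) (V : 𝒴), V ∈ between D K P.1 P.2 →
      {g : G | g • P = P'}.Finite) (o : G) (ξ : Bdry d) (i : ℕ) :
    HasSum (rayMeasure h o ξ i) 1 := by
  set P := (rayVertex h.toProjectionGraph o ξ i, rayVertex h.toProjectionGraph o ξ (i + 2))
  obtain ⟨k, hk : k • orbitRep G P = P⟩ := repTransporter_nonempty (G := G) P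
  refine hasSum_orbitMeasure
    (htransporter _ _ (k⁻¹ • rayVertex h.toProjectionGraph o ξ (i + 1)) ?_)
  rw [← inv_smul_eq_iff.2 hk.symm]
  exact (smul_mem_between_iff h.dist_smul k⁻¹).2
    (rayVertex_succ_mem_between h.toProjectionGraph o ξ i)

lemma l1dist_cesaroMean_rayMeasure_le (h : ProjectionCayleyGraph d D θ K y₀)
    (htransporter : ∀ (P P' : 𝒴 × 𝒴) (V : 𝒴), V ∈ between D K P.1 P.2 →
      {g : G | g • P = P'}.Finite) {o o' : G} {c n : ℕ} (ho : d o o' ≤ c) (hn : 4 * c ≤ n)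
    (ξ : Bdry d) :
    l1dist (cesaroMean n (rayMeasure h o ξ)) (cesaroMean n (rayMeasure h o' ξ)) ≤ 8 * c / n := by
  obtain ⟨j₀, hj₀, htail⟩ := exists_rayVertex_add_eq h.toProjectionGraph ho ξ
  have heq : ∀ k, rayMeasure h o ξ (2 * c + k) = rayMeasure h o' ξ (j₀ + k) := fun k => by
    simp only [rayMeasure, add_assoc, htail]
  refine (l1dist_cesaroMean_le hn (by omega) hj₀ (rayMeasure_nonneg h o ξ)
    (rayMeasure_nonneg h o' ξ) (h.hasSum_rayMeasure htransporter o ξ)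
    (h.hasSum_rayMeasure htransporter o' ξ) heq).trans_eq ?_
  push_cast
  ring

lemma cesaroMean_rayMeasure_of_bAct (h : ProjectionCayleyGraph d D θ K y₀) {g : G}
    {ξ η : Bdry d} (hg : bAct d g ξ η) (n : ℕ) :
    l1dist (cesaroMean n (rayMeasure h 1 η)) (fun k => cesaroMean n (rayMeasure h 1 ξ) (g⁻¹ * k)) =
      l1dist (cesaroMean n (rayMeasure h g⁻¹ ξ)) (cesaroMean n (rayMeasure h 1 ξ)) := by
  simp only [l1dist, cesaroMean, h.rayMeasure_of_bAct hg, mul_one]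
  exact (Equiv.mulLeft g⁻¹).tsum_eq fun k =>
    |cesaroMean n (rayMeasure h g⁻¹ ξ) k - cesaroMean n (rayMeasure h 1 ξ) k|

lemma exists_isOpen_cesaroMean_rayMeasure_eq (h : ProjectionCayleyGraph d D θ K y₀) (o : G)
    (ξ : Bdry d) (n : ℕ) : ∃ U, @IsOpen _ (bdryTop d) U ∧ ξ ∈ U ∧
      ∀ η ∈ U, cesaroMean n (rayMeasure h o η) = cesaroMean n (rayMeasure h o ξ) := by
  refine ⟨{η | (((n + 2 : ℕ) + 5 : ℝ) : EReal) < bgp d o ξ η},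
    TopologicalSpace.isOpen_generateFrom_of_mem ⟨ξ, o, _, rfl⟩, lt_bgp_self o ξ _,
    fun η hη => cesaroMean_congr fun i hi => ?_⟩
  have heq := fun j hj => rayVertex_eq_of_lt_bgp h.toProjectionGraph (i := j) hη hj
  rw [rayMeasure, rayMeasure, heq i (by omega), heq (i + 2) (by omega)]

theorem topAmenable (h : ProjectionCayleyGraph d D θ K y₀)
    (htransporter : ∀ (P P' : 𝒴 × 𝒴) (V : 𝒴), V ∈ between D K P.1 P.2 →
      {g : G | g • P = P'}.Finite) : TopAmenable d := by
  intro F _ _ ε hε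
  obtain ⟨c, hc⟩ : ∃ c : ℕ, ∀ g ∈ F, d g⁻¹ 1 ≤ c := by
    obtain ⟨C, hC⟩ := (F.image fun g => d g⁻¹ 1).bddAbove
    obtain ⟨c, hc⟩ := exists_nat_ge C
    exact ⟨c, fun g hg => (hC (Finset.mem_coe.2 (Finset.mem_image_of_mem _ hg))).trans hc⟩
  obtain ⟨n, hn⟩ := exists_nat_gt (max (4 * c) (8 * c / ε) : ℝ)
  obtain ⟨hcn, hεn⟩ := max_lt_iff.1 hn
  have hn0 : (0 : ℝ) < n := (by positivity : (0 : ℝ) ≤ 4 * c).trans_lt hcn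
  refine ⟨fun ξ => cesaroMean n (rayMeasure h 1 ξ), fun ξ => ⟨fun g => ?_, ?_⟩, ?_, ?_⟩
  · exact mul_nonneg (by positivity) (Finset.sum_nonneg fun i _ => orbitMeasure_nonneg _ g)
  · exact (hasSum_cesaroMean (by exact_mod_cast hn0.ne')
      (h.hasSum_rayMeasure htransporter 1 ξ)).tsum_eq
  · intro ξ ε' hε'
    obtain ⟨U, hU, hξU, heq⟩ := h.exists_isOpen_cesaroMean_rayMeasure_eq 1 ξ n
    exact ⟨U, hU, hξU, fun η hη => by simpa [heq η hη, l1dist] using hε'⟩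
  · intro g hg ξ _ η hη
    rw [h.cesaroMean_rayMeasure_of_bAct hη]
    refine (h.l1dist_cesaroMean_rayMeasure_le htransporter (hc g hg) ?_ ξ).trans_lt ?_
    · exact_mod_cast hcn.le
    · rwa [div_lt_comm₀ hn0 hε]

end ProjectionCayleyGraph

end Amenability

section Criterion
variable {𝒴 : Type*} [MulAction G 𝒴] {D : 𝒴 → 𝒴 → 𝒴 → ℝ} {θ : ℝ}

theorem WeakProjection.exists_wdist_amenable [MulAction.IsPretransitive G 𝒴]
    (h : WeakProjection D θ) (hD : ∀ (g : G) Y X Z, D (g • Y) (g • X) (g • Z) = D Y X Z)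
    {K₀ : ℝ} {N : ℕ} (htransporter : ∀ (P P' : 𝒴 × 𝒴) (V : 𝒴), V ∈ between D K₀ P.1 P.2 →
      {g : G | g • P = P'}.encard ≤ N) {y₀ : 𝒴}
    (hnonelem : ∀ K, ∃ (Y₁ : 𝒴) (a b : G), a • y₀ = y₀ ∧ b • Y₁ = Y₁ ∧
      y₀ ∈ between D K Y₁ (a • Y₁) ∧ y₀ ∈ between D K Y₁ (a • a • Y₁) ∧
      Y₁ ∈ between D K y₀ (b • y₀)) :
    ∃ S : Set G, Subgroup.closure S = ⊤ ∧ IsHyperbolic (wdist S) ∧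
      (∃ a b c : Bdry (wdist S), a ≠ b ∧ a ≠ c ∧ b ≠ c) ∧ AcylDist (wdist S) ∧
      TopAmenable (wdist S) := by
  set K := max (2 * (8 * θ)) (K₀ + 4 * θ)
  have hmod : ThresholdProjection (modifiedDist D θ) (8 * θ) K :=
    { h.strongProjection_modifiedDist with two_mul_le := le_max_left _ _ }
  have hmodD := modifiedDist_smul (θ := θ) hD
  have hgraph := projectionCayleyGraph_wdist hmod hmodD y₀
  have htransporter' : ∀ (P P' : 𝒴 × 𝒴) (V : 𝒴), V ∈ between (modifiedDist D θ) K P.1 P.2 →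
      {g : G | g • P = P'}.encard ≤ N := fun P P' V hV =>
    htransporter P P' V (h.between_modifiedDist_subset (le_max_right _ _) _ _ hV)
  obtain ⟨Y₁, a, b, ha, hb, hy, hy', hY⟩ := hnonelem K
  exact ⟨neighborGenerators G (modifiedDist D θ) K y₀, closure_neighborGenerators hmod hmodD y₀,
    ⟨8, by norm_num, hgraph.hyperbolicWith⟩,
    hgraph.three_bdry_points ha hb (h.between_subset_modifiedDist K _ _ hy)
      (h.between_subset_modifiedDist K _ _ hy') (h.between_subset_modifiedDist K _ _ hY),
    hgraph.acylDist htransporter', hgraph.topAmenable fun P P' V hV =>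
      Set.finite_of_encard_le_coe (htransporter' P P' V hV)⟩

end Criterion

/-! ### Loxodromic elements -/

lemma infinite_of_forall_exists_le {φ : α → ℝ} (hφ : ∀ M, ∃ x, M ≤ φ x) : Infinite α := by
  rw [← not_finite_iff_infinite]
  intro _
  obtain ⟨M, hM⟩ := (Set.finite_range φ).bddAbove
  obtain ⟨x, hx⟩ := hφ (M + 1)
  linarith [hM ⟨x, rfl⟩]

/-- A left-invariant graph metric on a group that is `δ`-hyperbolic. -/
structure HyperbolicWordMetric (d : G → G → ℝ) (δ : ℝ) : Prop extends IsWordMetric d where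
  hyperbolicWith : HyperbolicWith d δ

namespace IsWordMetric
variable {d : G → G → ℝ}

lemma dist_eq_norm (hd : IsWordMetric d) (x y : G) : d x y = d 1 (x⁻¹ * y) := by
  rw [← hd.mul_left x⁻¹ x y, inv_mul_cancel]

lemma norm_inv (hd : IsWordMetric d) (x : G) : d 1 x⁻¹ = d 1 x := by
  rw [← hd.mul_left x 1 x⁻¹, mul_inv_cancel, mul_one, hd.comm]

lemma dist_mul_right (hd : IsWordMetric d) (g x : G) : d g (g * x) = d 1 x := by
  rw [hd.dist_eq_norm, inv_mul_cancel_left]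

lemma norm_mul_le (hd : IsWordMetric d) (g x : G) : d 1 (g * x) ≤ d 1 g + d 1 x := by
  linarith [hd.triangle 1 g (g * x), hd.dist_mul_right g x]

lemma norm_le_norm_mul (hd : IsWordMetric d) (g x : G) : d 1 x ≤ d 1 g + d 1 (g * x) := by
  linarith [hd.triangle g 1 (g * x), hd.dist_mul_right g x, hd.comm g 1]

lemma dist_inv_right (hd : IsWordMetric d) (x y : G) : d x y⁻¹ = d 1 (y * x) := by
  rw [hd.comm, hd.dist_eq_norm, inv_inv]

end IsWordMetric

namespace HyperbolicWordMetric
variable {d : G → G → ℝ} {δ : ℝ}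

lemma delta_nonneg (h : HyperbolicWordMetric d δ) : 0 ≤ δ := by
  simpa [gprod, h.self] using h.hyperbolicWith 1 1 1 1

lemma four_point (h : HyperbolicWordMetric d δ) (x y z w : G) :
    d x z + d y w ≤ d x y + d z w + 2 * δ ∨ d x z + d y w ≤ d y z + d x w + 2 * δ :=
  h.hyperbolicWith.four_point x y z w

/- If no element is loxodromic, then an element `g` which is short compared with `z`, where `z`
lies on a geodesic from `1` to a much longer `x`, moves `z` a bounded amount: first `g` cannot move
`x` by much more than `|x|`, then `g` almost preserves the geodesic near `z`, and finally the drift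
`|gz| - |z|` along the geodesic is bounded because `z⁻¹gz` is not loxodromic. -/

lemma displacement_le_of_norm_sq_lt (h : HyperbolicWordMetric d δ) {C : ℝ}
    (hC : ∀ f, d 1 (f * f) < d 1 f + C) (g x : G) :
    d (g * x) x ≤ d 1 x + 2 * d 1 g + C + 2 * δ := by
  have hgx : d (g * x) x⁻¹ ≤ d 1 (g * x) + C + d 1 g := by
    have hsq := hC (g * x)
    have hinv : d (g * x)⁻¹ x⁻¹ = d 1 g := by
      rw [h.dist_inv_right, ← h.norm_inv]
      simp
    linarith [h.triangle (g * x) (g * x)⁻¹ x⁻¹, h.dist_inv_right (g * x) (g * x)]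
  have hx : d x⁻¹ x < d 1 x + C := by
    rw [h.comm, h.dist_inv_right]
    exact hC x
  have hfour := h.four_point (g * x) x⁻¹ x 1
  rw [h.comm x⁻¹ 1, h.norm_inv, h.comm x 1, h.comm (g * x) 1] at hfour
  rcases hfour with hfour | hfour <;> linarith [h.norm_mul_le g x, h.nonneg 1 g]

lemma displacement_le_drift (h : HyperbolicWordMetric d δ) {g x z : G}
    (hz : d 1 z + d z x = d 1 x) (hgz : 2 * d 1 g + 4 * δ < d 1 z)
    (hgx : d (g * x) x + 2 * d 1 z + 3 * d 1 g + 2 * δ < 2 * d 1 x) :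
    d z (g * z) ≤ |d 1 (g * z) - d 1 z| + 6 * δ := by
  have hδ := h.delta_nonneg
  have hg := h.nonneg 1 g
  have hzx := h.mul_left g z x
  have hgx_mul := h.norm_le_norm_mul g x
  have hgz_mul := h.norm_le_norm_mul g z
  have hgz_le := h.norm_mul_le g z
  have hlower : d 1 (g * z) + d z x ≤ d 1 (g * x) + 2 * δ := by
    have hfour := h.four_point g 1 (g * x) (g * z)
    rw [h.dist_mul_right, h.dist_mul_right, h.comm g 1, h.comm (g * x) (g * z), hzx] at hfour
    rcases hfour with hfour | hfour <;> linarith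
  have hupper : d 1 (g * z) + d (g * z) x ≤ d 1 x + 4 * δ := by
    have hfour := h.four_point 1 x (g * x) (g * z)
    rw [h.comm (g * x) (g * z), hzx, h.comm x (g * z), h.comm x (g * x)] at hfour
    have htri := h.triangle 1 (g * z) x
    rcases hfour with hfour | hfour <;> linarith
  have hfour := h.four_point 1 z x (g * z)
  rw [h.comm x (g * z)] at hfour
  rcases hfour with hfour | hfour
  · linarith [neg_abs_le (d 1 (g * z) - d 1 z)]
  · linarith [le_abs_self (d 1 (g * z) - d 1 z)]

lemma two_mul_drift_le (h : HyperbolicWordMetric d δ) {g z : G}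
    (hgz : 2 * d 1 g + 4 * δ < d 1 z) (hdispl : d z (g * z) ≤ d 1 g + 6 * δ) :
    2 * |d 1 (g * z) - d 1 z| ≤ d z (g * (g * z)) + 2 * δ := by
  have hgz_mul := h.norm_le_norm_mul g z
  have hggz_mul := h.norm_le_norm_mul g (g * z)
  have hconvex : d 1 (g * (g * z)) + d 1 z ≤ 2 * d 1 (g * z) + 2 * δ := by
    have hfour := h.four_point (g * z) z g⁻¹ 1
    rw [h.dist_inv_right, h.dist_inv_right, h.comm z 1, h.comm (g * z) z, h.comm g⁻¹ 1,
      h.norm_inv, h.comm (g * z) 1] at hfour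
    rcases hfour with hfour | hfour <;> linarith
  have hconcave : 2 * d 1 (g * z) ≤ d 1 (g * (g * z)) + d 1 z + 2 * δ := by
    have hfour := h.four_point (g * z) z 1 g⁻¹
    rw [h.dist_inv_right z g, h.dist_inv_right (g * z) g, h.comm z 1, h.comm (g * z) z,
      h.norm_inv, h.comm (g * z) 1] at hfour
    rcases hfour with hfour | hfour <;> linarith
  have htri := h.triangle 1 z (g * (g * z))
  have htri' := h.triangle 1 (g * (g * z)) z
  rw [h.comm (g * (g * z)) z] at htri'
  rcases abs_cases (d 1 (g * z) - d 1 z) with ⟨heq, -⟩ | ⟨heq, -⟩ <;> linarith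

lemma displacement_le_of_on_geodesic (h : HyperbolicWordMetric d δ) {C : ℝ}
    (hC : ∀ f, d 1 (f * f) < d 1 f + C) {g x z : G} (hz : d 1 z + d z x = d 1 x)
    (hgz : 2 * d 1 g + 4 * δ < d 1 z)
    (hzx : 2 * d 1 z + 5 * d 1 g + C + 4 * δ < d 1 x) : d z (g * z) ≤ 14 * δ + C := by
  have hdispl : d z (g * z) ≤ |d 1 (g * z) - d 1 z| + 6 * δ :=
    h.displacement_le_drift hz hgz (by linarith [h.displacement_le_of_norm_sq_lt hC g x])
  have hdrift : |d 1 (g * z) - d 1 z| ≤ d 1 g :=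
    abs_le.2 ⟨by linarith [h.norm_le_norm_mul g z], by linarith [h.norm_mul_le g z]⟩
  have hconj : d z (g * (g * z)) < d z (g * z) + C := by
    have hsq := hC (z⁻¹ * (g * z))
    rwa [← h.dist_eq_norm, show z⁻¹ * (g * z) * (z⁻¹ * (g * z)) = z⁻¹ * (g * (g * z)) by group,
      ← h.dist_eq_norm] at hsq
  linarith [h.two_mul_drift_le hgz (by linarith)]

lemma exists_norm_add_le_norm_sq (h : HyperbolicWordMetric d δ) (hac : AcylDist d)
    (hunbdd : ∀ M, ∃ x, M ≤ d 1 x) (C : ℝ) : ∃ f, d 1 f + C ≤ d 1 (f * f) := by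
  wlog hCpos : 0 < C generalizing C
  · obtain ⟨f, hf⟩ := this 1 one_pos
    exact ⟨f, by linarith⟩
  by_contra! hC
  obtain ⟨R, -, N, -, hac⟩ := hac (14 * δ + C) (by linarith [h.delta_nonneg])
  have := infinite_of_forall_exists_le hunbdd
  obtain ⟨F, hF⟩ := Infinite.exists_subset_card_eq G (N + 1)
  obtain ⟨M, hM⟩ : ∃ M : ℝ, ∀ g ∈ F, d 1 g ≤ M :=
    let ⟨M, hM⟩ := (F.finite_toSet.image (d 1)).bddAbove
    ⟨M, fun g hg => hM ⟨g, hg, rfl⟩⟩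
  obtain ⟨m, hm⟩ := exists_nat_gt (2 * M + 4 * δ)
  obtain ⟨r, hr⟩ := exists_nat_gt R
  obtain ⟨x, hx⟩ := hunbdd (2 * (m + r + m) + 5 * |M| + C + 4 * δ + 1)
  have hMδ : M ≤ |M| ∧ 0 ≤ |M| ∧ 0 ≤ δ := ⟨le_abs_self M, abs_nonneg M, h.delta_nonneg⟩
  obtain ⟨z, hz, hzx⟩ := h.exists_on_geodesic (x := 1) (y := x) (k := m) (by linarith)
  obtain ⟨z', hz', hzx'⟩ := h.exists_on_geodesic (x := 1) (y := x) (k := m + r)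
    (by push_cast; linarith)
  push_cast at hz' hzx'
  obtain ⟨hfin, hcard⟩ := hac z z' (by linarith [h.triangle 1 z z'])
  have hsub : (F : Set G) ⊆
      {g : G | d z (g * z) ≤ 14 * δ + C ∧ d z' (g * z') ≤ 14 * δ + C} := fun g hg =>
    ⟨h.displacement_le_of_on_geodesic hC (x := x) (by linarith)
        (by linarith [hM g hg]) (by linarith [hM g hg]),
      h.displacement_le_of_on_geodesic hC (x := x) (by linarith)
        (by linarith [hM g hg]) (by linarith [hM g hg])⟩
  have hle := (Set.ncard_le_ncard hsub hfin).trans hcard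
  rw [Set.ncard_coe_finset, hF] at hle
  omega

end HyperbolicWordMetric

/-! ### The axis of a loxodromic element -/

/-- The orbit `n ↦ f ^ n` of a loxodromic element `f` of a group with a `δ`-hyperbolic word
metric, with explicit constants: norms of powers are strictly increasing, and additive up
to an error `κ`. -/
structure LoxodromicAxis (d : G → G → ℝ) (δ : ℝ) (f : G) (κ : ℝ) : Prop
    extends HyperbolicWordMetric d δ where
  norm_pow_add_one_le : ∀ n : ℕ, d 1 (f ^ n) + 1 ≤ d 1 (f ^ (n + 1))
  norm_pow_add_norm_pow_le : ∀ i j : ℕ, d 1 (f ^ i) + d 1 (f ^ j) ≤ d 1 (f ^ (i + j)) + κ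

namespace IsWordMetric
variable {d : G → G → ℝ}

lemma dist_pow_add (hd : IsWordMetric d) (f : G) (i n : ℕ) :
    d (f ^ i) (f ^ (i + n)) = d 1 (f ^ n) := by
  rw [pow_add, hd.dist_mul_right]

lemma norm_zpow (hd : IsWordMetric d) (f : G) (n : ℤ) : d 1 (f ^ n) = d 1 (f ^ n.natAbs) := by
  obtain hn | hn := Int.natAbs_eq n
  · rw [← zpow_natCast, ← hn]
  · rw [← zpow_natCast, ← hd.norm_inv (f ^ (n.natAbs : ℤ)), ← zpow_neg, ← hn]

lemma dist_zpow_zpow (hd : IsWordMetric d) (f : G) (i j : ℤ) :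
    d (f ^ i) (f ^ j) = d 1 (f ^ (i - j).natAbs) := by
  rw [hd.comm, hd.dist_eq_norm, ← zpow_neg, ← zpow_add, neg_add_eq_sub, hd.norm_zpow,
    ← Int.natAbs_neg, neg_sub]

end IsWordMetric

namespace HyperbolicWordMetric
variable {d : G → G → ℝ} {δ : ℝ}

lemma norm_pow_add_le_norm_pow_succ (h : HyperbolicWordMetric d δ) {f : G}
    (hf : d 1 f + 2 * δ < d 1 (f * f)) (n : ℕ) :
    d 1 (f ^ n) + (d 1 (f * f) - d 1 f - 2 * δ) ≤ d 1 (f ^ (n + 1)) := by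
  induction n with
  | zero =>
    simp only [pow_zero, zero_add, pow_one, h.self]
    linarith [h.norm_mul_le f f, h.delta_nonneg]
  | succ n ih =>
    have hfour := h.four_point 1 (f ^ 1) (f ^ 2) (f ^ (n + 2))
    rw [h.dist_pow_add f 1 1, show n + 2 = 1 + (n + 1) by ring, h.dist_pow_add f 1 (n + 1),
      show 1 + (n + 1) = 2 + n by ring, h.dist_pow_add f 2 n, pow_one, pow_two] at hfour
    rw [show n + 1 + 1 = 2 + n by ring]
    rcases hfour with hfour | hfour <;> linarith

lemma exists_loxodromicAxis (h : HyperbolicWordMetric d δ) {f : G}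
    (hf : d 1 f + (4 * δ + 1) ≤ d 1 (f * f)) : ∃ κ, LoxodromicAxis d δ f κ := by
  have hδ := h.delta_nonneg
  have hgrow := h.norm_pow_add_le_norm_pow_succ (f := f) (by linarith)
  refine ⟨2 * d 1 f - d 1 (f * f) + 4 * δ, h, fun n => by linarith [hgrow n], fun i j => ?_⟩
  cases j with
  | zero =>
    rw [pow_zero, h.self, add_zero, add_zero]
    linarith [h.norm_mul_le f f]
  | succ j =>
    have hfour := h.four_point 1 (f ^ i) (f ^ (i + 1)) (f ^ (i + (j + 1)))
    rw [h.dist_pow_add f i (j + 1), h.dist_pow_add f i 1, show i + (j + 1) = i + 1 + j by ring,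
      h.dist_pow_add f (i + 1) j, pow_one] at hfour
    rw [show i + (j + 1) = i + 1 + j by ring]
    rcases hfour with hfour | hfour <;> linarith [hgrow i, hgrow j]

lemma dist_add_dist_le_of_dist_le (h : HyperbolicWordMetric d δ) {a a' b g : G} {c r : ℝ}
    (hab : d a g + d g b ≤ d a b + c) (haa' : d a a' ≤ r)
    (hfar : 2 * r + c + 2 * δ < 2 * d a g) : d a' g + d g b ≤ d a' b + c + 2 * δ := by
  have htri := h.triangle a a' g
  rcases h.four_point a a' b g with hfour | hfour <;> linarith [h.comm b g]

end HyperbolicWordMetric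

namespace LoxodromicAxis
variable {d : G → G → ℝ} {δ κ : ℝ} {f : G}

lemma kappa_nonneg (h : LoxodromicAxis d δ f κ) : 0 ≤ κ := by
  simpa [h.self] using h.norm_pow_add_norm_pow_le 0 0

lemma le_norm_pow (h : LoxodromicAxis d δ f κ) (n : ℕ) : (n : ℝ) ≤ d 1 (f ^ n) := by
  induction n with
  | zero => simp [h.self]
  | succ n ih =>
    push_cast
    linarith [h.norm_pow_add_one_le n]

lemma exists_pow_near (h : LoxodromicAxis d δ f κ) {n : ℕ} {z : G} {c : ℝ}
    (hz : d z 1 + d z (f ^ n) ≤ d 1 (f ^ n) + c) :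
    ∃ k : ℕ, d z (f ^ k) ≤ max (κ + d 1 f) c + 2 * δ := by
  classical
  have hδ := h.delta_nonneg
  have hκ_le := le_max_left (κ + d 1 f) c
  have hc_le := le_max_right (κ + d 1 f) c
  set k := Nat.findGreatest (fun k => d 1 (f ^ k) ≤ d z 1) n
  have hkz : d 1 (f ^ k) ≤ d z 1 := Nat.findGreatest_spec (P := fun k => d 1 (f ^ k) ≤ d z 1)
    n.zero_le (by simpa [h.self] using h.nonneg z 1)
  have hkn : k ≤ n := Nat.findGreatest_le n
  rcases hkn.eq_or_lt with hkn | hkn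
  · rw [hkn] at hkz
    exact ⟨n, by linarith⟩
  · have hzk : d z 1 < d 1 (f ^ (k + 1)) :=
      not_le.1 (Nat.findGreatest_is_greatest k.lt_succ_self hkn)
    have hstep := h.triangle 1 (f ^ k) (f ^ (k + 1))
    obtain ⟨j, hj⟩ := Nat.exists_eq_add_of_le hkn.le
    have hfour := h.four_point 1 z (f ^ n) (f ^ k)
    rw [h.dist_pow_add f k 1, pow_one] at hstep
    rw [h.comm (f ^ n) (f ^ k), h.comm 1 z, hj, h.dist_pow_add] at hfour
    rw [hj] at hz
    refine ⟨k, ?_⟩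
    rcases hfour with hfour | hfour <;> linarith [h.norm_pow_add_norm_pow_le k j]

lemma exists_zpow_near (h : LoxodromicAxis d δ f κ) {i j : ℤ} {z : G} {c : ℝ}
    (hz : d z (f ^ i) + d z (f ^ j) ≤ d (f ^ i) (f ^ j) + c) :
    ∃ k : ℤ, d z (f ^ k) ≤ max (κ + d 1 f) c + 2 * δ := by
  wlog hij : i ≤ j generalizing i j
  · exact this (by linarith [h.comm (f ^ j) (f ^ i)]) (le_of_not_ge hij)
  obtain ⟨n, rfl⟩ := Int.le.dest hij
  have hi (k : ℕ) : d z (f ^ (i + k)) = d ((f ^ i)⁻¹ * z) (f ^ k) := by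
    rw [← h.mul_left (f ^ i)⁻¹, zpow_add, inv_mul_cancel_left, zpow_natCast]
  have hz0 := hi 0
  rw [Nat.cast_zero, add_zero, pow_zero] at hz0
  rw [hz0, hi, zpow_add, h.dist_mul_right, zpow_natCast] at hz
  obtain ⟨k, hk⟩ := h.exists_pow_near hz
  exact ⟨i + k, (hi k).trans_le hk⟩

end LoxodromicAxis

/-! ### The elementary closure -/

/-- The elementary closure of `f`: the elements conjugating some positive power of `f` to itself or
to its inverse. If `f` is loxodromic, it is the stabilizer of the pair of endpoints of its axis. -/
def elementaryClosure (f : G) : Subgroup G where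
  carrier := {g | ∃ m : ℕ, 0 < m ∧ ∃ ε : ℤˣ, SemiconjBy g (f ^ (m : ℤ)) (f ^ (ε * m : ℤ))}
  one_mem' := ⟨1, one_pos, 1, by simp⟩
  mul_mem' := by
    rintro g g' ⟨m, hm, ε, hg⟩ ⟨m', hm', ε', hg'⟩
    refine ⟨m * m', Nat.mul_pos hm hm', ε * ε', ?_⟩
    have hmul := (hg.zpow_right (ε' * m')).mul_left
      (by simpa only [← zpow_mul, mul_left_comm, mul_comm] using hg'.zpow_right m)
    rw [← zpow_mul] at hmul
    rwa [Nat.cast_mul, Units.val_mul, mul_mul_mul_comm]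
  inv_mem' := by
    rintro g ⟨m, hm, ε, hg⟩
    refine ⟨m, hm, ε, ?_⟩
    have hinv := (hg.zpow_right ε).inv_symm_left
    have hε : (ε : ℤ) * m * ε = m := by
      rw [mul_right_comm, ← Units.val_mul, Int.units_mul_self, Units.val_one, one_mul]
    rwa [← zpow_mul, ← zpow_mul, hε, mul_comm (m : ℤ)] at hinv

lemma self_mem_elementaryClosure (f : G) : f ∈ elementaryClosure f :=
  ⟨1, one_pos, 1, by simp [SemiconjBy]⟩

lemma exists_semiconjBy_zpow_of_mem_elementaryClosure {f g : G} (hg : g ∈ elementaryClosure f)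
    (n : ℕ) : ∃ m : ℕ, n ≤ m ∧ ∃ ε : ℤˣ, SemiconjBy g (f ^ (m : ℤ)) (f ^ (ε * m : ℤ)) := by
  obtain ⟨m, hm, ε, hconj⟩ := hg
  refine ⟨m * n, Nat.le_mul_of_pos_left n hm, ε, ?_⟩
  simpa only [← zpow_mul, Nat.cast_mul, mul_assoc] using hconj.zpow_right n

namespace LoxodromicAxis
variable {d : G → G → ℝ} {δ κ : ℝ} {f : G}

lemma exists_zpow_near_of_mem_elementaryClosure (h : LoxodromicAxis d δ f κ) {g : G}
    (hg : g ∈ elementaryClosure f) : ∃ k : ℤ, d g (f ^ k) ≤ κ + d 1 f + 6 * δ := by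
  have hδ := h.delta_nonneg
  have hκ := h.kappa_nonneg
  have hnorm := h.nonneg 1 g
  obtain ⟨n, hn⟩ := exists_nat_gt (2 * d 1 g + κ + 4 * δ)
  obtain ⟨m, hnm, ε, hconj⟩ := exists_semiconjBy_zpow_of_mem_elementaryClosure hg n
  have hm : 2 * d 1 g + κ + 4 * δ < d 1 (f ^ m) :=
    hn.trans_le ((Nat.cast_le.2 hnm).trans (h.le_norm_pow m))
  have hleft : d (g * f ^ (-m : ℤ)) g = d 1 (f ^ m) := by
    rw [h.comm, h.dist_mul_right, h.norm_zpow, Int.natAbs_neg, Int.natAbs_natCast]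
  have hright : d g (g * f ^ (m : ℤ)) = d 1 (f ^ m) := by rw [h.dist_mul_right, zpow_natCast]
  have hgeod : d (g * f ^ (-m : ℤ)) g + d g (g * f ^ (m : ℤ)) ≤
      d (g * f ^ (-m : ℤ)) (g * f ^ (m : ℤ)) + κ := by
    rw [hleft, hright, h.mul_left, h.dist_zpow_zpow,
      show (-m - m : ℤ).natAbs = m + m by omega]
    exact h.norm_pow_add_norm_pow_le m m
  have hleft' : d (g * f ^ (-m : ℤ)) (f ^ (-(ε * m) : ℤ)) ≤ d 1 g := by
    rw [zpow_neg, zpow_neg, hconj.inv_right.eq, h.comm, h.dist_mul_right]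
  have hright' : d (g * f ^ (m : ℤ)) (f ^ (ε * m : ℤ)) ≤ d 1 g := by
    rw [hconj.eq, h.comm, h.dist_mul_right]
  have hgeod' := h.dist_add_dist_le_of_dist_le hgeod hleft' (by linarith)
  rw [add_comm, h.comm _ g, h.comm g, h.comm _ (g * _), add_assoc] at hgeod'
  have hgeod'' := h.dist_add_dist_le_of_dist_le hgeod' hright'
    (by linarith [h.comm g (g * f ^ (m : ℤ))])
  obtain ⟨k, hk⟩ := h.exists_zpow_near (z := g) (c := κ + 4 * δ)
    (by linarith [h.comm g (f ^ (ε * m : ℤ))])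
  refine ⟨k, hk.trans ?_⟩
  linarith [max_le (c := κ + d 1 f + 4 * δ) (by linarith : κ + d 1 f ≤ _)
    (by linarith [h.nonneg 1 f] : κ + 4 * δ ≤ _)]

lemma exists_near_of_on_geodesic (h : LoxodromicAxis d δ f κ) {u v z : G}
    (hu : u ∈ elementaryClosure f) (hv : v ∈ elementaryClosure f) (hz : d u z + d z v = d u v) :
    ∃ w ∈ elementaryClosure f, d z w ≤ 4 * (κ + d 1 f + 6 * δ) + 2 * δ := by
  obtain ⟨i, hi⟩ := h.exists_zpow_near_of_mem_elementaryClosure hu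
  obtain ⟨j, hj⟩ := h.exists_zpow_near_of_mem_elementaryClosure hv
  obtain ⟨k, hk⟩ := h.exists_zpow_near (i := i) (j := j) (z := z)
    (c := 4 * (κ + d 1 f + 6 * δ)) (by
      linarith [h.triangle z u (f ^ i), h.triangle z v (f ^ j), h.triangle u (f ^ i) v,
        h.triangle (f ^ i) (f ^ j) v, h.comm z u, h.comm (f ^ j) v])
  refine ⟨f ^ k, zpow_mem (self_mem_elementaryClosure f) k, hk.trans_eq ?_⟩
  rw [max_eq_right (by linarith [h.kappa_nonneg, h.delta_nonneg, h.nonneg 1 f])]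

end LoxodromicAxis

/-! ### Overlapping translates of the axis -/

lemma mem_elementaryClosure_of_conj_zpow_eq {f g : G} {ε ε' : ℤˣ} {m : ℕ} (hm : 0 < m)
    (hconj : SemiconjBy g (f ^ (ε' * m : ℤ)) (f ^ (ε * m : ℤ))) : g ∈ elementaryClosure f := by
  refine ⟨m, hm, ε * ε', ?_⟩
  have hε : (ε' * m * ε' : ℤ) = m := by
    rw [mul_right_comm, ← Units.val_mul, Int.units_mul_self, Units.val_one, one_mul]
  have hpow := hconj.zpow_right ε'
  rwa [← zpow_mul, ← zpow_mul, hε, mul_right_comm, ← Units.val_mul] at hpow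

lemma mem_elementaryClosure_of_commutator_eq {f g : G} {ε ε' : ℤˣ} {m m' : ℕ} (hm : m < m')
    (heq : g * f ^ (ε' * m : ℤ) * g⁻¹ * f ^ (-(ε * m) : ℤ) =
      g * f ^ (ε' * m' : ℤ) * g⁻¹ * f ^ (-(ε * m') : ℤ)) : g ∈ elementaryClosure f := by
  obtain ⟨n, rfl⟩ := Nat.exists_eq_add_of_lt hm
  refine mem_elementaryClosure_of_conj_zpow_eq n.succ_pos (ε := ε) (ε' := ε') ?_
  set x := f ^ (ε' * m : ℤ)
  set y := f ^ (ε * m : ℤ)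
  set x' := f ^ (ε' * (n + 1 : ℕ) : ℤ)
  set y' := f ^ (ε * (n + 1 : ℕ) : ℤ)
  have hx : f ^ (ε' * (m + n + 1 : ℕ) : ℤ) = x * x' := by
    rw [← zpow_add, ← mul_add, ← Nat.cast_add, add_assoc]
  have hy : f ^ (-(ε * (m + n + 1 : ℕ)) : ℤ) = y'⁻¹ * y⁻¹ := by
    rw [← mul_inv_rev, ← zpow_add, ← mul_add, ← Nat.cast_add, add_assoc, zpow_neg]
  rw [hx, hy, zpow_neg] at heq
  have hcancel : g * x * g⁻¹ = g * x * (x' * g⁻¹ * y'⁻¹) :=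
    mul_right_cancel (b := y⁻¹) (by simpa only [mul_assoc] using heq)
  exact SemiconjBy.inv_symm_left_iff.1 (eq_mul_inv_iff_mul_eq.1 (mul_left_cancel hcancel))

lemma exists_units_mul_nat (n : ℤ) : ∃ (ε : ℤˣ) (m : ℕ), n = ε * m := by
  obtain ⟨m, rfl | rfl⟩ := n.eq_nat_or_neg
  exacts [⟨1, m, by simp⟩, ⟨-1, m, by simp⟩]

namespace IsWordMetric
variable {d : G → G → ℝ}

lemma norm_units_zpow (hd : IsWordMetric d) (f : G) (ε : ℤˣ) (n : ℕ) :
    d 1 (f ^ (ε * n : ℤ)) = d 1 (f ^ n) := by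
  rw [hd.norm_zpow, Int.natAbs_mul, Int.units_natAbs, one_mul, Int.natAbs_natCast]

lemma dist_units_zpow_add (hd : IsWordMetric d) (f : G) (ε : ℤˣ) (m n : ℕ) :
    d (f ^ (ε * m : ℤ)) (f ^ (ε * (m + n : ℕ) : ℤ)) = d 1 (f ^ n) := by
  rw [Nat.cast_add, mul_add, zpow_add, hd.dist_mul_right, hd.norm_units_zpow]

end IsWordMetric

namespace LoxodromicAxis
variable {d : G → G → ℝ} {δ κ : ℝ} {f : G}

lemma strictMono_norm_pow (h : LoxodromicAxis d δ f κ) : StrictMono fun n : ℕ => d 1 (f ^ n) :=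
  strictMono_nat_of_lt_succ fun n => by linarith [h.norm_pow_add_one_le n]

lemma dist_zpow_mul_zpow_le (h : LoxodromicAxis d δ f κ) {g : G} {ε ε' : ℤˣ} {m n n' : ℕ}
    (hn : m ≤ n) (hn' : m ≤ n') {c c' : ℝ} (hg : d 1 g ≤ c)
    (hend : d (f ^ (ε * n : ℤ)) (g * f ^ (ε' * n' : ℤ)) ≤ c') :
    d (f ^ (ε * m : ℤ)) (g * f ^ (ε' * m : ℤ)) ≤ κ + 2 * c' + c + 2 * δ := by
  obtain ⟨k, rfl⟩ := Nat.exists_eq_add_of_le hn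
  obtain ⟨k', rfl⟩ := Nat.exists_eq_add_of_le hn'
  set x := f ^ (ε * m : ℤ)
  set y := f ^ (ε * (m + k : ℕ) : ℤ)
  set x' := f ^ (ε' * m : ℤ)
  set y' := f ^ (ε' * (m + k' : ℕ) : ℤ)
  have hx : d 1 x = d 1 (f ^ m) := h.norm_units_zpow f ε m
  have hx' : d 1 x' = d 1 (f ^ m) := h.norm_units_zpow f ε' m
  have hy : d 1 y = d 1 (f ^ (m + k)) := h.norm_units_zpow f ε (m + k)
  have hy' : d 1 y' = d 1 (f ^ (m + k')) := h.norm_units_zpow f ε' (m + k')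
  have hxy : d x y = d 1 (f ^ k) := h.dist_units_zpow_add f ε m k
  have hxy' : d (g * x') (g * y') = d 1 (f ^ k') := by
    rw [h.mul_left, h.dist_units_zpow_add]
  have hκ := h.norm_pow_add_norm_pow_le m k
  have hκ' := h.norm_pow_add_norm_pow_le m k'
  have hgx' := h.norm_mul_le g x'
  have hgy' := h.norm_le_norm_mul g y'
  have htri := h.triangle y (g * y') (g * x')
  have htri' := h.triangle 1 y (g * y')
  rw [h.comm (g * y') (g * x')] at htri
  rcases h.four_point 1 x y (g * x') with hfour | hfour <;>
    linarith [h.nonneg y (g * y'), h.delta_nonneg, h.kappa_nonneg, h.nonneg 1 g]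

lemma exists_forall_mem_of_fellow_travel (h : LoxodromicAxis d δ f κ) (hac : AcylDist d) (c : ℝ) :
    ∃ T : ℕ, ∀ (g : G) (ε ε' : ℤˣ),
      (∀ m : ℕ, m ≤ T → d (f ^ (ε * m : ℤ)) (g * f ^ (ε' * m : ℤ)) ≤ c) →
        g ∈ elementaryClosure f := by
  obtain ⟨R, -, N, -, hac⟩ := hac (2 * |c| + 1) (by positivity)
  obtain ⟨r, hr⟩ := exists_nat_gt R
  refine ⟨N + r, fun g ε ε' hfellow => ?_⟩
  let k (m : ℕ) : G := g * f ^ (ε' * m : ℤ) * g⁻¹ * f ^ (-(ε * m) : ℤ)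
  have hk (m n : ℕ) (hmn : m ≤ n) (hn : n ≤ N + r) :
      d (f ^ (ε * n : ℤ)) (k m * f ^ (ε * n : ℤ)) ≤ 2 * |c| + 1 := by
    obtain ⟨j, rfl⟩ := Nat.exists_eq_add_of_le hmn
    have hkm : k m * f ^ (ε * (m + j : ℕ) : ℤ) =
        g * f ^ (ε' * m : ℤ) * (g⁻¹ * f ^ (ε * j : ℤ)) := by
      simp only [k, Nat.cast_add, mul_add, zpow_add]
      group
    have hshift : d (g * f ^ (ε' * (m + j : ℕ) : ℤ)) (k m * f ^ (ε * (m + j : ℕ) : ℤ)) =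
        d (f ^ (ε * j : ℤ)) (g * f ^ (ε' * j : ℤ)) := by
      rw [hkm, Nat.cast_add, mul_add, zpow_add, ← mul_assoc g, h.mul_left, ← h.mul_left g,
        mul_inv_cancel_left, h.comm]
    linarith [h.triangle (f ^ (ε * (m + j : ℕ) : ℤ)) (g * f ^ (ε' * (m + j : ℕ) : ℤ))
      (k m * f ^ (ε * (m + j : ℕ) : ℤ)), hfellow (m + j) hn, hfellow j (by omega), le_abs_self c]
  obtain ⟨hfin, hcard⟩ := hac (f ^ (ε * N : ℤ)) (f ^ (ε * (N + r : ℕ) : ℤ)) (by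
    rw [h.dist_units_zpow_add]
    exact hr.le.trans (h.le_norm_pow r))
  by_contra hg
  have hinj : Set.InjOn k (Finset.range (N + 1)) := by
    intro m _ m' _ heq
    by_contra hne
    rcases lt_or_gt_of_ne hne with hlt | hlt
    exacts [hg (mem_elementaryClosure_of_commutator_eq hlt heq),
      hg (mem_elementaryClosure_of_commutator_eq hlt heq.symm)]
  have hle := (Set.ncard_le_ncard (s := k '' Finset.range (N + 1)) (by
    rintro _ ⟨m, hm, rfl⟩
    have hmN : m ≤ N := by simpa [Nat.lt_succ_iff] using hm
    exact ⟨hk m N hmN (by omega), hk m (N + r) (by omega) le_rfl⟩) hfin).trans hcard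
  rw [hinj.ncard_image, Set.ncard_coe_finset, Finset.card_range] at hle
  omega

lemma exists_overlap_bound (h : LoxodromicAxis d δ f κ) (hac : AcylDist d) (c : ℝ) :
    ∃ B : ℝ, ∀ {g u u' : G}, u ∈ elementaryClosure f → u' ∈ elementaryClosure f → d 1 g ≤ c →
      d u (g * u') ≤ c → B ≤ d 1 u → g ∈ elementaryClosure f := by
  set b := κ + d 1 f + 6 * δ
  obtain ⟨T, hT⟩ := h.exists_forall_mem_of_fellow_travel hac (κ + 2 * (c + 2 * b) + c + 2 * δ)
  refine ⟨d 1 (f ^ T) + b + 2 * c + 1, fun {g u u'} hu hu' hg hend hB => ?_⟩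
  obtain ⟨i, hi⟩ := h.exists_zpow_near_of_mem_elementaryClosure hu
  obtain ⟨i', hi'⟩ := h.exists_zpow_near_of_mem_elementaryClosure hu'
  obtain ⟨ε, n, rfl⟩ := exists_units_mul_nat i
  obtain ⟨ε', n', rfl⟩ := exists_units_mul_nat i'
  have hg0 := h.nonneg 1 g
  have hn : T ≤ n := by
    refine (h.strictMono_norm_pow.lt_iff_lt.1 (?_ : d 1 (f ^ T) < d 1 (f ^ n))).le
    linarith [h.triangle 1 (f ^ (ε * n : ℤ)) u, h.norm_units_zpow f ε n,
      h.comm u (f ^ (ε * n : ℤ))]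
  have hn' : T ≤ n' := by
    refine (h.strictMono_norm_pow.lt_iff_lt.1 (?_ : d 1 (f ^ T) < d 1 (f ^ n'))).le
    linarith [h.triangle 1 (f ^ (ε' * n' : ℤ)) u', h.norm_units_zpow f ε' n',
      h.comm u' (f ^ (ε' * n' : ℤ)), h.triangle 1 (g * u') u, h.norm_mul_le g u',
      h.comm u (g * u')]
  refine hT g ε ε' fun m hm => h.dist_zpow_mul_zpow_le (hm.trans hn) (hm.trans hn') hg ?_
  linarith [h.triangle (f ^ (ε * n : ℤ)) u (g * f ^ (ε' * n' : ℤ)), h.comm u (f ^ (ε * n : ℤ)),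
    h.triangle u (g * u') (g * f ^ (ε' * n' : ℤ)), h.mul_left g u' (f ^ (ε' * n' : ℤ))]

end LoxodromicAxis

/-! ### Projections to the cosets of a subgroup -/

namespace HyperbolicWordMetric
variable {d : G → G → ℝ} {δ : ℝ}

lemma dist_add_dist_add_dist_le (h : HyperbolicWordMetric d δ) {x p q z : G} {τ : ℝ}
    (hp : d x p + d p q ≤ d x q + τ) (hq : d z q + d q p ≤ d z p + τ) (hpq : τ + δ < d p q) :
    d x p + d p q + d q z ≤ d x z + (2 * τ + 2 * δ) := by
  rcases h.four_point x z q p with hfour | hfour <;>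
    linarith [h.comm q p, h.comm z q]

lemma exists_on_geodesic_near (h : HyperbolicWordMetric d δ) {x q y : G} {c : ℝ}
    (hq : d x q + d q y ≤ d x y + c) :
    ∃ w, d x w + d w y = d x y ∧ d q w ≤ c + 2 * δ := by
  have hδ := h.delta_nonneg
  rcases le_total (d x q) (d x y) with hle | hle
  · obtain ⟨n, hn⟩ := h.exists_nat_eq x q
    obtain ⟨w, hxw, hwy⟩ := h.exists_on_geodesic (x := x) (y := y) (k := n) (by linarith)
    refine ⟨w, by linarith, ?_⟩
    rcases h.four_point x q y w with hfour | hfour <;> linarith [h.triangle x q y, h.comm y w]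
  · exact ⟨y, by rw [h.self, add_zero], by linarith⟩

lemma dist_le_of_dist_eq (h : HyperbolicWordMetric d δ) {x y p p' : G} {c : ℝ}
    (hp : d x p + d p y ≤ d x y + c) (hp' : d x p' + d p' y ≤ d x y + c)
    (heq : d x p = d x p') : d p p' ≤ c + 2 * δ := by
  rcases h.four_point x p y p' with hfour | hfour <;> linarith [h.comm y p']

end HyperbolicWordMetric

/-- `p` is a point of the coset `Y` at minimal distance to `x`. -/
def IsNearestPoint (d : G → G → ℝ) {E : Subgroup G} (Y : G ⧸ E) (x p : G) : Prop :=
  (p : G ⧸ E) = Y ∧ ∀ q : G, (q : G ⧸ E) = Y → d x p ≤ d x q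

/-- The nearest point projection of the coset `X` to the coset `Y`. -/
def cosetProj (d : G → G → ℝ) {E : Subgroup G} (Y X : G ⧸ E) : Set G :=
  {p | ∃ x : G, (x : G ⧸ E) = X ∧ IsNearestPoint d Y x p}

/-- The projection distance `d_Y(X, Z)`: the diameter of the union of the nearest point
projections of `X` and `Z` to `Y`. -/
def cosetProjDist (d : G → G → ℝ) {E : Subgroup G} (Y X Z : G ⧸ E) : ℝ :=
  sSup (Set.image2 d (cosetProj d Y X ∪ cosetProj d Y Z) (cosetProj d Y X ∪ cosetProj d Y Z))

/-- `E` is a `σ`-quasiconvex subgroup of a group with a `δ`-hyperbolic word metric, and it is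
geometrically separated: two cosets of `E` that stay `c`-close to each other along a piece of
length `B c` coincide. -/
structure GeometricallySeparated (d : G → G → ℝ) (δ : ℝ) (E : Subgroup G) (σ : ℝ) (B : ℝ → ℝ) :
    Prop extends HyperbolicWordMetric d δ where
  exists_near_of_on_geodesic :
    ∀ {u v z}, u ∈ E → v ∈ E → d u z + d z v = d u v → ∃ w ∈ E, d z w ≤ σ
  mem_of_overlap : ∀ {c g u u'}, u ∈ E → u' ∈ E → d 1 g ≤ c → d u (g * u') ≤ c → B c ≤ d 1 u →
    g ∈ E

/-- The properties of the nearest point projections to the cosets of `E` that imply the weak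
projection axioms: nearest points almost lie on geodesics, distinct cosets have projections of
diameter at most `θ₀`, and they are geometrically separated. -/
structure ContractingCosets (d : G → G → ℝ) (δ : ℝ) (E : Subgroup G) (τ θ₀ : ℝ) (B : ℝ → ℝ) :
    Prop extends HyperbolicWordMetric d δ where
  theta_nonneg : 0 ≤ θ₀
  dist_add_dist_le : ∀ {Y : G ⧸ E} {x p y : G}, IsNearestPoint d Y x p → (y : G ⧸ E) = Y →
    d x p + d p y ≤ d x y + τ
  dist_le_of_mem_cosetProj : ∀ {Y Z : G ⧸ E} {p q}, Z ≠ Y → p ∈ cosetProj d Y Z →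
    q ∈ cosetProj d Y Z → d p q ≤ θ₀
  eq_of_overlap : ∀ {Y Y' : G ⧸ E} {c : ℝ} {p q p' q' : G}, (p : G ⧸ E) = Y → (q : G ⧸ E) = Y →
    (p' : G ⧸ E) = Y' → (q' : G ⧸ E) = Y' → d p p' ≤ c → d q q' ≤ c → B c ≤ d p q → Y = Y'

lemma IsNearestPoint.mem_cosetProj {d : G → G → ℝ} {E : Subgroup G} {Y X : G ⧸ E} {x p : G}
    (hp : IsNearestPoint d Y x p) (hx : (x : G ⧸ E) = X) : p ∈ cosetProj d Y X :=
  ⟨x, hx, hp⟩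

lemma mk_eq_of_mem_cosetProj {d : G → G → ℝ} {E : Subgroup G} {Y X : G ⧸ E} {p : G}
    (hp : p ∈ cosetProj d Y X) : (p : G ⧸ E) = Y := by
  obtain ⟨_, _, hp⟩ := hp
  exact hp.1

namespace IsWordMetric
variable {d : G → G → ℝ} {E : Subgroup G}

lemma exists_isNearestPoint (hd : IsWordMetric d) (Y : G ⧸ E) (x : G) :
    ∃ p, IsNearestPoint d Y x p := by
  classical
  obtain ⟨y, hy⟩ := QuotientGroup.mk_surjective Y
  have hex : ∃ n : ℕ, ∃ p : G, (p : G ⧸ E) = Y ∧ d x p = n :=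
    (hd.exists_nat_eq x y).imp fun n hn => ⟨y, hy, hn⟩
  obtain ⟨p, hpY, hp⟩ := Nat.find_spec hex
  refine ⟨p, hpY, fun q hq => ?_⟩
  obtain ⟨n, hn⟩ := hd.exists_nat_eq x q
  rw [hp, hn]
  exact_mod_cast Nat.find_min' hex ⟨q, hq, hn⟩

lemma exists_mem_cosetProj (hd : IsWordMetric d) (Y X : G ⧸ E) : ∃ p, p ∈ cosetProj d Y X := by
  obtain ⟨x, hx⟩ := QuotientGroup.mk_surjective X
  obtain ⟨p, hp⟩ := hd.exists_isNearestPoint Y x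
  exact ⟨p, x, hx, hp⟩

end IsWordMetric

namespace GeometricallySeparated
variable {d : G → G → ℝ} {δ σ : ℝ} {E : Subgroup G} {B : ℝ → ℝ}

lemma exists_mk_eq_near_of_on_geodesic (h : GeometricallySeparated d δ E σ B) {Y : G ⧸ E}
    {u v z : G} (hu : (u : G ⧸ E) = Y) (hv : (v : G ⧸ E) = Y) (hz : d u z + d z v = d u v) :
    ∃ w : G, (w : G ⧸ E) = Y ∧ d z w ≤ σ := by
  subst hu
  rw [← h.mul_left u⁻¹ u z, ← h.mul_left u⁻¹ z v, ← h.mul_left u⁻¹ u v, inv_mul_cancel] at hz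
  obtain ⟨w, hwE, hw⟩ :=
    h.exists_near_of_on_geodesic E.one_mem (QuotientGroup.eq.1 hv.symm) hz
  refine ⟨u * w, QuotientGroup.mk_mul_of_mem u hwE, ?_⟩
  rwa [← h.mul_left u, mul_inv_cancel_left] at hw

lemma eq_of_overlap (h : GeometricallySeparated d δ E σ B) {Y Y' : G ⧸ E} {c : ℝ}
    {p q p' q' : G} (hp : (p : G ⧸ E) = Y) (hq : (q : G ⧸ E) = Y) (hp' : (p' : G ⧸ E) = Y')
    (hq' : (q' : G ⧸ E) = Y') (hpp' : d p p' ≤ c) (hqq' : d q q' ≤ c) (hB : B c ≤ d p q) :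
    Y = Y' := by
  rw [← hp, ← hp', QuotientGroup.eq]
  refine h.mem_of_overlap (QuotientGroup.eq.1 (hp.trans hq.symm))
    (QuotientGroup.eq.1 (hp'.trans hq'.symm)) (h.dist_eq_norm p p' ▸ hpp') ?_
    (h.dist_eq_norm p q ▸ hB)
  rwa [mul_assoc, mul_inv_cancel_left, h.mul_left]

lemma dist_add_dist_le (h : GeometricallySeparated d δ E σ B) {Y : G ⧸ E} {x p y : G}
    (hp : IsNearestPoint d Y x p) (hy : (y : G ⧸ E) = Y) :
    d x p + d p y ≤ d x y + (2 * σ + 4 * δ + 2) := by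
  -- `k` is the Gromov product of `x` and `y` at `p`, rounded down.
  set k := ⌊(d x p + d p y - d x y) / 2⌋₊
  have hk_le : (k : ℝ) ≤ (d x p + d p y - d x y) / 2 :=
    Nat.floor_le (by linarith [h.triangle x p y])
  have hk_lt : (d x p + d p y - d x y) / 2 < k + 1 := Nat.lt_floor_add_one _
  obtain ⟨z, hpz, hzy⟩ := h.exists_on_geodesic (x := p) (y := y) (k := k)
    (by linarith [h.triangle x y p, h.comm y p])
  obtain ⟨w, hw, hzw⟩ := h.exists_mk_eq_near_of_on_geodesic hp.1 hy (z := z) (by linarith)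
  rcases h.four_point p x y z with hfour | hfour <;>
    linarith [hp.2 w hw, h.triangle x z w, h.comm p x, h.comm y z]

lemma exists_dist_le_of_mem_cosetProj (h : GeometricallySeparated d δ E σ B) :
    ∃ θ₀, 0 ≤ θ₀ ∧ ∀ {Y Z : G ⧸ E} {p q}, Z ≠ Y → p ∈ cosetProj d Y Z → q ∈ cosetProj d Y Z →
      d p q ≤ θ₀ := by
  set τ := 2 * σ + 4 * δ + 2
  set c := 2 * τ + 2 * δ
  refine ⟨max (max (B (c + 2 * δ + σ)) (τ + δ)) 0, le_max_right _ _, ?_⟩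
  rintro Y Z p q hne ⟨x, hx, hp⟩ ⟨y, hy, hq⟩
  by_contra! hlt
  obtain ⟨⟨hB, hτ⟩, -⟩ : (B (c + 2 * δ + σ) < d p q ∧ τ + δ < d p q) ∧ 0 < d p q := by
    simpa only [max_lt_iff] using hlt
  have hpath := h.dist_add_dist_add_dist_le (h.dist_add_dist_le hp hq.1)
    (h.dist_add_dist_le hq hp.1) hτ
  obtain ⟨u, hu, hpu⟩ := h.exists_on_geodesic_near (x := x) (q := p) (y := y) (c := c)
    (by linarith [h.triangle p q y])
  obtain ⟨v, hv, hqv⟩ := h.exists_on_geodesic_near (x := x) (q := q) (y := y) (c := c)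
    (by linarith [h.triangle x p q])
  obtain ⟨u', hu', huu'⟩ := h.exists_mk_eq_near_of_on_geodesic hx hy hu
  obtain ⟨v', hv', hvv'⟩ := h.exists_mk_eq_near_of_on_geodesic hx hy hv
  exact hne (h.eq_of_overlap hp.1 hq.1 hu' hv' (by linarith [h.triangle p u u'])
    (by linarith [h.triangle q v v']) hB.le).symm

lemma exists_contractingCosets (h : GeometricallySeparated d δ E σ B) :
    ∃ τ θ₀, ContractingCosets d δ E τ θ₀ B := by
  obtain ⟨θ₀, hθ₀, hproj⟩ := h.exists_dist_le_of_mem_cosetProj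
  exact ⟨2 * σ + 4 * δ + 2, θ₀, h.toHyperbolicWordMetric, hθ₀, h.dist_add_dist_le, hproj,
    h.eq_of_overlap⟩

end GeometricallySeparated

namespace ContractingCosets
variable {d : G → G → ℝ} {δ τ θ₀ : ℝ} {E : Subgroup G} {B : ℝ → ℝ}

lemma tau_nonneg (h : ContractingCosets d δ E τ θ₀ B) : 0 ≤ τ := by
  simpa [h.self] using h.dist_add_dist_le (x := 1) (p := 1) ⟨rfl, fun q _ => by
    rw [h.self]; exact h.nonneg 1 q⟩ rfl

lemma dist_path_le (h : ContractingCosets d δ E τ θ₀ B) {Y : G ⧸ E} {x p q z : G}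
    (hp : IsNearestPoint d Y x p) (hq : IsNearestPoint d Y z q) (hpq : τ + δ < d p q) :
    d x p + d p q + d q z ≤ d x z + (2 * τ + 2 * δ) :=
  h.dist_add_dist_add_dist_le (h.dist_add_dist_le hp hq.1) (h.dist_add_dist_le hq hp.1) hpq

lemma dist_le_add_of_mem_union (h : ContractingCosets d δ E τ θ₀ B) {X Y Z : G ⧸ E} (hX : X ≠ Y)
    (hZ : Z ≠ Y) {p q p' q' : G} (hp : p ∈ cosetProj d Y X) (hq : q ∈ cosetProj d Y Z)
    (hp' : p' ∈ cosetProj d Y X ∪ cosetProj d Y Z) (hq' : q' ∈ cosetProj d Y X ∪ cosetProj d Y Z) :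
    d p' q' ≤ d p q + 2 * θ₀ := by
  have hθ₀ := h.theta_nonneg
  have hpq := h.nonneg p q
  have hcross {u v : G} (hu : u ∈ cosetProj d Y X) (hv : v ∈ cosetProj d Y Z) :
      d u v ≤ d p q + 2 * θ₀ := by
    linarith [h.dist_le_of_mem_cosetProj hX hu hp, h.dist_le_of_mem_cosetProj hZ hq hv,
      h.triangle u p v, h.triangle p q v]
  rcases hp' with hp' | hp' <;> rcases hq' with hq' | hq'
  · linarith [h.dist_le_of_mem_cosetProj hX hp' hq']
  · exact hcross hp' hq'
  · exact h.comm p' q' ▸ hcross hq' hp'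
  · linarith [h.dist_le_of_mem_cosetProj hZ hp' hq']

lemma dist_le_cosetProjDist_of_mem_union (h : ContractingCosets d δ E τ θ₀ B) {X Y Z : G ⧸ E}
    (hX : X ≠ Y) (hZ : Z ≠ Y) {p q : G} (hp : p ∈ cosetProj d Y X ∪ cosetProj d Y Z)
    (hq : q ∈ cosetProj d Y X ∪ cosetProj d Y Z) : d p q ≤ cosetProjDist d Y X Z := by
  obtain ⟨u, hu⟩ := h.exists_mem_cosetProj Y X
  obtain ⟨v, hv⟩ := h.exists_mem_cosetProj Y Z
  refine le_csSup ⟨d u v + 2 * θ₀, ?_⟩ (Set.mem_image2_of_mem hp hq)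
  exact Set.forall_mem_image2.2 fun p' hp' q' hq' => h.dist_le_add_of_mem_union hX hZ hu hv hp' hq'

lemma dist_le_cosetProjDist (h : ContractingCosets d δ E τ θ₀ B) {X Y Z : G ⧸ E}
    (hX : X ≠ Y) (hZ : Z ≠ Y) {p q : G} (hp : p ∈ cosetProj d Y X) (hq : q ∈ cosetProj d Y Z) :
    d p q ≤ cosetProjDist d Y X Z :=
  h.dist_le_cosetProjDist_of_mem_union hX hZ (.inl hp) (.inr hq)

lemma cosetProjDist_le (h : ContractingCosets d δ E τ θ₀ B) {X Y Z : G ⧸ E}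
    (hX : X ≠ Y) (hZ : Z ≠ Y) {p q : G} (hp : p ∈ cosetProj d Y X) (hq : q ∈ cosetProj d Y Z) :
    cosetProjDist d Y X Z ≤ d p q + 2 * θ₀ :=
  csSup_le ⟨_, Set.mem_image2_of_mem (.inl hp) (.inr hq)⟩ <|
    Set.forall_mem_image2.2 fun _ hp' _ hq' => h.dist_le_add_of_mem_union hX hZ hp hq hp' hq'

lemma cosetProjDist_triangle (h : ContractingCosets d δ E τ θ₀ B) {X Y Z W : G ⧸ E}
    (hX : X ≠ Y) (hW : W ≠ Y) (hZ : Z ≠ Y) :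
    cosetProjDist d Y X Z ≤ cosetProjDist d Y X W + cosetProjDist d Y W Z := by
  obtain ⟨u, hu⟩ := h.exists_mem_cosetProj Y X
  obtain ⟨w, hw⟩ := h.exists_mem_cosetProj Y W
  obtain ⟨v, hv⟩ := h.exists_mem_cosetProj Y Z
  have hXW := (h.nonneg _ _).trans (h.dist_le_cosetProjDist hX hW hu hw)
  have hWZ := (h.nonneg _ _).trans (h.dist_le_cosetProjDist hW hZ hw hv)
  have hcross {p q : G} (hp : p ∈ cosetProj d Y X) (hq : q ∈ cosetProj d Y Z) :
      d p q ≤ cosetProjDist d Y X W + cosetProjDist d Y W Z := by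
    linarith [h.triangle p w q, h.dist_le_cosetProjDist hX hW hp hw,
      h.dist_le_cosetProjDist hW hZ hw hq]
  refine csSup_le ⟨_, Set.mem_image2_of_mem (.inl hu) (.inr hv)⟩ ?_
  rintro _ ⟨p, hp | hp, q, hq | hq, rfl⟩
  · linarith [h.dist_le_cosetProjDist_of_mem_union hX hW (.inl hp) (.inl hq)]
  · exact hcross hp hq
  · exact h.comm p q ▸ hcross hq hp
  · linarith [h.dist_le_cosetProjDist_of_mem_union hW hZ (.inr hp) (.inr hq)]

lemma cosetProjDist_self_le (h : ContractingCosets d δ E τ θ₀ B) {X Y : G ⧸ E} (hX : X ≠ Y) :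
    cosetProjDist d Y X X ≤ 2 * θ₀ := by
  obtain ⟨p, hp⟩ := h.exists_mem_cosetProj Y X
  simpa [h.self] using h.cosetProjDist_le hX hX hp hp

lemma ne_of_mem_between (h : ContractingCosets d δ E τ θ₀ B) {t : ℝ} (ht : 2 * θ₀ ≤ t)
    {X Y Z : G ⧸ E} (hY : Y ∈ between (cosetProjDist d) t X Z) : X ≠ Z := by
  rintro rfl
  linarith [h.cosetProjDist_self_le hY.1.symm, hY.2.2]

lemma cosetProjDist_le_of_mem_between (h : ContractingCosets d δ E τ θ₀ B) {t : ℝ}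
    (ht : 2 * θ₀ + 3 * τ + 3 * δ ≤ t) {X Y Z : G ⧸ E}
    (hY : Y ∈ between (cosetProjDist d) t X Z) : cosetProjDist d Z X Y ≤ t := by
  have hδ := h.delta_nonneg
  have hτ := h.tau_nonneg
  have hXZ := h.ne_of_mem_between (by linarith) hY
  obtain ⟨hYX, hYZ, hlt⟩ := hY
  obtain ⟨x, hx⟩ := QuotientGroup.mk_surjective X
  obtain ⟨p, hp⟩ := h.exists_isNearestPoint Y x
  obtain ⟨z, hz⟩ := h.exists_isNearestPoint Z x
  obtain ⟨z', hz'⟩ := h.exists_isNearestPoint Z p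
  obtain ⟨q, hq⟩ := h.exists_isNearestPoint Y z
  have hpq := h.cosetProjDist_le hYX.symm hYZ.symm (hp.mem_cosetProj hx) (hq.mem_cosetProj hz.1)
  have hzz' := h.cosetProjDist_le hXZ hYZ (hz.mem_cosetProj hx) (hz'.mem_cosetProj hp.1)
  linarith [h.dist_path_le hp hq (by linarith), h.triangle p q z, hz.2 z' hz'.1,
    h.triangle x p z', h.dist_add_dist_le hz' hz.1, h.comm z z']

lemma finite_between (h : ContractingCosets d δ E τ θ₀ B) {t : ℝ}
    (ht : 2 * θ₀ + τ + δ ≤ t) (hB : 2 * θ₀ + B (2 * τ + 4 * δ) ≤ t) (X Z : G ⧸ E) :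
    (between (cosetProjDist d) t X Z).Finite := by
  obtain ⟨x, hx⟩ := QuotientGroup.mk_surjective X
  obtain ⟨z, hz⟩ := QuotientGroup.mk_surjective Z
  choose p hp using fun Y : G ⧸ E => h.exists_isNearestPoint Y x
  choose q hq using fun Y : G ⧸ E => h.exists_isNearestPoint Y z
  have hfar : ∀ Y ∈ between (cosetProjDist d) t X Z, t < d (p Y) (q Y) + 2 * θ₀ :=
    fun Y ⟨hYX, hYZ, hlt⟩ => hlt.trans_le <| h.cosetProjDist_le hYX.symm hYZ.symm
      ((hp Y).mem_cosetProj hx) ((hq Y).mem_cosetProj hz)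
  have hpath : ∀ Y ∈ between (cosetProjDist d) t X Z,
      d x (p Y) + d (p Y) (q Y) + d (q Y) z ≤ d x z + (2 * τ + 2 * δ) :=
    fun Y hY => h.dist_path_le (hp Y) (hq Y) (by linarith [hfar Y hY])
  -- Both projections lie almost on a geodesic from `x` to `z`, so their distances to `x` determine
  -- them up to a bounded error, and hence determine the coset `Y`.
  have hinj : Set.InjOn (fun Y => (d x (p Y), d x (q Y))) (between (cosetProjDist d) t X Z) := by
    intro Y hY Y' hY' heq
    obtain ⟨heqp, heqq⟩ := Prod.mk.inj heq
    have hY_path := hpath Y hY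
    have hY'_path := hpath Y' hY'
    have hpp' : d (p Y) (p Y') ≤ 2 * τ + 2 * δ + 2 * δ :=
      h.dist_le_of_dist_eq (y := z) (by linarith [h.triangle (p Y) (q Y) z])
        (by linarith [h.triangle (p Y') (q Y') z]) heqp
    have hqq' : d (q Y) (q Y') ≤ 2 * τ + 2 * δ + 2 * δ :=
      h.dist_le_of_dist_eq (y := z) (by linarith [h.triangle x (p Y) (q Y)])
        (by linarith [h.triangle x (p Y') (q Y')]) heqq
    exact h.eq_of_overlap (c := 2 * τ + 4 * δ) (hp Y).1 (hq Y).1 (hp Y').1 (hq Y').1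
      (by linarith) (by linarith) (by linarith [hfar Y hY])
  obtain ⟨M, hM⟩ := exists_nat_ge (d x z + (2 * τ + 2 * δ))
  have hfin : ((Nat.cast : ℕ → ℝ) '' Set.Iic M).Finite := (Set.finite_Iic M).image _
  refine Set.Finite.of_finite_image ((hfin.prod hfin).subset ?_) hinj
  rintro _ ⟨Y, hY, rfl⟩
  have hmem {y : G} (hy : d x y ≤ M) : d x y ∈ (Nat.cast : ℕ → ℝ) '' Set.Iic M := by
    obtain ⟨n, hn⟩ := h.exists_nat_eq x y
    exact ⟨n, by exact_mod_cast hn ▸ hy, hn.symm⟩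
  have hY_path := hpath Y hY
  exact ⟨hmem (by linarith [h.nonneg (p Y) (q Y), h.nonneg (q Y) z]),
    hmem (by linarith [h.triangle x (p Y) (q Y), h.nonneg (q Y) z])⟩

lemma exists_weakProjection (h : ContractingCosets d δ E τ θ₀ B) :
    ∃ θ, WeakProjection (cosetProjDist d (E := E)) θ := by
  have hδ := h.delta_nonneg
  have hτ := h.tau_nonneg
  have hθ₀ := h.theta_nonneg
  set b := max (B (2 * τ + 4 * δ)) 0
  have hB : B (2 * τ + 4 * δ) ≤ b := le_max_left _ _
  have hb : 0 ≤ b := le_max_right _ _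
  refine ⟨2 * θ₀ + 3 * τ + 3 * δ + b + 1, ⟨by linarith, fun Y X Z => ?_, h.cosetProjDist_triangle,
    fun hX => (h.cosetProjDist_self_le hX).trans (by linarith),
    h.finite_between (by linarith) (by linarith)⟩,
    h.cosetProjDist_le_of_mem_between (by linarith)⟩
  rw [cosetProjDist, cosetProjDist, Set.union_comm]

end ContractingCosets

namespace IsWordMetric
variable {d : G → G → ℝ} {E : Subgroup G}

lemma isNearestPoint_smul (hd : IsWordMetric d) (g : G) {Y : G ⧸ E} {x p : G}
    (hp : IsNearestPoint d Y x p) : IsNearestPoint d (g • Y) (g * x) (g * p) := by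
  refine ⟨congrArg (g • ·) hp.1, fun q hq => ?_⟩
  have hle := hp.2 (g⁻¹ * q) (show g⁻¹ • (q : G ⧸ E) = Y by rw [hq, inv_smul_smul])
  rwa [← hd.mul_left g, ← hd.mul_left g x, mul_inv_cancel_left] at hle

lemma mul_mem_cosetProj_smul (hd : IsWordMetric d) (g : G) {Y X : G ⧸ E} {p : G}
    (hp : p ∈ cosetProj d Y X) : g * p ∈ cosetProj d (g • Y) (g • X) := by
  obtain ⟨x, rfl, hp⟩ := hp
  exact ⟨g * x, rfl, hd.isNearestPoint_smul g hp⟩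

lemma cosetProj_smul (hd : IsWordMetric d) (g : G) (Y X : G ⧸ E) :
    cosetProj d (g • Y) (g • X) = (g * ·) '' cosetProj d Y X := by
  refine Set.Subset.antisymm (fun p hp => ⟨g⁻¹ * p, ?_, mul_inv_cancel_left g p⟩)
    (Set.image_subset_iff.2 fun p => hd.mul_mem_cosetProj_smul g)
  simpa only [inv_smul_smul] using hd.mul_mem_cosetProj_smul g⁻¹ hp

lemma cosetProjDist_smul (hd : IsWordMetric d) (g : G) (Y X Z : G ⧸ E) :
    cosetProjDist d (g • Y) (g • X) (g • Z) = cosetProjDist d Y X Z := by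
  simp only [cosetProjDist, hd.cosetProj_smul, ← Set.image_union, Set.image2_image_left,
    Set.image2_image_right, hd.mul_left]

end IsWordMetric

namespace ContractingCosets
variable {d : G → G → ℝ} {δ τ θ₀ : ℝ} {E : Subgroup G} {B : ℝ → ℝ}

lemma dist_le_of_mem_between (h : ContractingCosets d δ E τ θ₀ B) {t : ℝ}
    (ht : 2 * θ₀ + τ + δ ≤ t) {X Y Z : G ⧸ E} (hY : Y ∈ between (cosetProjDist d) t X Z) {x z : G}
    (hx : (x : G ⧸ E) = X) (hz : (z : G ⧸ E) = Z) : t ≤ d x z + (2 * τ + 2 * δ) + 2 * θ₀ := by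
  obtain ⟨hYX, hYZ, hlt⟩ := hY
  obtain ⟨p, hp⟩ := h.exists_isNearestPoint Y x
  obtain ⟨q, hq⟩ := h.exists_isNearestPoint Y z
  have hpq := h.cosetProjDist_le hYX.symm hYZ.symm (hp.mem_cosetProj hx) (hq.mem_cosetProj hz)
  linarith [h.dist_path_le hp hq (by linarith), h.nonneg x p, h.nonneg q z]

lemma exists_encard_stabilizer_le (h : ContractingCosets d δ E τ θ₀ B) (hac : AcylDist d) :
    ∃ (K : ℝ) (N : ℕ), ∀ X Z V : G ⧸ E, V ∈ between (cosetProjDist d) K X Z →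
      {g : G | g • X = X ∧ g • Z = Z}.encard ≤ N := by
  have hδ := h.delta_nonneg
  have hτ := h.tau_nonneg
  have hθ₀ := h.theta_nonneg
  obtain ⟨R, hR, N, -, hN⟩ := hac (θ₀ + 1) (by linarith)
  refine ⟨2 * θ₀ + 3 * τ + 3 * δ + R, N, fun X Z V hV => ?_⟩
  have hXZ := h.ne_of_mem_between (by linarith) hV
  obtain ⟨p, hp⟩ := h.exists_mem_cosetProj X Z
  obtain ⟨q, hq⟩ := h.exists_mem_cosetProj Z X
  have hpq := h.dist_le_of_mem_between (by linarith) hV (mk_eq_of_mem_cosetProj hp)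
    (mk_eq_of_mem_cosetProj hq)
  obtain ⟨hfin, hcard⟩ := hN p q (by linarith)
  have hmove {g : G} {Y W : G ⧸ E} {y : G} (hne : W ≠ Y) (hY : g • Y = Y) (hW : g • W = W)
      (hy : y ∈ cosetProj d Y W) : d y (g * y) ≤ θ₀ + 1 := by
    have hgy := h.mul_mem_cosetProj_smul g hy
    rw [hY, hW] at hgy
    linarith [h.dist_le_of_mem_cosetProj hne hy hgy]
  have hsub : {g : G | g • X = X ∧ g • Z = Z} ⊆
      {g | d p (g * p) ≤ θ₀ + 1 ∧ d q (g * q) ≤ θ₀ + 1} :=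
    fun g ⟨hX, hZ⟩ => ⟨hmove hXZ.symm hX hZ hp, hmove hXZ hZ hX hq⟩
  refine (Set.encard_le_encard hsub).trans ?_
  rw [← hfin.cast_ncard_eq]
  exact_mod_cast hcard

lemma exists_encard_transporter_le (h : ContractingCosets d δ E τ θ₀ B) (hac : AcylDist d) :
    ∃ (K : ℝ) (N : ℕ), ∀ (P P' : (G ⧸ E) × (G ⧸ E)) (V : G ⧸ E),
      V ∈ between (cosetProjDist d) K P.1 P.2 → {g : G | g • P = P'}.encard ≤ N := by
  obtain ⟨K, N, hN⟩ := h.exists_encard_stabilizer_le hac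
  refine ⟨K, N, fun P P' V hV => ?_⟩
  obtain hempty | ⟨g₀, hg₀⟩ := {g : G | g • P = P'}.eq_empty_or_nonempty
  · simp [hempty]
  have hsub : {g : G | g • P = P'} ⊆ (g₀ * ·) '' {g : G | g • P.1 = P.1 ∧ g • P.2 = P.2} := by
    refine fun g hg => ⟨g₀⁻¹ * g, Prod.mk.inj (?_ : (g₀⁻¹ * g) • P = P), mul_inv_cancel_left g₀ g⟩
    rw [mul_smul, show g • P = P' from hg, ← show g₀ • P = P' from hg₀, inv_smul_smul]
  exact (Set.encard_le_encard hsub).trans ((Set.encard_image_le _ _).trans (hN _ _ V hV))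

end ContractingCosets

/-! ### Non-elementarity and the main theorem -/

lemma smul_mk_one_of_mem {E : Subgroup G} {g : G} (hg : g ∈ E) :
    g • ((1 : G) : G ⧸ E) = (1 : G) := by
  rwa [← MulAction.mem_stabilizer_iff, MulAction.stabilizer_quotient]

lemma IsPseudoDist.exists_forall_le_dist {d : α → α → ℝ} (hd : IsPseudoDist d) (x : BSeq d)
    (o : α) (M : ℝ) : ∃ N, ∀ n, N ≤ n → M ≤ d o (x.1 n) := by
  obtain ⟨N, hN⟩ := x.2 o M
  exact ⟨N, fun n hn => (hN n hn n hn).trans (hd.comm o _ ▸ hd.gprod_le_left _ _ _)⟩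

namespace LoxodromicAxis
variable {d : G → G → ℝ} {δ κ : ℝ} {f : G}

lemma gprod_le_of_opposite_rays (h : LoxodromicAxis d δ f κ) {ε : ℤˣ} {k k' : ℕ} {u v : G} {c : ℝ}
    (hu : d u (f ^ (ε * k : ℤ)) ≤ c) (hv : d v (f ^ ((-ε : ℤˣ) * k' : ℤ)) ≤ c) :
    gprod d u v 1 ≤ 2 * c + κ / 2 := by
  set p := f ^ (ε * k : ℤ)
  set q := f ^ ((-ε : ℤˣ) * k' : ℤ)
  have hpq : d p q = d 1 (f ^ (k + k')) := by
    rw [h.dist_zpow_zpow, Units.val_neg, neg_mul, sub_neg_eq_add, ← mul_add, Int.natAbs_mul,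
      Int.units_natAbs, one_mul, ← Nat.cast_add, Int.natAbs_natCast]
  rw [gprod]
  linarith [h.norm_units_zpow f ε k, h.norm_units_zpow f (-ε) k', h.norm_pow_add_norm_pow_le k k',
    h.triangle u p 1, h.triangle v q 1, h.comm p 1, h.comm q 1, h.triangle p u q,
    h.triangle u v q, h.comm p u]

lemma min_norm_le_gprod_of_same_ray (h : LoxodromicAxis d δ f κ) {ε : ℤˣ} {k k' : ℕ} {u v : G}
    {c : ℝ} (hu : d u (f ^ (ε * k : ℤ)) ≤ c) (hv : d v (f ^ (ε * k' : ℤ)) ≤ c) :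
    min (d 1 u) (d 1 v) ≤ gprod d u v 1 + (3 * c + κ / 2) := by
  wlog hk : k ≤ k' generalizing k k' u v
  · rw [min_comm, h.gprod_comm]
    exact this hv hu (le_of_not_ge hk)
  obtain ⟨m, rfl⟩ := Nat.exists_eq_add_of_le hk
  set p := f ^ (ε * k : ℤ)
  set q := f ^ (ε * (k + m : ℕ) : ℤ)
  refine (min_le_left _ _).trans ?_
  rw [gprod]
  linarith [h.norm_units_zpow f ε k, h.norm_units_zpow f ε (k + m), h.dist_units_zpow_add f ε k m,
    h.norm_pow_add_norm_pow_le k m, h.triangle 1 p u, h.triangle 1 v q, h.triangle 1 u p,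
    h.triangle u p v, h.triangle p q v, h.comm p u, h.comm q v, h.comm u 1, h.comm v 1]

lemma exists_eventually_near_ray (h : LoxodromicAxis d δ f κ)
    (hE : ∀ g, g ∈ elementaryClosure f) (x : BSeq d) :
    ∃ (ε : ℤˣ) (N : ℕ), ∀ n, N ≤ n → ∃ k : ℕ, d (x.1 n) (f ^ (ε * k : ℤ)) ≤ κ + d 1 f + 6 * δ := by
  set c := κ + d 1 f + 6 * δ
  have hnear (n : ℕ) : ∃ (ε : ℤˣ) (k : ℕ), d (x.1 n) (f ^ (ε * k : ℤ)) ≤ c := by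
    obtain ⟨i, hi⟩ := h.exists_zpow_near_of_mem_elementaryClosure (hE (x.1 n))
    obtain ⟨ε, k, rfl⟩ := exists_units_mul_nat i
    exact ⟨ε, k, hi⟩
  obtain ⟨N, hN⟩ := x.2 1 (2 * c + κ / 2 + 1)
  obtain ⟨ε, k, hk⟩ := hnear N
  refine ⟨ε, N, fun n hn => ?_⟩
  obtain ⟨ε', k', hk'⟩ := hnear n
  rcases eq_or_ne ε' ε with rfl | hne
  · exact ⟨k', hk'⟩
  · rw [Int.units_ne_iff_eq_neg.1 hne] at hk'
    linarith [h.gprod_le_of_opposite_rays hk hk', hN N le_rfl n hn]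

lemma bRel_of_near_ray (h : LoxodromicAxis d δ f κ) {x y : BSeq d} {ε : ℤˣ} {c : ℝ} {Nx Ny : ℕ}
    (hx : ∀ n, Nx ≤ n → ∃ k : ℕ, d (x.1 n) (f ^ (ε * k : ℤ)) ≤ c)
    (hy : ∀ n, Ny ≤ n → ∃ k : ℕ, d (y.1 n) (f ^ (ε * k : ℤ)) ≤ c) : BRel d x y := by
  intro o R
  obtain ⟨Mx, hMx⟩ := h.exists_forall_le_dist x 1 (R + d 1 o + (3 * c + κ / 2))
  obtain ⟨My, hMy⟩ := h.exists_forall_le_dist y 1 (R + d 1 o + (3 * c + κ / 2))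
  refine ⟨max (max Nx Ny) (max Mx My), fun i hi j hj => ?_⟩
  simp only [max_le_iff] at hi hj
  obtain ⟨k, hk⟩ := hx i hi.1.1
  obtain ⟨k', hk'⟩ := hy j hj.1.2
  linarith [h.min_norm_le_gprod_of_same_ray hk hk', h.gprod_sub_dist_le (x.1 i) (y.1 j) 1 o,
    le_min (hMx i hi.2.1) (hMy j hj.2.2)]

lemma exists_notMem_elementaryClosure (h : LoxodromicAxis d δ f κ)
    (h3 : ∃ a b c : Bdry d, a ≠ b ∧ a ≠ c ∧ b ≠ c) : ∃ g, g ∉ elementaryClosure f := by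
  by_contra! hE
  obtain ⟨⟨x⟩, ⟨y⟩, ⟨z⟩, hxy, hxz, hyz⟩ := h3
  obtain ⟨ε, _, hx⟩ := h.exists_eventually_near_ray hE x
  obtain ⟨ε', _, hy⟩ := h.exists_eventually_near_ray hE y
  obtain ⟨ε'', _, hz⟩ := h.exists_eventually_near_ray hE z
  have hpigeonhole : ∀ a b c : ℤˣ, a = b ∨ a = c ∨ b = c := by decide
  rcases hpigeonhole ε ε' ε'' with rfl | rfl | rfl
  exacts [hxy (Quot.sound (h.bRel_of_near_ray hx hy)), hxz (Quot.sound (h.bRel_of_near_ray hx hz)),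
    hyz (Quot.sound (h.bRel_of_near_ray hy hz))]

lemma exists_contractingCosets (h : LoxodromicAxis d δ f κ) (hac : AcylDist d) :
    ∃ τ θ₀ B, ContractingCosets d δ (elementaryClosure f) τ θ₀ B := by
  choose B hB using h.exists_overlap_bound hac
  obtain ⟨τ, θ₀, hE⟩ := GeometricallySeparated.exists_contractingCosets
    ⟨h.toHyperbolicWordMetric, h.exists_near_of_on_geodesic, fun {c} => hB c⟩
  exact ⟨τ, θ₀, B, hE⟩

variable {τ θ₀ : ℝ} {B : ℝ → ℝ}

lemma mem_between_pow_smul (h : LoxodromicAxis d δ f κ)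
    (hE : ContractingCosets d δ (elementaryClosure f) τ θ₀ B) {Z : G ⧸ elementaryClosure f}
    (hZ : Z ≠ (1 : G)) {K : ℝ} {n : ℕ} (hn : K + 2 * (κ + d 1 f + 6 * δ) < n) :
    ((1 : G) : G ⧸ elementaryClosure f) ∈ between (cosetProjDist d) K Z (f ^ n • Z) := by
  have hfix := smul_mk_one_of_mem (pow_mem (self_mem_elementaryClosure f) n)
  have hne : f ^ n • Z ≠ (1 : G) := fun heq => hZ (smul_left_cancel (f ^ n) (heq.trans hfix.symm))
  refine ⟨hZ.symm, hne.symm, ?_⟩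
  obtain ⟨p, hp⟩ := h.exists_mem_cosetProj (1 : G) Z
  have hfp := h.mul_mem_cosetProj_smul (f ^ n) hp
  rw [hfix] at hfp
  have hpE : p ∈ elementaryClosure f := by
    simpa using QuotientGroup.eq.1 (mk_eq_of_mem_cosetProj hp).symm
  obtain ⟨i, hi⟩ := h.exists_zpow_near_of_mem_elementaryClosure hpE
  have hdist : d (f ^ i) (f ^ (n + i : ℤ)) = d 1 (f ^ n) := by
    rw [h.dist_zpow_zpow, sub_add_cancel_right, Int.natAbs_neg, Int.natAbs_natCast]
  have hnear : d (f ^ n * p) (f ^ (n + i : ℤ)) = d p (f ^ i) := by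
    rw [zpow_add, zpow_natCast, h.mul_left]
  linarith [hE.dist_le_cosetProjDist hZ hne hp hfp, h.le_norm_pow n, h.comm p (f ^ i),
    h.triangle (f ^ i) p (f ^ (n + i : ℤ)), h.triangle p (f ^ n * p) (f ^ (n + i : ℤ))]

lemma exists_mem_between_smul (h : LoxodromicAxis d δ f κ)
    (hE : ContractingCosets d δ (elementaryClosure f) τ θ₀ B) {g : G}
    (hg : g ∉ elementaryClosure f) {y₀ : G ⧸ elementaryClosure f} (hy₀ : y₀ = (1 : G)) (K : ℝ) :
    ∃ a b : G, a • y₀ = y₀ ∧ b • g • y₀ = g • y₀ ∧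
      y₀ ∈ between (cosetProjDist d) K (g • y₀) (a • g • y₀) ∧
      y₀ ∈ between (cosetProjDist d) K (g • y₀) (a • a • g • y₀) ∧
      g • y₀ ∈ between (cosetProjDist d) K y₀ (b • y₀) := by
  subst hy₀
  obtain ⟨n, hn⟩ := exists_nat_gt (K + 2 * (κ + d 1 f + 6 * δ))
  have hn2 : K + 2 * (κ + d 1 f + 6 * δ) < (n + n : ℕ) := by
    push_cast
    linarith [n.cast_nonneg (α := ℝ)]
  have hfix := smul_mk_one_of_mem (pow_mem (self_mem_elementaryClosure f) n)
  have hne {k : G} (hk : k ∉ elementaryClosure f) :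
      k • ((1 : G) : G ⧸ elementaryClosure f) ≠ (1 : G) := fun heq =>
    hk (MulAction.stabilizer_quotient (elementaryClosure f) ▸ MulAction.mem_stabilizer_iff.2 heq)
  refine ⟨f ^ n, g * f ^ n * g⁻¹, hfix, ?_, h.mem_between_pow_smul hE (hne hg) hn, ?_, ?_⟩
  · rw [mul_smul, inv_smul_smul, mul_smul, hfix]
  · rw [← mul_smul, ← pow_add]
    exact h.mem_between_pow_smul hE (hne hg) hn2
  · have hbetween := h.mem_between_pow_smul hE (hne (inv_mem_iff.not.2 hg)) hn
    simpa only [smul_inv_smul, mul_smul] using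
      (smul_mem_between_iff h.cosetProjDist_smul g).2 hbetween

end LoxodromicAxis

theorem statement1_general (G : Type*) [Group G]
    (hAH : ∃ X : Set G, Subgroup.closure X = ⊤ ∧ IsHyperbolic (wdist X) ∧
      (∃ a b c : Bdry (wdist X), a ≠ b ∧ a ≠ c ∧ b ≠ c) ∧ AcylDist (wdist X)) :
    ∃ S : Set G, Subgroup.closure S = ⊤ ∧ IsHyperbolic (wdist S) ∧
      (∃ a b c : Bdry (wdist S), a ≠ b ∧ a ≠ c ∧ b ≠ c) ∧ AcylDist (wdist S) ∧
      TopAmenable (wdist S) := by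
  obtain ⟨X, hX, ⟨δ, -, hδ⟩, h3, hac⟩ := hAH
  have h : HyperbolicWordMetric (wdist X) δ := ⟨isWordMetric_wdist hX, hδ⟩
  have hunbounded (M : ℝ) : ∃ x, M ≤ wdist X 1 x := by
    obtain ⟨⟨x⟩, -⟩ := h3
    obtain ⟨N, hN⟩ := h.exists_forall_le_dist x 1 M
    exact ⟨x.1 N, hN N le_rfl⟩
  obtain ⟨f, hf⟩ := h.exists_norm_add_le_norm_sq hac hunbounded (4 * δ + 1)
  obtain ⟨κ, haxis⟩ := h.exists_loxodromicAxis hf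
  obtain ⟨g, hg⟩ := haxis.exists_notMem_elementaryClosure h3
  obtain ⟨τ, θ₀, B, hE⟩ := haxis.exists_contractingCosets hac
  obtain ⟨θ, hweak⟩ := hE.exists_weakProjection
  obtain ⟨K₀, N, htransporter⟩ := hE.exists_encard_transporter_le hac
  exact hweak.exists_wdist_amenable h.cosetProjDist_smul htransporter
    fun K => ⟨_, haxis.exists_mem_between_smul hE hg rfl K⟩

/-- Corollary 1.2: every countable acylindrically hyperbolic group
admits a generating set `S` with `Γ(G,S)` hyperbolic, `|∂Γ(G,S)| > 2`, the action on
`Γ(G,S)` acylindrical, and the natural action of `G` on `∂Γ(G,S)` topologically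
amenable. -/
theorem statement1 (G : Type*) [Group G] [Countable G]
    (hAH : ∃ X : Set G, Subgroup.closure X = ⊤ ∧ IsHyperbolic (wdist X) ∧
      (∃ a b c : Bdry (wdist X), a ≠ b ∧ a ≠ c ∧ b ≠ c) ∧ AcylDist (wdist X)) :
    ∃ S : Set G, Subgroup.closure S = ⊤ ∧ IsHyperbolic (wdist S) ∧
      (∃ a b c : Bdry (wdist S), a ≠ b ∧ a ≠ c ∧ b ≠ c) ∧ AcylDist (wdist S) ∧
      TopAmenable (wdist S) :=
  statement1_general G hAH

end ArXiv
end
end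

section
/- Let o ∈ G, let B be an H_λ-coset for some λ∈Λ, and suppose p and q are (possibly infinite) geodesic paths in Γ(G,X⊔H) starting at o that both penetrate B. Then d̂_λ(p_in(B), q_in(B)) ≤ 3C, where p_in(B) and q_in(B) are the entrance points of p and q in B. -/
open scoped ENNReal

noncomputable section

namespace ArXiv

/-! ### Gromov products, hyperbolicity and the Gromov boundary,
for a general distance function -/

variable {α : Type*}

/-! ### Relative Cayley graphs and hyperbolically embedded subgroups -/

variable {G : Type*} [Group G] {Λ : Type*}

/-- Labels of (positive) edges of the relative Cayley graph `Γ(G, X ⊔ H)`: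
letters from `X` and letters from `H_λ \ {1}`, for each `λ`, with disjoint unions
taken as sets of labels. -/
inductive RelLab (X : Set G) (H : Λ → Subgroup G) : Type _
  | xlab (g : G) (hg : g ∈ X) : RelLab X H
  | hlab (l : Λ) (g : G) (hg : g ∈ H l) (hne : g ≠ 1) : RelLab X H

/-- The group element underlying a label. -/
def RelLab.val {X : Set G} {H : Λ → Subgroup G} : RelLab X H → G
  | .xlab g _ => g
  | .hlab _ g _ _ => g

/-- The label is a letter of `H l`. -/
def RelLab.isH {X : Set G} {H : Λ → Subgroup G} (l : Λ) : RelLab X H → Prop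
  | .xlab _ _ => False
  | .hlab l' _ _ _ => l' = l

/-- The value of a directed edge: an edge together with an orientation
(the Cayley graph being undirected, an edge may be traversed both ways). -/
def edgeVal {X : Set G} {H : Λ → Subgroup G} (e : RelLab X H × Bool) : G :=
  if e.2 then e.1.val else e.1.val⁻¹

/-- The `i`-th vertex of the edge path starting at `f` and reading the directed
edges of `L`. -/
def chainVert {X : Set G} {H : Λ → Subgroup G} (f : G) (L : List (RelLab X H × Bool))
    (i : ℕ) : G :=
  f * ((L.take i).map edgeVal).prod

/-- The graph metric `d_{X∪H}` of the relative Cayley graph `Γ(G, X ⊔ H)`. -/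
def rdist (X : Set G) (H : Λ → Subgroup G) (f g : G) : ℝ :=
  sInf {r : ℝ | ∃ L : List (RelLab X H × Bool),
    f * (L.map edgeVal).prod = g ∧ r = (L.length : ℝ)}

/-- Distance from a point to a set in `Γ(G, X ⊔ H)`. -/
def rdistPtSet (X : Set G) (H : Λ → Subgroup G) (f : G) (B : Set G) : ℝ :=
  sInf {r : ℝ | ∃ b ∈ B, r = rdist X H f b}

/-- Distance between two sets in `Γ(G, X ⊔ H)`. -/
def rdistSets (X : Set G) (H : Λ → Subgroup G) (A B : Set G) : ℝ :=
  sInf {r : ℝ | ∃ a ∈ A, ∃ b ∈ B, r = rdist X H a b}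

/-- The relative metric `d̂_λ`: the infimum of the lengths of paths in `Γ(G, X ⊔ H)`
from `f` to `g` containing no edge of the subgraph `Γ(H_λ, H_λ∖{1})`
(`∞` if there is no such path). -/
def hatd (X : Set G) (H : Λ → Subgroup G) (l : Λ) (f g : G) : ℝ≥0∞ :=
  sInf {r : ℝ≥0∞ | ∃ L : List (RelLab X H × Bool),
    f * (L.map edgeVal).prod = g ∧
    (∀ i : ℕ, ∀ e ∈ L[i]?, ¬(chainVert f L i ∈ H l ∧ (Prod.fst e).isH l)) ∧
    r = (L.length : ℝ≥0∞)}

/-- `{H_λ}_{λ∈Λ}` is hyperbolically embedded in `(G, X)`: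
`X ∪ ⋃ H_λ` generates `G`, the relative Cayley graph is hyperbolic, and each
relative metric `d̂_λ` is locally finite. -/
def HypEmb (X : Set G) (H : Λ → Subgroup G) : Prop :=
  Subgroup.closure (X ∪ ⋃ l : Λ, (H l : Set G)) = ⊤ ∧
  IsHyperbolic (rdist X H) ∧
  ∀ (l : Λ) (n : ℕ), {h : G | h ∈ H l ∧ hatd X H l 1 h ≤ (n : ℝ≥0∞)}.Finite

/-- Paths (finite, when `len = n`, or infinite rays, when `len = ⊤`) in the relative
Cayley graph `Γ(G, X ⊔ H)`. -/
structure RPath (X : Set G) (H : Λ → Subgroup G) where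
  len : ℕ∞
  vert : ℕ → G
  lab : ℕ → RelLab X H × Bool
  step : ∀ i : ℕ, (i : ℕ∞) < len → vert (i + 1) = vert i * edgeVal (lab i)

namespace RPath

variable {X : Set G} {H : Λ → Subgroup G}

/-- A path is geodesic. -/
def IsGeodesic (p : RPath X H) : Prop :=
  ∀ i j : ℕ, i ≤ j → (j : ℕ∞) ≤ p.len →
    rdist X H (p.vert i) (p.vert j) = ((j - i : ℕ) : ℝ)

/-- A (necessarily finite) path goes from `f` to `g`. -/
def FromTo (p : RPath X H) (f g : G) : Prop :=
  p.vert 0 = f ∧ ∃ n : ℕ, p.len = (n : ℕ∞) ∧ p.vert n = g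

/-- An infinite path. -/
def IsRay (p : RPath X H) : Prop := p.len = ⊤

/-- `q` is a subpath of `p`. -/
def IsSubpath (q p : RPath X H) : Prop :=
  ∃ a : ℕ, ((a : ℕ∞) + q.len ≤ p.len) ∧
    (∀ k : ℕ, (k : ℕ∞) ≤ q.len → q.vert k = p.vert (a + k)) ∧
    (∀ k : ℕ, (k : ℕ∞) < q.len → q.lab k = p.lab (a + k))

/-- `p` penetrates the coset `B` of `H l` with entrance point `p.vert i` and exit point
`p.vert j`: the edges `i,…,j-1` form an `H l`-component of `p` starting in `B`. -/
def PenetratesAt (p : RPath X H) (l : Λ) (B : Set G) (i j : ℕ) : Prop :=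
  i < j ∧ (j : ℕ∞) ≤ p.len ∧ p.vert i ∈ B ∧
  (∀ k : ℕ, i ≤ k → k < j → (p.lab k).1.isH l) ∧
  (i = 0 ∨ ¬ (p.lab (i - 1)).1.isH l) ∧
  ((j : ℕ∞) = p.len ∨ ¬ (p.lab j).1.isH l)

/-- `p` penetrates the coset `B` of `H l`. -/
def Penetrates (p : RPath X H) (l : Λ) (B : Set G) : Prop :=
  ∃ i j : ℕ, p.PenetratesAt l B i j

/-- `p` essentially penetrates the coset `B` of `H l` (with parameter `D`). -/
def EssPenetrates (p : RPath X H) (l : Λ) (B : Set G) (Dc : ℝ) : Prop :=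
  ∃ i j : ℕ, p.PenetratesAt l B i j ∧ ENNReal.ofReal Dc < hatd X H l (p.vert i) (p.vert j)

end RPath

/-- `B` is a (left) coset of `H l`. -/
def Coset (H : Λ → Subgroup G) (l : Λ) (B : Set G) : Prop :=
  ∃ x : G, B = {g : G | x⁻¹ * g ∈ H l}

/-- The set `S(f,g;D)` of `(f,g;D)`-separating cosets: cosets (recorded together with
the index of their subgroup) essentially penetrated by some geodesic of `Γ(G,X⊔H)`
from `f` to `g`. -/
def Sep (X : Set G) (H : Λ → Subgroup G) (Dc : ℝ) (f g : G) : Set (Λ × Set G) :=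
  {lB | Coset H lB.1 lB.2 ∧
    ∃ p : RPath X H, p.IsGeodesic ∧ p.FromTo f g ∧ p.EssPenetrates lB.1 lB.2 Dc}

/-- The set `S(γ;D)` of separating cosets of a geodesic ray. -/
def SepRay (X : Set G) (H : Λ → Subgroup G) (Dc : ℝ) (p : RPath X H) : Set (Λ × Set G) :=
  ⋃ n : ℕ, Sep X H Dc (p.vert 0) (p.vert n)

/-- The set `Y = {y ∈ G | S(1,y;D) = ∅}`. -/
def Yset (X : Set G) (H : Λ → Subgroup G) (Dc : ℝ) : Set G := {y : G | Sep X H Dc 1 y = ∅}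

/-- Geodesic polygons in the relative Cayley graph: a closed path of `n` edges,
subdivided into `m` geodesic sides. -/
structure RPolygon (X : Set G) (H : Λ → Subgroup G) where
  n : ℕ
  m : ℕ
  vert : ℕ → G
  lab : ℕ → RelLab X H × Bool
  step : ∀ i : ℕ, i < n → vert (i + 1) = vert i * edgeVal (lab i)
  closed : vert n = vert 0
  corner : ℕ → ℕ
  corner_zero : corner 0 = 0
  corner_last : corner m = n
  corner_mono : ∀ t : ℕ, t < m → corner t ≤ corner (t + 1)
  sides_geodesic : ∀ t : ℕ, t < m → ∀ i j : ℕ, corner t ≤ i → i ≤ j → j ≤ corner (t + 1) →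
    rdist X H (vert i) (vert j) = ((j - i : ℕ) : ℝ)

namespace RPolygon

variable {X : Set G} {H : Λ → Subgroup G}

/-- An `H l`-component of the polygon, considered cyclically: the cyclic edges
`i,…,j-1` are all labelled in `H l`, maximally so. -/
def CompAt (p : RPolygon X H) (l : Λ) (i j : ℕ) : Prop :=
  i < j ∧ i < p.n ∧ j ≤ i + p.n ∧
  (∀ k : ℕ, i ≤ k → k < j → (p.lab (k % p.n)).1.isH l) ∧
  (j = i + p.n ∨
    (¬ (p.lab ((i + p.n - 1) % p.n)).1.isH l ∧ ¬ (p.lab (j % p.n)).1.isH l))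

/-- An isolated `H l`-component of the polygon: one not connected to (i.e. lying in the
same `H l`-coset as) any other `H l`-component of the polygon. -/
def IsolatedAt (p : RPolygon X H) (l : Λ) (i j : ℕ) : Prop :=
  p.CompAt l i j ∧ ∀ i' j' : ℕ, p.CompAt l i' j' → i' % p.n ≠ i % p.n →
    (p.vert (i % p.n))⁻¹ * p.vert (i' % p.n) ∉ H l

end RPolygon

/-- The property of the constant `C`: for every geodesic `m`-gon in `Γ(G,X⊔H)` and every
isolated `H_λ`-component `a` of it, `d̂_λ(a_-,a_+) ≤ mC`. -/
def CBound (X : Set G) (H : Λ → Subgroup G) (Cc : ℝ) : Prop :=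
  ∀ (p : RPolygon X H) (l : Λ) (i j : ℕ), p.IsolatedAt l i j →
    hatd X H l (p.vert (i % p.n)) (p.vert (j % p.n)) ≤ ENNReal.ofReal ((p.m : ℝ) * Cc)

/-- The vertex sequence of the path `γ` converges to infinity with respect to `d` and
its limit point in the boundary `Bdry d` is `ξ`. -/
def RLim {X : Set G} {H : Λ → Subgroup G} (d : G → G → ℝ) (γ : RPath X H)
    (ξ : Bdry d) : Prop :=
  ∃ h : ConvInf d γ.vert, Quot.mk (BRel d) ⟨γ.vert, h⟩ = ξ

end ArXiv

namespace ArXiv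

/-!
A geodesic spends at most one edge in an `H_λ`-coset `B`, since any two points of `B` are adjacent;
hence the entrance point of a geodesic penetrating `B` is its first vertex in `B`. Now let `x` and
`y` be the first vertices in `B` of two geodesics starting at `o`. If `x ≠ y`, then they are joined
by an edge labelled in `H_λ`, and the two initial segments and this edge form a geodesic triangle.
No other edge of the triangle labelled in `H_λ` has an endpoint in `B`, as it would then have both
endpoints in `B`, including one preceding `x` or `y`. So the edge from `x` to `y` is an isolated
component of a geodesic triangle, and the bound is the defining property of `C` for `3`-gons.
-/

section

variable {G Λ : Type*} [Group G] {X : Set G} {H : Λ → Subgroup G} {l : Λ} {B : Set G} {f g : G}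

/-- The directed edge traversed in the opposite direction. -/
def reverseEdge (e : RelLab X H × Bool) : RelLab X H × Bool := (e.1, !e.2)

lemma edgeVal_reverseEdge (e : RelLab X H × Bool) : edgeVal (reverseEdge e) = (edgeVal e)⁻¹ := by
  rcases e with ⟨s, _ | _⟩ <;> simp [reverseEdge, edgeVal]

lemma prod_map_edgeVal_reverse (L : List (RelLab X H × Bool)) :
    ((L.map reverseEdge).reverse.map edgeVal).prod = (L.map edgeVal).prod⁻¹ := by
  simp [List.prod_inv_reverse, Function.comp_def, edgeVal_reverseEdge]

lemma edgeVal_mem {e : RelLab X H × Bool} (he : e.1.isH l) : edgeVal e ∈ H l := by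
  rcases e with ⟨_ | ⟨l', h, hh, hne⟩, forward⟩
  · exact he.elim
  · obtain rfl : l' = l := he
    cases forward <;> simpa [edgeVal, RelLab.val] using hh

lemma rdist_le_length (L : List (RelLab X H × Bool)) (hL : f * (L.map edgeVal).prod = g) :
    rdist X H f g ≤ L.length :=
  csInf_le ⟨0, by rintro _ ⟨L, -, rfl⟩; positivity⟩ ⟨L, hL, rfl⟩

lemma rdist_nonneg (f g : G) : 0 ≤ rdist X H f g :=
  Real.sInf_nonneg (by rintro _ ⟨L, -, rfl⟩; positivity)

lemma rdist_self (f : G) : rdist X H f f = 0 :=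
  le_antisymm (by simpa using rdist_le_length (X := X) (H := H) (f := f) [] (by simp))
    (rdist_nonneg f f)

lemma rdist_comm (f g : G) : rdist X H f g = rdist X H g f := by
  have reverse_path (f g : G) (r : ℝ) :
      (∃ L : List (RelLab X H × Bool), f * (L.map edgeVal).prod = g ∧ r = L.length) →
        ∃ L : List (RelLab X H × Bool), g * (L.map edgeVal).prod = f ∧ r = L.length := by
    rintro ⟨L, rfl, rfl⟩
    exact ⟨(L.map reverseEdge).reverse, by simp only [prod_map_edgeVal_reverse,
      mul_inv_cancel_right], by simp⟩
  exact congrArg sInf (Set.ext fun r => ⟨reverse_path f g r, reverse_path g f r⟩)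

lemma rdist_eq_one_of_edge (e : RelLab X H × Bool) (he : f * edgeVal e = g) (hfg : f ≠ g) :
    rdist X H f g = 1 := by
  have hpath : f * (([e] : List _).map edgeVal).prod = g := by simpa using he
  refine le_antisymm (by simpa using rdist_le_length _ hpath) (le_csInf ⟨_, _, hpath, rfl⟩ ?_)
  rintro _ ⟨_ | ⟨a, L⟩, hL, rfl⟩
  · exact absurd (by simpa using hL) hfg
  · simp

lemma hatd_self (l : Λ) (f : G) : hatd X H l f f = 0 :=
  le_antisymm (sInf_le ⟨[], by simp, by simp, by simp⟩) zero_le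

namespace Coset

lemma inv_mul_mem_iff (hB : Coset H l B) (hf : f ∈ B) : f⁻¹ * g ∈ H l ↔ g ∈ B := by
  obtain ⟨x, rfl⟩ := hB
  rw [Set.mem_ofPred_eq, ← (H l).mul_mem_cancel_left hf]
  simp [mul_assoc]

lemma mul_edgeVal_mem_iff (hB : Coset H l B) {e : RelLab X H × Bool} (he : e.1.isH l) :
    g * edgeVal e ∈ B ↔ g ∈ B := by
  obtain ⟨x, rfl⟩ := hB
  rw [Set.mem_ofPred_eq, ← mul_assoc, (H l).mul_mem_cancel_right (edgeVal_mem he)]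
  rfl

lemma exists_edge (hB : Coset H l B) (hf : f ∈ B) (hg : g ∈ B) (hfg : f ≠ g) :
    ∃ e : RelLab X H × Bool, e.1.isH l ∧ f * edgeVal e = g :=
  ⟨(.hlab l (f⁻¹ * g) ((hB.inv_mul_mem_iff hf).2 hg) (mt inv_mul_eq_one.1 hfg), true), rfl,
    by simp [edgeVal, RelLab.val]⟩

lemma rdist_le_one (hB : Coset H l B) (hf : f ∈ B) (hg : g ∈ B) : rdist X H f g ≤ 1 := by
  obtain rfl | hfg := eq_or_ne f g
  · simp [rdist_self]
  · obtain ⟨e, -, he⟩ := hB.exists_edge (X := X) hf hg hfg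
    exact (rdist_eq_one_of_edge e he hfg).le

end Coset

namespace RPath

variable {p q : RPath X H} {m n : ℕ}

/-- The vertex of `p` with index `m` is the first vertex of `p` lying in `B`. -/
structure IsFirstVisit (p : RPath X H) (B : Set G) (m : ℕ) : Prop where
  le_len : (m : ℕ∞) ≤ p.len
  vert_mem : p.vert m ∈ B
  vert_notMem : ∀ a < m, p.vert a ∉ B

lemma IsGeodesic.le_succ_of_mem_coset (hp : p.IsGeodesic) (hB : Coset H l B)
    (hn : (n : ℕ∞) ≤ p.len) (hmB : p.vert m ∈ B) (hnB : p.vert n ∈ B) : n ≤ m + 1 := by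
  by_contra! hlt
  have hdist : ((n - m : ℕ) : ℝ) ≤ 1 := by
    rw [← hp m n (by omega) hn]
    exact hB.rdist_le_one hmB hnB
  have : n - m ≤ 1 := by exact_mod_cast hdist
  omega

lemma PenetratesAt.isFirstVisit (h : p.PenetratesAt l B m n) (hB : Coset H l B)
    (hp : p.IsGeodesic) : p.IsFirstVisit B m := by
  obtain ⟨hmn, hn, hmB, hlab, -, -⟩ := h
  have hsucc : ((m + 1 : ℕ) : ℕ∞) ≤ p.len := le_trans (by exact_mod_cast hmn) hn
  have hlt : (m : ℕ∞) < p.len := lt_of_lt_of_le (by exact_mod_cast m.lt_succ_self) hsucc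
  have hsuccB : p.vert (m + 1) ∈ B := by
    rw [p.step m hlt]
    exact (hB.mul_edgeVal_mem_iff (hlab m le_rfl hmn)).2 hmB
  refine ⟨hlt.le, hmB, fun a ha haB => ?_⟩
  have := hp.le_succ_of_mem_coset hB hsucc haB hsuccB
  omega

end RPath

namespace RPolygon

variable {P : RPolygon X H} {k t : ℕ}

lemma vert_mod (ht : t ≤ P.n) : P.vert (t % P.n) = P.vert t := by
  obtain hlt | rfl := ht.lt_or_eq
  · rw [Nat.mod_eq_of_lt hlt]
  · rw [Nat.mod_self, P.closed]

lemma vert_succ_mem_iff (hB : Coset H l B) (hk : k < P.n) (hlab : (P.lab k).1.isH l) :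
    P.vert (k + 1) ∈ B ↔ P.vert k ∈ B := by
  rw [P.step k hk, hB.mul_edgeVal_mem_iff hlab]

lemma isolatedAt_succ (hB : Coset H l B) (hk : k < P.n) (hlab : (P.lab k).1.isH l)
    (hkB : P.vert k ∈ B)
    (hother : ∀ a < P.n, a ≠ k → (P.lab a).1.isH l → P.vert a ∉ B) :
    P.IsolatedAt l k (k + 1) := by
  have hn : 0 < P.n := by omega
  refine ⟨⟨k.lt_succ_self, hk, by omega, fun a hka hak => ?_, ?_⟩, ?_⟩
  · obtain rfl : a = k := by omega
    rwa [Nat.mod_eq_of_lt hk]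
  · obtain hone | hone := eq_or_ne P.n 1
    · exact .inl (by rw [hone])
    have hsucc_ne : (k + 1) % P.n ≠ k := by
      obtain h | h : k + 1 < P.n ∨ k + 1 = P.n := by omega
      · rw [Nat.mod_eq_of_lt h]; omega
      · rw [h, Nat.mod_self]; omega
    refine .inr ⟨fun hpred => ?_, fun hsucc => ?_⟩
    · set a := (k + P.n - 1) % P.n
      have ha : a < P.n := Nat.mod_lt _ hn
      have hak : (a + 1) % P.n = k := by
        rw [Nat.mod_add_mod, Nat.sub_add_cancel (by omega), Nat.add_mod_right,
          Nat.mod_eq_of_lt hk]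
      refine hother a ha (fun h => hsucc_ne (h ▸ hak)) hpred ?_
      rwa [← vert_succ_mem_iff hB ha hpred, ← vert_mod ha, hak]
    · refine hother _ (Nat.mod_lt _ hn) hsucc_ne hsucc ?_
      rwa [vert_mod hk, vert_succ_mem_iff hB hk hlab]
  · rintro a b ⟨hab, ha, -, hlab_a, -⟩ hne
    have ha_lab := hlab_a a le_rfl hab
    rw [Nat.mod_eq_of_lt ha] at ha_lab hne ⊢
    rw [Nat.mod_eq_of_lt hk] at hne ⊢
    rw [hB.inv_mul_mem_iff hkB]
    exact hother a ha hne ha_lab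

end RPolygon

lemma CBound.hatd_le_of_isolated_edge {C : ℝ} (hC : CBound X H C) {P : RPolygon X H} {k : ℕ}
    (hB : Coset H l B) (hk : k < P.n) (hlab : (P.lab k).1.isH l) (hkB : P.vert k ∈ B)
    (hother : ∀ a < P.n, a ≠ k → (P.lab a).1.isH l → P.vert a ∉ B) :
    hatd X H l (P.vert k) (P.vert (k + 1)) ≤ ENNReal.ofReal (P.m * C) := by
  have h := hC P l k (k + 1) (P.isolatedAt_succ hB hk hlab hkB hother)
  rwa [RPolygon.vert_mod hk.le, RPolygon.vert_mod hk] at h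

section Triangle

variable {p q : RPath X H} {m n : ℕ} {e : RelLab X H × Bool} {t : ℕ}

/-- The vertices of the closed path that follows `p` up to index `m`, jumps to the vertex of `q`
with index `n`, and follows `q` backwards to its origin. -/
def triangleVert (p q : RPath X H) (m n t : ℕ) : G :=
  if t ≤ m then p.vert t else q.vert (m + n + 1 - t)

/-- The directed edges of the closed path with vertices `triangleVert p q m n`, where `e` is the
edge from `p` to `q`. -/
def triangleLab (p q : RPath X H) (m n : ℕ) (e : RelLab X H × Bool) (t : ℕ) : RelLab X H × Bool :=
  if t < m then p.lab t else if t = m then e else reverseEdge (q.lab (m + n - t))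

lemma triangleVert_of_le (h : t ≤ m) : triangleVert p q m n t = p.vert t := if_pos h

lemma triangleVert_of_lt (h : m < t) : triangleVert p q m n t = q.vert (m + n + 1 - t) :=
  if_neg h.not_ge

lemma triangleVert_succ_self : triangleVert p q m n (m + 1) = q.vert n := by
  rw [triangleVert_of_lt m.lt_succ_self]
  congr 1
  omega

lemma triangleLab_of_lt (h : t < m) : triangleLab p q m n e t = p.lab t := if_pos h

lemma triangleLab_self : triangleLab p q m n e m = e := by simp [triangleLab]

lemma triangleLab_of_gt (h : m < t) :
    triangleLab p q m n e t = reverseEdge (q.lab (m + n - t)) := by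
  rw [triangleLab, if_neg h.not_gt, if_neg h.ne']

lemma triangleVert_succ (hm : (m : ℕ∞) ≤ p.len) (hn : (n : ℕ∞) ≤ q.len)
    (he : p.vert m * edgeVal e = q.vert n) (ht : t < m + n + 1) :
    triangleVert p q m n (t + 1) =
      triangleVert p q m n t * edgeVal (triangleLab p q m n e t) := by
  obtain h | rfl | h := lt_trichotomy t m
  · rw [triangleVert_of_le h.le, triangleVert_of_le h, triangleLab_of_lt h]
    exact p.step t (lt_of_lt_of_le (by exact_mod_cast h) hm)
  · rw [triangleVert_of_le le_rfl, triangleVert_succ_self, triangleLab_self, he]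
  · have hlt : m + n - t < n := by omega
    have hstep := q.step (m + n - t) (lt_of_lt_of_le (by exact_mod_cast hlt) hn)
    rw [triangleVert_of_lt h, triangleVert_of_lt (by omega), triangleLab_of_gt h,
      edgeVal_reverseEdge, eq_mul_inv_iff_mul_eq, Nat.add_sub_add_right, ← hstep]
    congr 1
    omega

lemma rdist_triangleVert_of_lt (hq : q.IsGeodesic) (hn : (n : ℕ∞) ≤ q.len) {a b : ℕ}
    (ha : m < a) (hab : a ≤ b) (hb : b ≤ m + n + 1) :
    rdist X H (triangleVert p q m n a) (triangleVert p q m n b) = ((b - a : ℕ) : ℝ) := by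
  have hle : m + n + 1 - a ≤ n := by omega
  rw [triangleVert_of_lt ha, triangleVert_of_lt (ha.trans_le hab), rdist_comm,
    hq _ _ (by omega) (le_trans (by exact_mod_cast hle) hn)]
  congr 1
  omega

/-- The geodesic triangle whose sides are the initial segments of lengths `m` and `n` of two
geodesics with the same origin, and an edge `e` joining their endpoints. -/
def RPolygon.triangle (hp : p.IsGeodesic) (hq : q.IsGeodesic) (h0 : p.vert 0 = q.vert 0)
    (hm : (m : ℕ∞) ≤ p.len) (hn : (n : ℕ∞) ≤ q.len) (he : p.vert m * edgeVal e = q.vert n)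
    (hne : p.vert m ≠ q.vert n) : RPolygon X H where
  n := m + n + 1
  m := 3
  vert := triangleVert p q m n
  lab := triangleLab p q m n e
  step _ := triangleVert_succ hm hn he
  closed := by
    rw [triangleVert_of_lt (by omega), triangleVert_of_le m.zero_le, Nat.sub_self, h0]
  corner
    | 0 => 0
    | 1 => m
    | 2 => m + 1
    | _ => m + n + 1
  corner_zero := rfl
  corner_last := rfl
  corner_mono t ht := by interval_cases t <;> simp
  sides_geodesic t ht a b hta hab hbt := by
    interval_cases t
    · replace hbt : b ≤ m := hbt
      rw [triangleVert_of_le (hab.trans hbt), triangleVert_of_le hbt]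
      exact hp a b hab (le_trans (by exact_mod_cast hbt) hm)
    · replace hta : m ≤ a := hta
      replace hbt : b ≤ m + 1 := hbt
      obtain rfl | hlt := hab.eq_or_lt
      · simp [rdist_self]
      obtain ⟨rfl, rfl⟩ : m = a ∧ b = m + 1 := by omega
      rw [triangleVert_of_le le_rfl, triangleVert_succ_self, rdist_eq_one_of_edge e he hne]
      simp
    · exact rdist_triangleVert_of_lt hq hn hta hab hbt

lemma triangleVert_notMem_coset (hB : Coset H l B) (hp : p.IsFirstVisit B m)
    (hq : q.IsFirstVisit B n) (he : p.vert m * edgeVal e = q.vert n) (ht : t < m + n + 1)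
    (htm : t ≠ m) (hlab : (triangleLab p q m n e t).1.isH l) : triangleVert p q m n t ∉ B := by
  obtain h | h := htm.lt_or_gt
  · rw [triangleVert_of_le h.le]
    exact hp.vert_notMem t h
  · rw [← hB.mul_edgeVal_mem_iff hlab, ← triangleVert_succ hp.le_len hq.le_len he ht,
      triangleVert_of_lt (by omega)]
    exact hq.vert_notMem _ (by omega)

end Triangle

end

theorem statement6_general {G Λ : Type*} [Group G] {X : Set G} {H : Λ → Subgroup G} {C : ℝ}
    (hC : CBound X H C) {l : Λ} {B : Set G} (hB : Coset H l B) {p q : RPath X H}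
    (hp : p.IsGeodesic) (hq : q.IsGeodesic) (h0 : p.vert 0 = q.vert 0) {m n : ℕ}
    (hm : p.IsFirstVisit B m) (hn : q.IsFirstVisit B n) :
    hatd X H l (p.vert m) (q.vert n) ≤ ENNReal.ofReal (3 * C) := by
  obtain heq | hne := eq_or_ne (p.vert m) (q.vert n)
  · simp [heq, hatd_self]
  obtain ⟨e, he_lab, he⟩ := hB.exists_edge (X := X) hm.vert_mem hn.vert_mem hne
  let T := RPolygon.triangle hp hq h0 hm.le_len hn.le_len he hne
  have hTm : T.vert m = p.vert m := triangleVert_of_le le_rfl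
  have hTn : T.vert (m + 1) = q.vert n := triangleVert_succ_self
  have he_T : (T.lab m).1.isH l := by
    rwa [show T.lab m = e from triangleLab_self]
  have hisolated : ∀ a < T.n, a ≠ m → (T.lab a).1.isH l → T.vert a ∉ B :=
    fun _ => triangleVert_notMem_coset hB hm hn he
  have hm_lt : m < T.n := Nat.lt_succ_of_le (m.le_add_right n)
  rw [← hTm, ← hTn]
  exact hC.hatd_le_of_isolated_edge hB hm_lt he_T (hTm ▸ hm.vert_mem) hisolated

/-- Lemma 3.2: two geodesics from the same point penetrating the same
coset have entrance points at relative distance at most `3C`. -/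
theorem statement6 {G Λ : Type*} [Group G] (X : Set G) (H : Λ → Subgroup G)
    (hemb : HypEmb X H) (Cc : ℝ) (hC : 0 < Cc) (hCB : CBound X H Cc)
    (o : G) (l : Λ) (B : Set G) (hB : Coset H l B)
    (p q : RPath X H) (hp : p.IsGeodesic) (hq : q.IsGeodesic)
    (hpo : p.vert 0 = o) (hqo : q.vert 0 = o)
    (i j i' j' : ℕ) (hpB : p.PenetratesAt l B i j) (hqB : q.PenetratesAt l B i' j') :
    hatd X H l (p.vert i) (q.vert i') ≤ ENNReal.ofReal (3 * Cc) :=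
  statement6_general hCB hB hp hq (hpo.trans hqo.symm)
    (hpB.isFirstVisit hB hp) (hqB.isFirstVisit hB hq)

end ArXiv
end
end
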